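/- arXiv:1601.01452 — 5 statements merged into one kernel-verified Lean document; each statement's English description precedes it below -/
import Mathlib

section
/- Let (X_i)_{i≥1} be a sequence of real numbers. The series ∑_{i=1}^∞ X_i converges if and only if there exists a nonnegative, nonincreasing sequence (c_j)_{j≥1} with c_j → 0 such that for every sequence (n_j)_{j≥1} of positive integers, the recursive posterior mean E_k (formed from the block sums S_j determined by (n_j) and the indicators y_j = 1{|S_j| ≤ c_j}) tends to 1 as k → ∞. -/
open Filter

/-- Block sum `S_j = ∑_{i = N_{j-1}+1}^{N_j} X_i` where `N_j = n_1 + ⋯ + n_j`. -/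
noncomputable def blockSum (X : ℕ → ℝ) (n : ℕ → ℕ) (j : ℕ) : ℝ :=
  ∑ i ∈ Finset.Icc ((∑ l ∈ Finset.Icc 1 (j - 1), n l) + 1) (∑ l ∈ Finset.Icc 1 j, n l), X i

/-- Recursive Bayesian posterior mean at stage `k`:
`E_k = (∑_{j=1}^k j⁻² + ∑_{j=1}^k y_j) / (k + 2 ∑_{j=1}^k j⁻²)`. -/
noncomputable def postMean (y : ℕ → ℝ) (k : ℕ) : ℝ :=
  ((∑ j ∈ Finset.Icc 1 k, ((j : ℝ) ^ 2)⁻¹) + ∑ j ∈ Finset.Icc 1 k, y j) /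
    ((k : ℝ) + 2 * ∑ j ∈ Finset.Icc 1 k, ((j : ℝ) ^ 2)⁻¹)

lemma sum_Icc_sub (X : ℕ → ℝ) {a b : ℕ} (h : a ≤ b) :
    ∑ i ∈ Finset.Icc (a + 1) b, X i
      = ∑ i ∈ Finset.Icc 1 b, X i - ∑ i ∈ Finset.Icc 1 a, X i := by
  induction b, h using Nat.le_induction with
  | base => simp
  | succ b hb ih =>
    rw [Finset.sum_Icc_succ_top (by omega), Finset.sum_Icc_succ_top (by omega), ih]
    ring

lemma blockSum_eq (X : ℕ → ℝ) (n : ℕ → ℕ) (j : ℕ) :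
    blockSum X n j = ∑ i ∈ Finset.Icc 1 (∑ l ∈ Finset.Icc 1 j, n l), X i
      - ∑ i ∈ Finset.Icc 1 (∑ l ∈ Finset.Icc 1 (j - 1), n l), X i := by
  unfold blockSum
  apply sum_Icc_sub
  apply Finset.sum_le_sum_of_subset
  exact Finset.Icc_subset_Icc le_rfl (by omega)

lemma le_sum_pos (n : ℕ → ℕ) (hn : ∀ j, 0 < n j) (j : ℕ) :
    j ≤ ∑ l ∈ Finset.Icc 1 j, n l := by
  induction j with
  | zero => simp
  | succ j ih =>
    rw [Finset.sum_Icc_succ_top (by omega)]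
    have := hn (j + 1)
    omega

lemma sum_inv_sq_nonneg (k : ℕ) : 0 ≤ ∑ j ∈ Finset.Icc 1 k, ((j : ℝ) ^ 2)⁻¹ :=
  Finset.sum_nonneg fun _ _ => by positivity

lemma sum_inv_sq_le (k : ℕ) :
    ∑ j ∈ Finset.Icc 1 k, ((j : ℝ) ^ 2)⁻¹ ≤ ∑' j : ℕ, ((j : ℝ) ^ 2)⁻¹ :=
  (Real.summable_nat_pow_inv.2 (by norm_num : 1 < 2)).sum_le_tsum _
    fun _ _ => by positivity

lemma postMean_one (y : ℕ → ℝ) (hy : ∀ j, 1 ≤ j → y j = 1) :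
    Tendsto (postMean y) atTop (nhds 1) := by
  set C : ℝ := ∑' j : ℕ, ((j : ℝ) ^ 2)⁻¹ with hC
  have hlow : Tendsto (fun k : ℕ => 1 - C / (k : ℝ)) atTop (nhds 1) := by
    simpa using (tendsto_const_nhds (x := (1 : ℝ))).sub (tendsto_const_div_atTop_nhds_zero_nat C)
  have hform : ∀ k : ℕ, postMean y k =
      ((∑ j ∈ Finset.Icc 1 k, ((j : ℝ) ^ 2)⁻¹) + k) /
      ((k : ℝ) + 2 * ∑ j ∈ Finset.Icc 1 k, ((j : ℝ) ^ 2)⁻¹) := by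
    intro k
    unfold postMean
    have : ∑ j ∈ Finset.Icc 1 k, y j = k := by
      rw [Finset.sum_congr rfl (fun j hj => hy j (Finset.mem_Icc.1 hj).1)]
      simp
    rw [this]
  refine tendsto_of_tendsto_of_tendsto_of_le_of_le' hlow tendsto_const_nhds ?_ ?_
  · filter_upwards [eventually_ge_atTop 1] with k hk
    have hk' : (0 : ℝ) < k := by exact_mod_cast hk
    have h0 := sum_inv_sq_nonneg k
    have h1 := sum_inv_sq_le k
    rw [← hC] at h1
    rw [hform]
    set A := ∑ j ∈ Finset.Icc 1 k, ((j : ℝ) ^ 2)⁻¹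
    rw [le_div_iff₀ (by positivity)]
    have h2 : C / k * k = C := by field_simp
    have h3 : 0 ≤ C / k := div_nonneg (h0.trans h1) hk'.le
    nlinarith [mul_nonneg h3 h0]
  · filter_upwards [eventually_ge_atTop 1] with k hk
    have hk' : (0 : ℝ) < k := by exact_mod_cast hk
    have h0 := sum_inv_sq_nonneg k
    rw [hform, div_le_one (by positivity)]
    linarith

lemma not_postMean_one (y : ℕ → ℝ) (J : ℕ) (hy1 : ∀ j, y j ≤ 1) (hy : ∀ j, J ≤ j → 1 ≤ j → y j = 0) :
    ¬ Tendsto (postMean y) atTop (nhds 1) := by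
  intro h
  have h1 := h.eventually (lt_mem_nhds (show (3 / 4 : ℝ) < 1 by norm_num))
  obtain ⟨k, hk, hk1, hk2⟩ :=
    (h1.and ((eventually_ge_atTop 1).and (eventually_ge_atTop (4 * J)))).exists
  have hk' : (0 : ℝ) < k := by exact_mod_cast hk1
  have hk2' : 4 * (J : ℝ) ≤ k := by exact_mod_cast hk2
  have h0 := sum_inv_sq_nonneg k
  have hY : ∑ j ∈ Finset.Icc 1 k, y j ≤ J := by
    calc ∑ j ∈ Finset.Icc 1 k, y j
        ≤ ∑ j ∈ Finset.Icc 1 k, (if j ∈ Finset.range J then (1 : ℝ) else 0) := by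
          apply Finset.sum_le_sum
          intro j hj
          split_ifs with hjJ
          · exact hy1 j
          · exact (hy j (by simpa using hjJ) (Finset.mem_Icc.1 hj).1).le
      _ = ((Finset.Icc 1 k ∩ Finset.range J).card : ℝ) := by
          rw [Finset.sum_ite_mem]; simp
      _ ≤ J := by
          have := Finset.card_le_card
            (Finset.inter_subset_right (s₁ := Finset.Icc 1 k) (s₂ := Finset.range J))
          rw [Finset.card_range] at this
          exact_mod_cast this
  unfold postMean at hk
  rw [lt_div_iff₀ (by positivity)] at hk
  linarith

/-- `∑ Xᵢ` converges iff there is a nonnegative nonincreasing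
sequence `c_j → 0` such that for every sequence of positive block lengths the
recursive posterior mean tends to `1`. -/
theorem convergence_iff_posterior_mean_tendsto_one (X : ℕ → ℝ) :
    (∃ l : ℝ, Tendsto (fun N : ℕ => ∑ i ∈ Finset.Icc 1 N, X i) atTop (nhds l)) ↔
    (∃ c : ℕ → ℝ, (∀ j, 0 ≤ c j) ∧ Antitone c ∧ Tendsto c atTop (nhds 0) ∧
      ∀ n : ℕ → ℕ, (∀ j, 0 < n j) →
        Tendsto (postMean (fun j => if |blockSum X n j| ≤ c j then (1 : ℝ) else 0))
          atTop (nhds 1)) := by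
  constructor
  · rintro ⟨l, hl⟩
    set P : ℕ → ℝ := fun N : ℕ => ∑ i ∈ Finset.Icc 1 N, X i with hP
    have hc : CauchySeq P := hl.cauchySeq
    have hb : ∀ j : ℕ, Bornology.IsBounded (P '' Set.Ici (j - 1)) := fun j =>
      hc.isBounded_range.subset (Set.image_subset_range _ _)
    refine ⟨fun j => Metric.diam (P '' Set.Ici (j - 1)), fun j => Metric.diam_nonneg, ?_, ?_, ?_⟩
    · intro a b hab
      exact Metric.diam_mono (Set.image_mono (Set.Ici_subset_Ici.2 (by omega))) (hb a)
    · rw [Metric.tendsto_atTop]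
      intro ε hε
      obtain ⟨N, hN⟩ := Metric.cauchySeq_iff.1 hc (ε / 2) (by positivity)
      refine ⟨N + 1, fun j hj => ?_⟩
      rw [Real.dist_eq, sub_zero, abs_of_nonneg Metric.diam_nonneg]
      refine lt_of_le_of_lt (Metric.diam_le_of_forall_dist_le (C := ε / 2) (by positivity) ?_)
        (by linarith)
      rintro _ ⟨a, ha, rfl⟩ _ ⟨b, hb', rfl⟩
      simp only [Set.mem_Ici] at ha hb'
      exact (hN a (by omega) b (by omega)).le
    · intro n hn
      apply postMean_one
      intro j hj
      rw [if_pos]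
      rw [blockSum_eq, ← Real.dist_eq]
      have h1 := le_sum_pos n hn j
      have h2 := le_sum_pos n hn (j - 1)
      exact Metric.dist_le_diam_of_mem (hb j)
        (Set.mem_image_of_mem P (Set.mem_Ici.2 (by omega)))
        (Set.mem_image_of_mem P (Set.mem_Ici.2 (by omega)))
  · rintro ⟨c, -, -, hc0, hc⟩
    apply cauchySeq_tendsto_of_complete
    by_contra hcon
    rw [Metric.cauchySeq_iff'] at hcon
    push Not at hcon
    obtain ⟨ε, hε, hcon⟩ := hcon
    choose f hf hfd using hcon
    have hlt : ∀ N, N < f N := by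
      intro N
      refine lt_of_le_of_ne (hf N) fun h => ?_
      have := hfd N
      rw [← h, dist_self] at this
      linarith
    set n : ℕ → ℕ := fun j => f (f^[j - 1] 0) - f^[j - 1] 0 with hn
    have hsum : ∀ j, ∑ l ∈ Finset.Icc 1 j, n l = f^[j] 0 := by
      intro j
      induction j with
      | zero => simp
      | succ j ih =>
        rw [Finset.sum_Icc_succ_top (by omega), ih, Function.iterate_succ_apply']
        have := hlt (f^[j] 0)
        simp only [hn, Nat.add_sub_cancel]
        omega
    obtain ⟨J, hJ⟩ := eventually_atTop.1 (hc0.eventually (gt_mem_nhds hε))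
    refine not_postMean_one _ J ?_ ?_ (hc n fun j => Nat.sub_pos_of_lt (hlt _))
    · intro j
      split_ifs <;> norm_num
    · intro j hj hj1
      obtain ⟨i, rfl⟩ := Nat.exists_eq_add_of_le' hj1
      rw [if_neg]
      rw [not_le, blockSum_eq, hsum, hsum, Nat.add_sub_cancel, Function.iterate_succ_apply',
        ← Real.dist_eq]
      exact lt_of_lt_of_le (hJ _ hj) (hfd _)
end

section
/- Suppose a₁, a₂, b₁, b₂ are nonnegative reals, that the base 1 − log i/i − (log log i/i)·cos²(1/i)·(a + (−1)^i b) is nonnegative for every i ≥ 3 and every pair (a,b) among those considered, and that the series S^{a,b} = ∑_{i=3}^∞ (1 − log i/i − (log log i/i)·cos²(1/i)·(a + (−1)^i b))^i converges for each pair considered. Then S^{a,b} is nonincreasing in a and nondecreasing in b: if a₁ ≤ a₂ then S^{a₂,b} ≤ S^{a₁,b}, and if b₁ ≤ b₂ then S^{a,b₁} ≤ S^{a,b₂}. -/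
open Filter

/-- The `i`-th term of the series `S^{a,b}` of Example 4:
`(1 - log i / i - (log log i / i) · cos²(1/i) · (a + (-1)^i b))^i`. -/
noncomputable def exTerm (a b : ℝ) (i : ℕ) : ℝ :=
  (1 - Real.log i / i -
      (Real.log (Real.log i) / i) * (Real.cos (1 / i)) ^ 2 * (a + (-1 : ℝ) ^ i * b)) ^ i


/-- Lower bound for a logarithm from the artanh series. -/
lemma ex_log_lo {x y s : ℝ} (h₀ : 0 ≤ x) (h : x < 1) (hy : (1 + x) / (1 - x) ≤ y)
    (hs : s ≤ 2 * ∑ i ∈ Finset.range 8, x ^ (2 * i + 1) / (2 * i + 1)) : s ≤ Real.log y := by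
  have h1 := Real.sum_range_le_log_div h₀ h 8
  have h2 : Real.log ((1 + x) / (1 - x)) ≤ Real.log y :=
    Real.log_le_log (div_pos (by linarith) (by linarith)) hy
  linarith

/-- Upper bound for a logarithm from the artanh series. -/
lemma ex_log_hi {x y s : ℝ} (h₀ : 0 ≤ x) (h : x < 1) (hy0 : 0 < y) (hy : y ≤ (1 + x) / (1 - x))
    (hs : 2 * ((∑ i ∈ Finset.range 8, x ^ (2 * i + 1) / (2 * i + 1)) +
      x ^ (2 * 8 + 1) / (1 - x ^ 2)) ≤ s) : Real.log y ≤ s := by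
  have h1 := Real.log_div_le_sum_range_add h₀ h 8
  have h2 : Real.log y ≤ Real.log ((1 + x) / (1 - x)) := Real.log_le_log hy0 hy
  linarith

lemma ex_cos_hi {x : ℝ} (hx : 0 ≤ x) : Real.cos x ≤ 1 - x ^ 2 / 2 + x ^ 4 / 24 := by
  have key : MonotoneOn (fun x : ℝ => 1 - x ^ 2 / 2 + x ^ 4 / 24 - Real.cos x) (Set.Ici 0) := by
    refine monotoneOn_of_hasDerivWithinAt_nonneg (f' := fun x => Real.sin x - (x - x ^ 3 / 6))
      (convex_Ici 0) (by fun_prop) ?_ ?_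
    · intro y hy
      have h1 := ((((hasDerivAt_id y).pow 2).div_const 2).const_sub 1).add
        (((hasDerivAt_id y).pow 4).div_const 24) |>.sub (Real.hasDerivAt_cos y)
      refine (h1.congr_deriv ?_).hasDerivWithinAt
      simp; ring
    · intro y hy
      simp only [interior_Ici, Set.mem_Ioi] at hy
      have := Real.sin_ge_sub_cube hy.le
      linarith
  have := key (Set.mem_Ici.2 le_rfl) (Set.mem_Ici.2 hx) hx
  simp at this
  linarith

lemma ex_sin_hi {x : ℝ} (hx : 0 ≤ x) : Real.sin x ≤ x - x ^ 3 / 6 + x ^ 5 / 120 := by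
  have key : MonotoneOn (fun x : ℝ => x - x ^ 3 / 6 + x ^ 5 / 120 - Real.sin x) (Set.Ici 0) := by
    refine monotoneOn_of_hasDerivWithinAt_nonneg
      (f' := fun x => 1 - x ^ 2 / 2 + x ^ 4 / 24 - Real.cos x)
      (convex_Ici 0) (by fun_prop) ?_ ?_
    · intro y hy
      have h1 := ((hasDerivAt_id y).sub (((hasDerivAt_id y).pow 3).div_const 6)).add
        (((hasDerivAt_id y).pow 5).div_const 120) |>.sub (Real.hasDerivAt_sin y)
      refine (h1.congr_deriv ?_).hasDerivWithinAt
      simp; ring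
    · intro y hy
      simp only [interior_Ici, Set.mem_Ioi] at hy
      have := ex_cos_hi hy.le
      linarith
  have := key (Set.mem_Ici.2 le_rfl) (Set.mem_Ici.2 hx) hx
  simp at this
  linarith

lemma ex_cos_sq {x c d : ℝ} (hx : 0 ≤ x) (hx1 : x ≤ 1)
    (hc : c ≤ 1 - (x - x ^ 3 / 6 + x ^ 5 / 120) ^ 2) (hd : 1 - (x - x ^ 3 / 6) ^ 2 ≤ d) :
    c ≤ Real.cos x ^ 2 ∧ Real.cos x ^ 2 ≤ d := by
  have h1 := ex_sin_hi hx
  have h2 := Real.sin_ge_sub_cube hx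
  have h3 := Real.sin_sq_add_cos_sq x
  have h4 : 0 ≤ x - x ^ 3 / 6 := by nlinarith [pow_le_one₀ hx hx1 (n := 2)]
  have h5 : (x - x ^ 3 / 6) ^ 2 ≤ Real.sin x ^ 2 := by gcongr
  have h6 : Real.sin x ^ 2 ≤ (x - x ^ 3 / 6 + x ^ 5 / 120) ^ 2 := by
    have : 0 ≤ Real.sin x := h4.trans h2
    gcongr
  constructor <;> linarith

lemma ex_log_seven : 1.945910147 ≤ Real.log 7 ∧ Real.log 7 ≤ 1.945910151 := by
  have h8 : Real.log 8 = 3 * Real.log 2 := by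
    rw [show (8 : ℝ) = 2 ^ 3 by norm_num, Real.log_pow]; norm_num
  have h : Real.log (8 / 7) = Real.log 8 - Real.log 7 := Real.log_div (by norm_num) (by norm_num)
  have h1 : 0.133531392 ≤ Real.log (8 / 7) :=
    ex_log_lo (x := 1 / 15) (by norm_num) (by norm_num) (by norm_num)
      (by norm_num [Finset.sum_range_succ])
  have h2 : Real.log (8 / 7) ≤ 0.133531393 :=
    ex_log_hi (x := 1 / 15) (by norm_num) (by norm_num) (by norm_num) (by norm_num)
      (by norm_num [Finset.sum_range_succ])
  have := Real.log_two_gt_d9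
  have := Real.log_two_lt_d9
  constructor <;> linarith

lemma ex_num_3 : ((27465307/25000000) ≤ Real.log 3 ∧ Real.log 3 ≤ (109861229/100000000)) ∧
    ((235119/2500000) ≤ Real.log (Real.log 3) ∧ Real.log (Real.log 3) ≤ (940481/10000000)) ∧
    ((1785887/2000000) ≤ Real.cos (1 / 3) ^ 2 ∧ Real.cos (1 / 3) ^ 2 ≤ (8929661/10000000)) := by
  have := Real.log_three_gt_d9; have := Real.log_three_lt_d9
  have hl : (27465307/25000000) ≤ Real.log 3 := by norm_num at *; linarith
  have hh : Real.log 3 ≤ (109861229/100000000) := by norm_num at *; linarith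
  refine ⟨⟨hl, hh⟩, ⟨?_, ?_⟩, ?_⟩
  · exact ex_log_lo (x := (4698927/100000000)) (by norm_num) (by norm_num) (le_trans (by norm_num) hl)
      (by norm_num [Finset.sum_range_succ])
  · exact ex_log_hi (x := (469893/10000000)) (by norm_num) (by norm_num) (by linarith)
      (le_trans hh (by norm_num)) (by norm_num [Finset.sum_range_succ])
  · exact ex_cos_sq (by norm_num) (by norm_num) (by norm_num) (by norm_num)

lemma ex_num_4 : ((34657359/25000000) ≤ Real.log 4 ∧ Real.log 4 ≤ (138629437/100000000)) ∧
    ((163317/500000) ≤ Real.log (Real.log 4) ∧ Real.log (Real.log 4) ≤ (653269/2000000)) ∧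
    ((1173489/1250000) ≤ Real.cos (1 / 4) ^ 2 ∧ Real.cos (1 / 4) ^ 2 ≤ (4693977/5000000)) := by
  have := Real.log_four_eq; have := Real.log_two_gt_d9; have := Real.log_two_lt_d9
  have hl : (34657359/25000000) ≤ Real.log 4 := by norm_num at *; linarith
  have hh : Real.log 4 ≤ (138629437/100000000) := by norm_num at *; linarith
  refine ⟨⟨hl, hh⟩, ⟨?_, ?_⟩, ?_⟩
  · exact ex_log_lo (x := (8094021/50000000)) (by norm_num) (by norm_num) (le_trans (by norm_num) hl)
      (by norm_num [Finset.sum_range_succ])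
  · exact ex_log_hi (x := (3237609/20000000)) (by norm_num) (by norm_num) (by linarith)
      (le_trans hh (by norm_num)) (by norm_num [Finset.sum_range_succ])
  · exact ex_cos_sq (by norm_num) (by norm_num) (by norm_num) (by norm_num)

lemma ex_num_5 : ((160943791/100000000) ≤ Real.log 5 ∧ Real.log 5 ≤ (10058987/6250000)) ∧
    ((4758847/10000000) ≤ Real.log (Real.log 5) ∧ Real.log (Real.log 5) ≤ (1189713/2500000)) ∧
    ((1200663/1250000) ≤ Real.cos (1 / 5) ^ 2 ∧ Real.cos (1 / 5) ^ 2 ≤ (2401329/2500000)) := by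
  have := Real.log_five_gt_d9; have := Real.log_five_lt_d9
  have hl : (160943791/100000000) ≤ Real.log 5 := by norm_num at *; linarith
  have hh : Real.log 5 ≤ (10058987/6250000) := by norm_num at *; linarith
  refine ⟨⟨hl, hh⟩, ⟨?_, ?_⟩, ?_⟩
  · exact ex_log_lo (x := (1167757/5000000)) (by norm_num) (by norm_num) (le_trans (by norm_num) hl)
      (by norm_num [Finset.sum_range_succ])
  · exact ex_log_hi (x := (23355143/100000000)) (by norm_num) (by norm_num) (by linarith)
      (le_trans hh (by norm_num)) (by norm_num [Finset.sum_range_succ])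
  · exact ex_cos_sq (by norm_num) (by norm_num) (by norm_num) (by norm_num)

lemma ex_num_6 : ((89587973/50000000) ≤ Real.log 6 ∧ Real.log 6 ≤ (44793987/25000000)) ∧
    ((2915989/5000000) ≤ Real.log (Real.log 6) ∧ Real.log (Real.log 6) ≤ (5831983/10000000)) ∧
    ((607799/625000) ≤ Real.cos (1 / 6) ^ 2 ∧ Real.cos (1 / 6) ^ 2 ≤ (9724789/10000000)) := by
  have h : Real.log 6 = Real.log 2 + Real.log 3 := by
    rw [← Real.log_mul (by norm_num) (by norm_num)]; norm_num
  have := Real.log_two_gt_d9; have := Real.log_two_lt_d9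
  have := Real.log_three_gt_d9; have := Real.log_three_lt_d9
  have hl : (89587973/50000000) ≤ Real.log 6 := by norm_num at *; linarith
  have hh : Real.log 6 ≤ (44793987/25000000) := by norm_num at *; linarith
  refine ⟨⟨hl, hh⟩, ⟨?_, ?_⟩, ?_⟩
  · exact ex_log_lo (x := (28360589/100000000)) (by norm_num) (by norm_num) (le_trans (by norm_num) hl)
      (by norm_num [Finset.sum_range_succ])
  · exact ex_log_hi (x := (1772537/6250000)) (by norm_num) (by norm_num) (by linarith)
      (le_trans hh (by norm_num)) (by norm_num [Finset.sum_range_succ])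
  · exact ex_cos_sq (by norm_num) (by norm_num) (by norm_num) (by norm_num)

lemma ex_num_7 : ((97295507/50000000) ≤ Real.log 7 ∧ Real.log 7 ≤ (24323877/12500000)) ∧
    ((416081/625000) ≤ Real.log (Real.log 7) ∧ Real.log (Real.log 7) ≤ (6657301/10000000)) ∧
    ((4898651/5000000) ≤ Real.cos (1 / 7) ^ 2 ∧ Real.cos (1 / 7) ^ 2 ≤ (1959461/2000000)) := by
  have := ex_log_seven.1; have := ex_log_seven.2
  have hl : (97295507/50000000) ≤ Real.log 7 := by norm_num at *; linarith
  have hh : Real.log 7 ≤ (24323877/12500000) := by norm_num at *; linarith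
  refine ⟨⟨hl, hh⟩, ⟨?_, ?_⟩, ?_⟩
  · exact ex_log_lo (x := (6421853/20000000)) (by norm_num) (by norm_num) (le_trans (by norm_num) hl)
      (by norm_num [Finset.sum_range_succ])
  · exact ex_log_hi (x := (8027317/25000000)) (by norm_num) (by norm_num) (by linarith)
      (le_trans hh (by norm_num)) (by norm_num [Finset.sum_range_succ])
  · exact ex_cos_sq (by norm_num) (by norm_num) (by norm_num) (by norm_num)

lemma ex_num_8 : ((103972077/50000000) ≤ Real.log 8 ∧ Real.log 8 ≤ (41588831/20000000)) ∧
    ((7320991/10000000) ≤ Real.log (Real.log 8) ∧ Real.log (Real.log 8) ≤ (1830249/2500000)) ∧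
    ((4922281/5000000) ≤ Real.cos (1 / 8) ^ 2 ∧ Real.cos (1 / 8) ^ 2 ≤ (9844563/10000000)) := by
  have h : Real.log 8 = 3 * Real.log 2 := by
    rw [show (8 : ℝ) = 2 ^ 3 by norm_num, Real.log_pow]; norm_num
  have := Real.log_two_gt_d9; have := Real.log_two_lt_d9
  have hl : (103972077/50000000) ≤ Real.log 8 := by norm_num at *; linarith
  have hh : Real.log 8 ≤ (41588831/20000000) := by norm_num at *; linarith
  refine ⟨⟨hl, hh⟩, ⟨?_, ?_⟩, ?_⟩
  · exact ex_log_lo (x := (17526579/50000000)) (by norm_num) (by norm_num) (le_trans (by norm_num) hl)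
      (by norm_num [Finset.sum_range_succ])
  · exact ex_log_hi (x := (35053161/100000000)) (by norm_num) (by norm_num) (by linarith)
      (le_trans hh (by norm_num)) (by norm_num [Finset.sum_range_succ])
  · exact ex_cos_sq (by norm_num) (by norm_num) (by norm_num) (by norm_num)

lemma ex_num_9 : ((219722457/100000000) ≤ Real.log 9 ∧ Real.log 9 ≤ (109861229/50000000)) ∧
    ((1967987/2500000) ≤ Real.log (Real.log 9) ∧ Real.log (Real.log 9) ≤ (7871953/10000000)) ∧
    ((197541/200000) ≤ Real.cos (1 / 9) ^ 2 ∧ Real.cos (1 / 9) ^ 2 ≤ (9877051/10000000)) := by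
  have h : Real.log 9 = 2 * Real.log 3 := by
    rw [show (9 : ℝ) = 3 ^ 2 by norm_num, Real.log_pow]; norm_num
  have := Real.log_three_gt_d9; have := Real.log_three_lt_d9
  have hl : (219722457/100000000) ≤ Real.log 9 := by norm_num at *; linarith
  have hh : Real.log 9 ≤ (109861229/50000000) := by norm_num at *; linarith
  refine ⟨⟨hl, hh⟩, ⟨?_, ?_⟩, ?_⟩
  · exact ex_log_lo (x := (2340359/6250000)) (by norm_num) (by norm_num) (le_trans (by norm_num) hl)
      (by norm_num [Finset.sum_range_succ])
  · exact ex_log_hi (x := (37445747/100000000)) (by norm_num) (by norm_num) (by linarith)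
      (le_trans hh (by norm_num)) (by norm_num [Finset.sum_range_succ])
  · exact ex_cos_sq (by norm_num) (by norm_num) (by norm_num) (by norm_num)


/-- The slope terms `g_i(a)`. -/
noncomputable def exG (a : ℝ) (i : ℕ) : ℝ :=
  Real.log (Real.log i) * Real.cos (1 / i) ^ 2 *
    (1 - Real.log i / i - Real.log (Real.log i) / i * Real.cos (1 / i) ^ 2 * a) ^ (i - 1)

lemma exG_bounds {x L l C a Lh Ll lh ll Ch Cl p q w P Q W : ℝ} {n : ℕ} (hx : 0 < x)
    (h : (Ll ≤ L ∧ L ≤ Lh) ∧ (ll ≤ l ∧ l ≤ lh) ∧ (Cl ≤ C ∧ C ≤ Ch))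
    (ha : 0 ≤ a) (hll : 0 ≤ ll) (hCl : 0 ≤ Cl)
    (hp : p ≤ 1 - Lh / x) (hq : lh / x * Ch ≤ q) (hw : w ≤ ll * Cl)
    (hP : 1 - Ll / x ≤ P) (hQ : Q ≤ ll / x * Cl) (hW : lh * Ch ≤ W) (hw0 : 0 ≤ w)
    (hpos : 0 ≤ p - q * a) :
    w * (p - q * a) ^ n ≤ l * C * (1 - L / x - l / x * C * a) ^ n ∧
    l * C * (1 - L / x - l / x * C * a) ^ n ≤ W * (P - Q * a) ^ n := by
  obtain ⟨⟨h1, h2⟩, ⟨h3, h4⟩, ⟨h5, h6⟩⟩ := h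
  have hl : 0 ≤ l := hll.trans h3
  have hC : 0 ≤ C := hCl.trans h5
  have hlh : 0 ≤ lh := hl.trans h4
  have e1 : l / x * C ≤ q := le_trans (by gcongr) hq
  have e2 : Q ≤ l / x * C := le_trans hQ (by gcongr)
  have e3 : w ≤ l * C := le_trans hw (by gcongr)
  have e4 : l * C ≤ W := le_trans (by gcongr) hW
  have e5 : L / x ≤ Lh / x := by gcongr
  have e6 : Ll / x ≤ L / x := by gcongr
  have e7 : l / x * C * a ≤ q * a := by gcongr
  have e8 : Q * a ≤ l / x * C * a := by gcongr
  have b1 : p - q * a ≤ 1 - L / x - l / x * C * a := by linarith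
  have b2 : 1 - L / x - l / x * C * a ≤ P - Q * a := by linarith
  have b3 : 0 ≤ 1 - L / x - l / x * C * a := hpos.trans b1
  constructor
  · gcongr
  · have : 0 ≤ W := le_trans (by positivity) e4
    gcongr

lemma exG_3 {a : ℝ} (h0 : 0 ≤ a) (h1 : a ≤ 8) :
    (839791/10000000) * ((6337959/10000000) - (13997/500000) * a) ^ 2 ≤ exG a 3 ∧
    exG a 3 ≤ (419909/5000000) * ((158449/250000) - (27993/1000000) * a) ^ 2 := by
  have := exG_bounds (x := 3) (n := 2) (p := (6337959/10000000)) (q := (13997/500000)) (w := (839791/10000000)) (P := (158449/250000))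
    (Q := (27993/1000000)) (W := (419909/5000000)) (by norm_num) ex_num_3 h0 (by norm_num) (by norm_num)
    (by norm_num) (by norm_num) (by norm_num) (by norm_num) (by norm_num) (by norm_num)
    (by norm_num) (by linarith)
  simpa [exG] using this

lemma exG_4 {a : ℝ} (h0 : 0 ≤ a) (h1 : a ≤ 8) :
    (3066411/10000000) * ((816783/1250000) - (47913/625000) * a) ^ 3 ≤ exG a 4 ∧
    exG a 4 ≤ (306643/1000000) * ((1306853/2000000) - (383301/5000000) * a) ^ 3 := by
  have := exG_bounds (x := 4) (n := 3) (p := (816783/1250000)) (q := (47913/625000)) (w := (3066411/10000000)) (P := (1306853/2000000))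
    (Q := (383301/5000000)) (W := (306643/1000000)) (by norm_num) ex_num_4 h0 (by norm_num) (by norm_num)
    (by norm_num) (by norm_num) (by norm_num) (by norm_num) (by norm_num) (by norm_num)
    (by norm_num) (by linarith)
  simpa [exG] using this

lemma exG_5 {a : ℝ} (h0 : 0 ≤ a) (h1 : a ≤ 37/5) :
    (4571017/10000000) * ((1695281/2500000) - (457103/5000000) * a) ^ 4 ≤ exG a 5 ∧
    exG a 5 ≤ (1142757/2500000) * ((54249/80000) - (914203/10000000) * a) ^ 4 := by
  have := exG_bounds (x := 5) (n := 4) (p := (1695281/2500000)) (q := (457103/5000000)) (w := (4571017/10000000)) (P := (54249/80000))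
    (Q := (914203/10000000)) (W := (1142757/2500000)) (by norm_num) ex_num_5 h0 (by norm_num) (by norm_num)
    (by norm_num) (by norm_num) (by norm_num) (by norm_num) (by norm_num) (by norm_num)
    (by norm_num) (by linarith)
  simpa [exG] using this

lemma exG_6 {a : ℝ} (h0 : 0 ≤ a) (h1 : a ≤ 37/5) :
    (354467/625000) * ((3506867/5000000) - (945247/10000000) * a) ^ 5 ≤ exG a 6 ∧
    exG a 6 ≤ (5671481/10000000) * ((1402747/2000000) - (189049/2000000) * a) ^ 5 := by
  have := exG_bounds (x := 6) (n := 5) (p := (3506867/5000000)) (q := (945247/10000000)) (w := (354467/625000)) (P := (1402747/2000000))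
    (Q := (189049/2000000)) (W := (5671481/10000000)) (by norm_num) ex_num_6 h0 (by norm_num) (by norm_num)
    (by norm_num) (by norm_num) (by norm_num) (by norm_num) (by norm_num) (by norm_num)
    (by norm_num) (by linarith)
  simpa [exG] using this

lemma exG_7 {a : ℝ} (h0 : 0 ≤ a) (h1 : a ≤ 77/10) :
    (6522353/10000000) * ((225629/312500) - (465883/5000000) * a) ^ 6 ≤ exG a 7 ∧
    exG a 7 ≤ (6522361/10000000) * ((7220129/10000000) - (232941/2500000) * a) ^ 6 := by
  have := exG_bounds (x := 7) (n := 6) (p := (225629/312500)) (q := (465883/5000000)) (w := (6522353/10000000)) (P := (7220129/10000000))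
    (Q := (232941/2500000)) (W := (6522361/10000000)) (by norm_num) ex_num_7 h0 (by norm_num) (by norm_num)
    (by norm_num) (by norm_num) (by norm_num) (by norm_num) (by norm_num) (by norm_num)
    (by norm_num) (by linarith)
  simpa [exG] using this

lemma exG_8 {a : ℝ} (h0 : 0 ≤ a) (h1 : a ≤ 8) :
    (3603597/5000000) * ((3700349/5000000) - (900901/10000000) * a) ^ 7 ≤ exG a 8 ∧
    exG a 8 ≤ (7207201/10000000) * ((7400699/10000000) - (900899/10000000) * a) ^ 7 := by
  have := exG_bounds (x := 8) (n := 7) (p := (3700349/5000000)) (q := (900901/10000000)) (w := (3603597/5000000)) (P := (7400699/10000000))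
    (Q := (900899/10000000)) (W := (7207201/10000000)) (by norm_num) ex_num_8 h0 (by norm_num) (by norm_num)
    (by norm_num) (by norm_num) (by norm_num) (by norm_num) (by norm_num) (by norm_num)
    (by norm_num) (by linarith)
  simpa [exG] using this

lemma exG_9 {a : ℝ} (h0 : 0 ≤ a) (h1 : a ≤ 8) :
    (3887581/5000000) * ((7558639/10000000) - (215977/2500000) * a) ^ 8 ≤ exG a 9 ∧
    exG a 9 ≤ (7775169/10000000) * ((94483/125000) - (431953/5000000) * a) ^ 8 := by
  have := exG_bounds (x := 9) (n := 8) (p := (7558639/10000000)) (q := (215977/2500000)) (w := (3887581/5000000)) (P := (94483/125000))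
    (Q := (431953/5000000)) (W := (7775169/10000000)) (by norm_num) ex_num_9 h0 (by norm_num) (by norm_num)
    (by norm_num) (by norm_num) (by norm_num) (by norm_num) (by norm_num) (by norm_num)
    (by norm_num) (by linarith)
  simpa [exG] using this

lemma ex_poly_nonneg {a : ℝ} (h1 : 1 ≤ a) (h5 : a ≤ 5) : 0 ≤
      (839791/10000000) * ((6337959/10000000) - (13997/500000) * a) ^ 2
      - (306643/1000000) * ((1306853/2000000) - (383301/5000000) * a) ^ 3
      + (4571017/10000000) * ((1695281/2500000) - (457103/5000000) * a) ^ 4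
      - (5671481/10000000) * ((1402747/2000000) - (189049/2000000) * a) ^ 5
      + (6522353/10000000) * ((225629/312500) - (465883/5000000) * a) ^ 6
      - (7207201/10000000) * ((7400699/10000000) - (900899/10000000) * a) ^ 7
      + (3887581/5000000) * ((7558639/10000000) - (215977/2500000) * a) ^ 8 / 2 := by
  have e1 : 0 ≤ a - 1 := by linarith
  have e2 : 0 ≤ 5 - a := by linarith
  have e : (839791/10000000) * ((6337959/10000000) - (13997/500000) * a) ^ 2
      - (306643/1000000) * ((1306853/2000000) - (383301/5000000) * a) ^ 3
      + (4571017/10000000) * ((1695281/2500000) - (457103/5000000) * a) ^ 4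
      - (5671481/10000000) * ((1402747/2000000) - (189049/2000000) * a) ^ 5
      + (6522353/10000000) * ((225629/312500) - (465883/5000000) * a) ^ 6
      - (7207201/10000000) * ((7400699/10000000) - (900899/10000000) * a) ^ 7
      + (3887581/5000000) * ((7558639/10000000) - (215977/2500000) * a) ^ 8 / 2 =
      (159096903281547998704570189094071303314765978742262568421821/65536000000000000000000000000000000000000000000000000000000000000000) * ((a - 1) ^ 0 * (5 - a) ^ 8) +
      (2874435664042980918358524539698107367407830418848393690965709/8192000000000000000000000000000000000000000000000000000000000000000) * ((a - 1) ^ 1 * (5 - a) ^ 7) +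
      (38561507308862056675163874491704335940734030598602843354287627/16384000000000000000000000000000000000000000000000000000000000000000) * ((a - 1) ^ 2 * (5 - a) ^ 6) +
      (55337306799981215333966303845403922320473495224704086259183483/8192000000000000000000000000000000000000000000000000000000000000000) * ((a - 1) ^ 3 * (5 - a) ^ 5) +
      (70230392303378073446520824289330997739769467707584414307017707/6553600000000000000000000000000000000000000000000000000000000000000) * ((a - 1) ^ 4 * (5 - a) ^ 4) +
      (83071436030299497276360451558245656107507537760581403534547803/8192000000000000000000000000000000000000000000000000000000000000000) * ((a - 1) ^ 5 * (5 - a) ^ 3) +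
      (93627574114357717727150878211976816670799515971771832492950987/16384000000000000000000000000000000000000000000000000000000000000000) * ((a - 1) ^ 6 * (5 - a) ^ 2) +
      (14519210362923639495065146956512895203141198062186352094354989/8192000000000000000000000000000000000000000000000000000000000000000) * ((a - 1) ^ 7 * (5 - a) ^ 1) +
      (15278814768045858864275826122306006907858047008691804760030781/65536000000000000000000000000000000000000000000000000000000000000000) * ((a - 1) ^ 8 * (5 - a) ^ 0) := by
    ring
  rw [e]
  positivity

lemma exT_nonneg {a : ℝ} (h1 : 1 ≤ a) (h5 : a ≤ 5) :
    0 ≤ exG a 3 - exG a 4 + exG a 5 - exG a 6 + exG a 7 - exG a 8 + exG a 9 / 2 := by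
  have h0 : 0 ≤ a := by linarith
  have := ex_poly_nonneg h1 h5
  have g3 := exG_3 h0 (by linarith)
  have g4 := exG_4 h0 (by linarith)
  have g5 := exG_5 h0 (by linarith)
  have g6 := exG_6 h0 (by linarith)
  have g7 := exG_7 h0 (by linarith)
  have g8 := exG_8 h0 (by linarith)
  have g9 := exG_9 h0 (by linarith)
  linarith [g3.1, g4.2, g5.1, g6.2, g7.1, g8.2, g9.1]


/-- The lower bound for the bracket in the second derivative. -/
noncomputable def exB (x L l a : ℝ) : ℝ :=
  (1 - 1 / x) * (1 + a * (1 / L + 1 / L ^ 2 - (5 + 1 / L) / (x ^ 2 * L))) +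
    2 * (L - 1 + a * ((1 - 1 / x ^ 2) * (l - 1 / L) - 2 * l / x ^ 2)) / x -
    (1 - (L + a * ((1 - 1 / x ^ 2) * l)) / x) *
      ((1 + 1 / L + 1 / (l * L)) / (l * L) + 7 / x ^ 2)

noncomputable def exK (x L l a : ℝ) : ℝ :=
  (x - (L + a * l)) * exB x L l a - (1 - 1 / x) * (L - 1 + a * (l - 1 / L)) ^ 2

lemma ex_quad_bern {A0 A1 A2 T τ : ℝ} (hT : 0 < T) (h0 : 0 ≤ τ) (h1 : τ ≤ T)
    (H0 : 0 ≤ A0) (H1 : 0 ≤ A0 + A1 * T / 2) (H2 : 0 ≤ A0 + A1 * T + A2 * T ^ 2) :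
    0 ≤ A0 + A1 * τ + A2 * τ ^ 2 := by
  have e : A0 + A1 * τ + A2 * τ ^ 2 = (A0 * (T - τ) ^ 2 + 2 * (A0 + A1 * T / 2) * (τ * (T - τ)) +
      (A0 + A1 * T + A2 * T ^ 2) * τ ^ 2) / T ^ 2 := by
    field_simp; ring
  have : 0 ≤ T - τ := by linarith
  rw [e]; positivity

/-- Common first-order facts near the left end `x0` of a chunk. -/
lemma ex_chunk_basic {x x0 a L0l L0h l0h : ℝ} (hx0 : 1 < x0) (hx : x0 ≤ x) (ha : 0 ≤ a)
    (hL0l : L0l ≤ Real.log x0) (hL0h : Real.log x0 ≤ L0h) (hL0 : 1 < L0l)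
    (hl0h : Real.log (Real.log x0) ≤ l0h) :
    0 ≤ Real.log x - Real.log x0 ∧
    x0 * (1 + (Real.log x - Real.log x0) + (Real.log x - Real.log x0) ^ 2 / 2) ≤ x ∧
    Real.log x + a * Real.log (Real.log x) ≤
      (L0h + a * l0h) + (1 + a / L0l) * (Real.log x - Real.log x0) ∧
    Real.log x - 1 + a * (Real.log (Real.log x) - 1 / Real.log x) ≤
      (L0h - 1 + a * (l0h - 1 / L0h)) +
        (1 + a * (1 / L0l + 1 / L0l ^ 2)) * (Real.log x - Real.log x0) := by
  have hxp : 0 < x0 := by linarith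
  have hxx : 0 < x := by linarith
  have hmono : Real.log x0 ≤ Real.log x := Real.log_le_log hxp hx
  set t0 := Real.log x0 with ht0
  set L := Real.log x with hL
  have ht0p : 0 < t0 := by linarith
  have hLp : 0 < L := by linarith
  have hτ : 0 ≤ L - t0 := by linarith
  have hl : Real.log L ≤ l0h + (L - t0) / L0l := by
    have h1 : Real.log (L / t0) ≤ L / t0 - 1 := Real.log_le_sub_one_of_pos (by positivity)
    rw [Real.log_div hLp.ne' ht0p.ne'] at h1
    have h2 : L / t0 - 1 = (L - t0) / t0 := by field_simp
    have h3 : (L - t0) / t0 ≤ (L - t0) / L0l := by gcongr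
    linarith
  have hinv : -(1 / L) ≤ -(1 / L0h) + (L - t0) / L0l ^ 2 := by
    have h1 : 1 / t0 - 1 / L ≤ (L - t0) / t0 ^ 2 := by
      rw [div_sub_div _ _ ht0p.ne' hLp.ne', div_le_div_iff₀ (by positivity) (by positivity)]
      nlinarith [mul_nonneg hτ hτ, mul_nonneg (mul_nonneg hτ hτ) ht0p.le]
    have h2 : (L - t0) / t0 ^ 2 ≤ (L - t0) / L0l ^ 2 := by gcongr
    have h3 : 1 / L0h ≤ 1 / t0 := by gcongr
    linarith
  refine ⟨hτ, ?_, ?_, ?_⟩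
  · have h1 := Real.quadratic_le_exp_of_nonneg hτ
    have h2 : Real.exp (L - t0) = x / x0 := by
      rw [Real.exp_sub, hL, ht0, Real.exp_log hxx, Real.exp_log hxp]
    rw [h2, le_div_iff₀ hxp] at h1
    linarith
  · have := mul_le_mul_of_nonneg_left hl ha
    have e : a * (l0h + (L - t0) / L0l) = a * l0h + a / L0l * (L - t0) := by ring
    rw [e] at this
    linarith
  · have := mul_le_mul_of_nonneg_left (add_le_add hl hinv) ha
    have e : a * (l0h + (L - t0) / L0l + (-(1 / L0h) + (L - t0) / L0l ^ 2)) =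
      a * (l0h - 1 / L0h) + a * (1 / L0l + 1 / L0l ^ 2) * (L - t0) := by ring
    rw [e] at this
    linarith

set_option maxHeartbeats 4000000 in
lemma exK_chunk {x x0 x1 a L0l L0h L1 l0l l0h l1 Q U S σ υ κ T : ℝ}
    (hx0 : 1 < x0) (hx : x0 ≤ x) (hx1 : x ≤ x1) (ha : 0 ≤ a)
    (hL0l : L0l ≤ Real.log x0) (hL0h : Real.log x0 ≤ L0h) (hL0 : 1 < L0l)
    (hL1 : Real.log x1 ≤ L1)
    (hl0l : l0l ≤ Real.log (Real.log x0)) (hl0 : 0 < l0l) (hll : 1 / L0l ≤ l0l)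
    (hl0h : Real.log (Real.log x0) ≤ l0h) (hl1 : Real.log (Real.log x1) ≤ l1)
    (hQ0 : 0 ≤ Q)
    (hα : 0 ≤ 1 / L1 + 1 / L1 ^ 2 - (5 + 1 / L0l) / (x0 ^ 2 * L0l))
    (hβ : 0 ≤ (1 - 1 / x0 ^ 2) * (l0l - 1 / L0l) - 2 * l1 / x0 ^ 2)
    (hγ : L0l + a * ((1 - 1 / x0 ^ 2) * l0l) ≤ x1)
    (hQ : Q ≤ (1 - 1 / x0) * (1 + a * (1 / L1 + 1 / L1 ^ 2 - (5 + 1 / L0l) / (x0 ^ 2 * L0l))) +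
      2 * (L0l - 1 + a * ((1 - 1 / x0 ^ 2) * (l0l - 1 / L0l) - 2 * l1 / x0 ^ 2)) / x1 -
      (1 - (L0l + a * ((1 - 1 / x0 ^ 2) * l0l)) / x1) *
      ((1 + 1 / L0l + 1 / (l0l * L0l)) / (l0l * L0l) + 7 / x0 ^ 2))
    (hU : L0h + a * l0h ≤ U) (hυ : 1 + a / L0l ≤ υ)
    (hS : L0h - 1 + a * (l0h - 1 / L0h) ≤ S) (hσ : 1 + a * (1 / L0l + 1 / L0l ^ 2) ≤ σ)
    (hκ : 1 - 1 / x1 ≤ κ) (hT0 : 0 < T) (hT : L1 - L0l ≤ T)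
    (hD0 : U < x0) (hD1 : υ ≤ x0)
    (H0 : 0 ≤ Q * (x0 - U) - κ * S ^ 2)
    (H1 : 0 ≤ (Q * (x0 - U) - κ * S ^ 2) + (Q * (x0 - υ) - 2 * κ * S * σ) * T / 2)
    (H2 : 0 ≤ (Q * (x0 - U) - κ * S ^ 2) + (Q * (x0 - υ) - 2 * κ * S * σ) * T +
      (Q * x0 / 2 - κ * σ ^ 2) * T ^ 2) :
    0 ≤ exK x (Real.log x) (Real.log (Real.log x)) a ∧
      0 < x - (Real.log x + a * Real.log (Real.log x)) := by
  obtain ⟨b1, b2, b3, b4⟩ := ex_chunk_basic hx0 hx ha hL0l hL0h hL0 hl0h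
  have hxp : 0 < x0 := by linarith
  have hxx : 0 < x := by linarith
  have hx1p : 0 < x1 := by linarith
  have c1 : Real.log x ≤ Real.log x1 := Real.log_le_log hxx hx1
  have c2 : Real.log (Real.log x0) ≤ Real.log (Real.log x) :=
    Real.log_le_log (by linarith) (by linarith)
  have c3 : Real.log (Real.log x) ≤ Real.log (Real.log x1) :=
    Real.log_le_log (by linarith) c1
  set t0 := Real.log x0 with ht0
  set L := Real.log x with hL
  set l := Real.log L with hl
  set τ := L - t0 with hτ
  have d1 : L0l ≤ L := by linarith
  have d2 : L ≤ L1 := by linarith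
  have d3 : l0l ≤ l := by linarith
  have d4 : l ≤ l1 := by linarith
  have hLp : 0 < L := by linarith
  have hL0p : 0 < L0l := by linarith
  have hlp : 0 < l := by linarith
  have i1 : 1 / L1 ≤ 1 / L := by gcongr
  have i2 : 1 / L1 ^ 2 ≤ 1 / L ^ 2 := by gcongr
  have i3 : 1 / L ≤ 1 / L0l := by gcongr
  have i4 : 1 / x ^ 2 ≤ 1 / x0 ^ 2 := by gcongr
  have i5 : 1 / x ≤ 1 / x0 := by gcongr
  have i6 : 1 / x1 ≤ 1 / x := by gcongr
  have i7 : 1 / x0 ^ 2 < 1 := by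
    rw [div_lt_one (by positivity)]; exact one_lt_pow₀ hx0 two_ne_zero
  have i8 : 1 / x0 < 1 := by rw [div_lt_one (by positivity)]; linarith
  have f1 : (5 + 1 / L) / (x ^ 2 * L) ≤ (5 + 1 / L0l) / (x0 ^ 2 * L0l) := by gcongr
  have f2 : 2 * l / x ^ 2 ≤ 2 * l1 / x0 ^ 2 := by gcongr; linarith
  have f3 : (1 - 1 / x0 ^ 2) * (l0l - 1 / L0l) ≤ (1 - 1 / x ^ 2) * (l - 1 / L) := by
    apply mul_le_mul <;> linarith
  have f4 : (1 - 1 / x0 ^ 2) * l0l ≤ (1 - 1 / x ^ 2) * l := by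
    apply mul_le_mul <;> linarith
  have f5 : (1 + 1 / L + 1 / (l * L)) / (l * L) + 7 / x ^ 2 ≤
      (1 + 1 / L0l + 1 / (l0l * L0l)) / (l0l * L0l) + 7 / x0 ^ 2 := by gcongr
  have f5' : 0 ≤ (1 + 1 / L + 1 / (l * L)) / (l * L) + 7 / x ^ 2 := by positivity
  have f6 : (L0l + a * ((1 - 1 / x0 ^ 2) * l0l)) / x1 ≤
      (L + a * ((1 - 1 / x ^ 2) * l)) / x := by
    have h0 : 0 ≤ (1 - 1 / x0 ^ 2) * l0l := mul_nonneg (by linarith) hl0.le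
    have h1 := mul_le_mul_of_nonneg_left f4 ha
    exact div_le_div₀ (add_nonneg hLp.le (mul_nonneg ha (h0.trans f4))) (by linarith) hxx hx1
  have f7 : (1 - (L + a * ((1 - 1 / x ^ 2) * l)) / x) *
      ((1 + 1 / L + 1 / (l * L)) / (l * L) + 7 / x ^ 2) ≤
      (1 - (L0l + a * ((1 - 1 / x0 ^ 2) * l0l)) / x1) *
      ((1 + 1 / L0l + 1 / (l0l * L0l)) / (l0l * L0l) + 7 / x0 ^ 2) := by
    apply mul_le_mul (by linarith) f5 f5'
    rw [sub_nonneg, div_le_one hx1p]; exact hγ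
  have f8 : 2 * (L0l - 1 + a * ((1 - 1 / x0 ^ 2) * (l0l - 1 / L0l) - 2 * l1 / x0 ^ 2)) / x1 ≤
      2 * (L - 1 + a * ((1 - 1 / x ^ 2) * (l - 1 / L) - 2 * l / x ^ 2)) / x := by
    have : 0 ≤ L0l - 1 + a * ((1 - 1 / x0 ^ 2) * (l0l - 1 / L0l) - 2 * l1 / x0 ^ 2) :=
      add_nonneg (by linarith) (mul_nonneg ha hβ)
    have h1 : L0l - 1 + a * ((1 - 1 / x0 ^ 2) * (l0l - 1 / L0l) - 2 * l1 / x0 ^ 2) ≤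
        L - 1 + a * ((1 - 1 / x ^ 2) * (l - 1 / L) - 2 * l / x ^ 2) := by
      have := mul_le_mul_of_nonneg_left (sub_le_sub f3 f2) ha
      linarith
    exact div_le_div₀ (by linarith) (by linarith) hxx hx1
  have f9 : (1 - 1 / x0) * (1 + a * (1 / L1 + 1 / L1 ^ 2 - (5 + 1 / L0l) / (x0 ^ 2 * L0l))) ≤
      (1 - 1 / x) * (1 + a * (1 / L + 1 / L ^ 2 - (5 + 1 / L) / (x ^ 2 * L))) := by
    have hh : 1 / L1 + 1 / L1 ^ 2 - (5 + 1 / L0l) / (x0 ^ 2 * L0l) ≤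
      1 / L + 1 / L ^ 2 - (5 + 1 / L) / (x ^ 2 * L) := by linarith
    have := mul_le_mul_of_nonneg_left hh ha
    apply mul_le_mul
    · linarith
    · linarith
    · exact add_nonneg zero_le_one (mul_nonneg ha hα)
    · linarith
  have hB : Q ≤ exB x L l a := by
    unfold exB; linarith
  have hD : x0 * (1 + τ + τ ^ 2 / 2) - U - υ * τ ≤ x - (L + a * l) := by
    have := mul_le_mul_of_nonneg_right hυ b1
    linarith
  have hDp : 0 < x0 * (1 + τ + τ ^ 2 / 2) - U - υ * τ := by
    have g1 := mul_nonneg (sub_nonneg.2 hD1) b1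
    have g2 := mul_nonneg hxp.le (sq_nonneg τ)
    have g3 : x0 * (1 + τ + τ ^ 2 / 2) - U - υ * τ =
      (x0 - U) + (x0 - υ) * τ + x0 * τ ^ 2 / 2 := by ring
    rw [g3]; linarith
  refine ⟨?_, by linarith⟩
  have hs0 : 0 ≤ L - 1 + a * (l - 1 / L) :=
    add_nonneg (by linarith) (mul_nonneg ha (by linarith))
  have hs : L - 1 + a * (l - 1 / L) ≤ S + σ * τ := by
    have := mul_le_mul_of_nonneg_right hσ b1
    linarith
  have hs2 : (L - 1 + a * (l - 1 / L)) ^ 2 ≤ (S + σ * τ) ^ 2 := by gcongr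
  have hk : (1 - 1 / x) * (L - 1 + a * (l - 1 / L)) ^ 2 ≤ κ * (S + σ * τ) ^ 2 := by
    apply mul_le_mul (by linarith) hs2 (sq_nonneg _)
    linarith
  have hDB : (x0 * (1 + τ + τ ^ 2 / 2) - U - υ * τ) * Q ≤ (x - (L + a * l)) * exB x L l a :=
    mul_le_mul hD hB hQ0 (by linarith)
  have hq := ex_quad_bern hT0 b1 (by linarith) H0 H1 H2
  have e : (Q * (x0 - U) - κ * S ^ 2) + (Q * (x0 - υ) - 2 * κ * S * σ) * τ +
      (Q * x0 / 2 - κ * σ ^ 2) * τ ^ 2 =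
      (x0 * (1 + τ + τ ^ 2 / 2) - U - υ * τ) * Q - κ * (S + σ * τ) ^ 2 := by ring
  rw [e] at hq
  unfold exK
  linarith

set_option maxHeartbeats 4000000 in
lemma exK_last {x x0 a L0l L0h l0l l0h Q U S σ υ : ℝ}
    (hx0 : 9 ≤ x0) (hx : x0 ≤ x) (ha : 0 ≤ a)
    (hL0l : L0l ≤ Real.log x0) (hL0h : Real.log x0 ≤ L0h) (hL0 : 2 ≤ L0l)
    (hl0l : l0l ≤ Real.log (Real.log x0)) (hl0 : 0.78 ≤ l0l)
    (hl0h : Real.log (Real.log x0) ≤ l0h)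
    (hQ0 : 0 ≤ Q)
    (hQ : Q ≤ (1 - 1 / x0) -
      ((1 + 1 / L0l + 1 / (l0l * L0l)) / (l0l * L0l) + 7 / x0 ^ 2))
    (hU : L0h + a * l0h ≤ U) (hυ : 1 + a / L0l ≤ υ)
    (hS : L0h - 1 + a * (l0h - 1 / L0h) ≤ S) (hσ : 1 + a * (1 / L0l + 1 / L0l ^ 2) ≤ σ)
    (hD0 : U < x0) (hD1 : υ ≤ x0)
    (H0 : 0 ≤ Q * (x0 - U) - S ^ 2)
    (H1 : 0 ≤ Q * (x0 - υ) - 2 * S * σ)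
    (H2 : 0 ≤ Q * x0 / 2 - σ ^ 2) :
    0 ≤ exK x (Real.log x) (Real.log (Real.log x)) a ∧
      0 < x - (Real.log x + a * Real.log (Real.log x)) := by
  obtain ⟨b1, b2, b3, b4⟩ :=
    ex_chunk_basic (by linarith) hx ha hL0l hL0h (by linarith) hl0h
  have hxp : 0 < x0 := by linarith
  have hxx : 0 < x := by linarith
  have c2 : Real.log (Real.log x0) ≤ Real.log (Real.log x) :=
    Real.log_le_log (by linarith) (by linarith)
  set t0 := Real.log x0 with ht0
  set L := Real.log x with hL
  set l := Real.log L with hl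
  set τ := L - t0 with hτ
  have d1 : L0l ≤ L := by linarith
  have d3 : l0l ≤ l := by linarith
  have hLp : 0 < L := by linarith
  have hL0p : 0 < L0l := by linarith
  have hlp : 0 < l := by linarith
  have hl0p : 0 < l0l := by linarith
  have i3 : 1 / L ≤ 1 / 2 := by gcongr; linarith
  have i3' : 0 < 1 / L := by positivity
  have i4 : 1 / x ^ 2 ≤ 1 / 9 ^ 2 := by gcongr; linarith
  have i4' : 0 < 1 / x ^ 2 := by positivity
  have i5 : 1 / x ≤ 1 / x0 := by gcongr
  have i8 : 1 / x0 < 1 := by rw [div_lt_one (by positivity)]; linarith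
  have f1 : 0 ≤ 1 / L + 1 / L ^ 2 - (5 + 1 / L) / (x ^ 2 * L) := by
    have e : 1 / L + 1 / L ^ 2 - (5 + 1 / L) / (x ^ 2 * L) =
      1 / L * (1 + 1 / L - (5 + 1 / L) * (1 / x ^ 2)) := by field_simp
    rw [e]
    apply mul_nonneg i3'.le
    nlinarith
  have f3 : 0 ≤ (1 - 1 / x ^ 2) * (l - 1 / L) - 2 * l / x ^ 2 := by
    have e : (1 - 1 / x ^ 2) * (l - 1 / L) - 2 * l / x ^ 2 =
      l - 1 / L - (3 * l - 1 / L) * (1 / x ^ 2) := by ring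
    rw [e]
    have : (3 * l - 1 / L) * (1 / x ^ 2) ≤ (3 * l - 1 / L) * (1 / 9 ^ 2) := by
      apply mul_le_mul_of_nonneg_left i4; linarith
    linarith
  have f4 : 0 ≤ (1 - 1 / x ^ 2) * l := mul_nonneg (by linarith) hlp.le
  have f5 : (1 + 1 / L + 1 / (l * L)) / (l * L) + 7 / x ^ 2 ≤
      (1 + 1 / L0l + 1 / (l0l * L0l)) / (l0l * L0l) + 7 / x0 ^ 2 := by gcongr
  have f5' : 0 ≤ (1 + 1 / L + 1 / (l * L)) / (l * L) + 7 / x ^ 2 := by positivity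
  have f6 : 0 ≤ (L + a * ((1 - 1 / x ^ 2) * l)) / x := by positivity
  have f7 : (1 - (L + a * ((1 - 1 / x ^ 2) * l)) / x) *
      ((1 + 1 / L + 1 / (l * L)) / (l * L) + 7 / x ^ 2) ≤
      1 * ((1 + 1 / L0l + 1 / (l0l * L0l)) / (l0l * L0l) + 7 / x0 ^ 2) := by
    apply mul_le_mul (by linarith) f5 f5' zero_le_one
  have f8 : 0 ≤
      2 * (L - 1 + a * ((1 - 1 / x ^ 2) * (l - 1 / L) - 2 * l / x ^ 2)) / x := by
    have : 0 ≤ L - 1 + a * ((1 - 1 / x ^ 2) * (l - 1 / L) - 2 * l / x ^ 2) :=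
      add_nonneg (by linarith) (mul_nonneg ha f3)
    positivity
  have f9 : (1 - 1 / x0) * 1 ≤
      (1 - 1 / x) * (1 + a * (1 / L + 1 / L ^ 2 - (5 + 1 / L) / (x ^ 2 * L))) := by
    have := mul_nonneg ha f1
    apply mul_le_mul <;> linarith
  have hB : Q ≤ exB x L l a := by
    unfold exB; linarith
  have hD : x0 * (1 + τ + τ ^ 2 / 2) - U - υ * τ ≤ x - (L + a * l) := by
    have := mul_le_mul_of_nonneg_right hυ b1
    linarith
  have hDp : 0 < x0 * (1 + τ + τ ^ 2 / 2) - U - υ * τ := by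
    have g1 := mul_nonneg (sub_nonneg.2 hD1) b1
    have g2 := mul_nonneg hxp.le (sq_nonneg τ)
    have g3 : x0 * (1 + τ + τ ^ 2 / 2) - U - υ * τ =
      (x0 - U) + (x0 - υ) * τ + x0 * τ ^ 2 / 2 := by ring
    rw [g3]; linarith
  refine ⟨?_, by linarith⟩
  have hs0 : 0 ≤ L - 1 + a * (l - 1 / L) :=
    add_nonneg (by linarith) (mul_nonneg ha (by linarith))
  have hs : L - 1 + a * (l - 1 / L) ≤ S + σ * τ := by
    have := mul_le_mul_of_nonneg_right hσ b1
    linarith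
  have hs2 : (L - 1 + a * (l - 1 / L)) ^ 2 ≤ (S + σ * τ) ^ 2 := by gcongr
  have hk : (1 - 1 / x) * (L - 1 + a * (l - 1 / L)) ^ 2 ≤ 1 * (S + σ * τ) ^ 2 := by
    have : 0 < 1 / x := by positivity
    apply mul_le_mul (by linarith) hs2 (sq_nonneg _) zero_le_one
  have hDB : (x0 * (1 + τ + τ ^ 2 / 2) - U - υ * τ) * Q ≤ (x - (L + a * l)) * exB x L l a :=
    mul_le_mul hD hB hQ0 (by linarith)
  have q1 := mul_nonneg H1 b1
  have q2 := mul_nonneg H2 (sq_nonneg τ)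
  have e : (Q * (x0 - U) - S ^ 2) + (Q * (x0 - υ) - 2 * S * σ) * τ +
      (Q * x0 / 2 - σ ^ 2) * τ ^ 2 =
      (x0 * (1 + τ + τ ^ 2 / 2) - U - υ * τ) * Q - 1 * (S + σ * τ) ^ 2 := by ring
  unfold exK
  linarith

/-- Concavity in `a` reduces `a ∈ [1,5]` to the end points. -/
lemma exK_of_ends {x L l a : ℝ} (hx : 9 ≤ x) (hL : 2 ≤ L) (hl : 0.78 ≤ l)
    (h1 : 1 ≤ a) (h5 : a ≤ 5) (K1 : 0 ≤ exK x L l 1) (K5 : 0 ≤ exK x L l 5) :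
    0 ≤ exK x L l a := by
  have hxx : 0 < x := by linarith
  have hLp : 0 < L := by linarith
  have hlp : 0 < l := by linarith
  have i3 : 1 / L ≤ 1 / 2 := by gcongr
  have i3' : 0 < 1 / L := by positivity
  have i4 : 1 / x ^ 2 ≤ 1 / 9 ^ 2 := by gcongr
  have i4' : 0 < 1 / x ^ 2 := by positivity
  have i5 : 1 / x ≤ 1 / 9 := by gcongr
  have f1 : 0 ≤ 1 / L + 1 / L ^ 2 - (5 + 1 / L) / (x ^ 2 * L) := by
    have e : 1 / L + 1 / L ^ 2 - (5 + 1 / L) / (x ^ 2 * L) =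
      1 / L * (1 + 1 / L - (5 + 1 / L) * (1 / x ^ 2)) := by field_simp
    rw [e]
    apply mul_nonneg i3'.le
    nlinarith
  have f3 : 0 ≤ (1 - 1 / x ^ 2) * (l - 1 / L) - 2 * l / x ^ 2 := by
    have e : (1 - 1 / x ^ 2) * (l - 1 / L) - 2 * l / x ^ 2 =
      l - 1 / L - (3 * l - 1 / L) * (1 / x ^ 2) := by ring
    rw [e]
    have : (3 * l - 1 / L) * (1 / x ^ 2) ≤ (3 * l - 1 / L) * (1 / 9 ^ 2) := by
      apply mul_le_mul_of_nonneg_left i4; linarith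
    linarith
  have f4 : 0 ≤ (1 - 1 / x ^ 2) * l := mul_nonneg (by linarith) hlp.le
  have f5' : 0 ≤ (1 + 1 / L + 1 / (l * L)) / (l * L) + 7 / x ^ 2 := by positivity
  unfold exK exB at *
  set α := 1 / L + 1 / L ^ 2 - (5 + 1 / L) / (x ^ 2 * L)
  set β := (1 - 1 / x ^ 2) * (l - 1 / L) - 2 * l / x ^ 2
  set γ := (1 - 1 / x ^ 2) * l
  set R := (1 + 1 / L + 1 / (l * L)) / (l * L) + 7 / x ^ 2
  set y := 1 / x with hy
  have hy0 : 0 < y := by positivity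
  have hc : 0 ≤ l * ((1 - y) * α + 2 * β * y + γ * y * R) + (1 - y) * (l - 1 / L) ^ 2 := by
    have : 0 ≤ 1 - y := by linarith
    positivity
  have hd : 0 ≤ (a - 1) * (5 - a) := mul_nonneg (by linarith) (by linarith)
  have key := mul_nonneg hc hd
  simp only [div_eq_mul_inv _ x] at *
  have hy' : x⁻¹ = y := by rw [hy, one_mul]
  rw [hy'] at *
  have k1 := mul_nonneg (sub_nonneg.2 h5) K1
  have k5 := mul_nonneg (sub_nonneg.2 h1) K5
  have hfin := add_nonneg (add_nonneg k1 k5) (mul_nonneg (by norm_num : (0:ℝ) ≤ 4) key)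
  have := div_nonneg hfin (by norm_num : (0:ℝ) ≤ 4)
  refine this.trans_eq ?_
  ring

lemma ex_pt_9 : ((109861/50000) ≤ Real.log 9 ∧ Real.log 9 ≤ (219723/100000)) ∧
    ((78717/100000) ≤ Real.log (Real.log 9) ∧ Real.log (Real.log 9) ≤ (78721/100000)) := by
  have h : Real.log 9 = 0 * Real.log 2 + 2 * Real.log 3 + 0 * Real.log 5 := by
    rw [show (9 : ℝ) = 2 ^ 0 * 3 ^ 2 * 5 ^ 0 by norm_num, Real.log_mul (by norm_num) (by norm_num),
      Real.log_mul (by norm_num) (by norm_num), Real.log_pow, Real.log_pow, Real.log_pow]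
    norm_num
  have := Real.log_two_gt_d9
  have := Real.log_two_lt_d9
  have := Real.log_three_gt_d9
  have := Real.log_three_lt_d9
  have := Real.log_five_gt_d9
  have := Real.log_five_lt_d9
  have hl : (109861/50000) ≤ Real.log 9 := by linarith
  have hh : Real.log 9 ≤ (219723/100000) := by linarith
  refine ⟨⟨hl, hh⟩, ?_, ?_⟩
  · exact ex_log_lo (x := (7489/20000)) (by norm_num) (by norm_num) (le_trans (by norm_num) hl)
      (by norm_num [Finset.sum_range_succ])
  · exact ex_log_hi (x := (18723/50000)) (by norm_num) (by norm_num) (by linarith)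
      (le_trans hh (by norm_num)) (by norm_num [Finset.sum_range_succ])

lemma ex_pt_10 : ((115129/50000) ≤ Real.log 10 ∧ Real.log 10 ≤ (230259/100000)) ∧
    ((41701/50000) ≤ Real.log (Real.log 10) ∧ Real.log (Real.log 10) ≤ (16681/20000)) := by
  have h : Real.log 10 = 1 * Real.log 2 + 0 * Real.log 3 + 1 * Real.log 5 := by
    rw [show (10 : ℝ) = 2 ^ 1 * 3 ^ 0 * 5 ^ 1 by norm_num, Real.log_mul (by norm_num) (by norm_num),
      Real.log_mul (by norm_num) (by norm_num), Real.log_pow, Real.log_pow, Real.log_pow]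
    norm_num
  have := Real.log_two_gt_d9
  have := Real.log_two_lt_d9
  have := Real.log_three_gt_d9
  have := Real.log_three_lt_d9
  have := Real.log_five_gt_d9
  have := Real.log_five_lt_d9
  have hl : (115129/50000) ≤ Real.log 10 := by linarith
  have hh : Real.log 10 ≤ (230259/100000) := by linarith
  refine ⟨⟨hl, hh⟩, ?_, ?_⟩
  · exact ex_log_lo (x := (39441/100000)) (by norm_num) (by norm_num) (le_trans (by norm_num) hl)
      (by norm_num [Finset.sum_range_succ])
  · exact ex_log_hi (x := (19721/50000)) (by norm_num) (by norm_num) (by linarith)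
      (le_trans hh (by norm_num)) (by norm_num [Finset.sum_range_succ])

lemma ex_pt_12 : ((24849/10000) ≤ Real.log 12 ∧ Real.log 12 ≤ (248491/100000)) ∧
    ((91021/100000) ≤ Real.log (Real.log 12) ∧ Real.log (Real.log 12) ≤ (3641/4000)) := by
  have h : Real.log 12 = 2 * Real.log 2 + 1 * Real.log 3 + 0 * Real.log 5 := by
    rw [show (12 : ℝ) = 2 ^ 2 * 3 ^ 1 * 5 ^ 0 by norm_num, Real.log_mul (by norm_num) (by norm_num),
      Real.log_mul (by norm_num) (by norm_num), Real.log_pow, Real.log_pow, Real.log_pow]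
    norm_num
  have := Real.log_two_gt_d9
  have := Real.log_two_lt_d9
  have := Real.log_three_gt_d9
  have := Real.log_three_lt_d9
  have := Real.log_five_gt_d9
  have := Real.log_five_lt_d9
  have hl : (24849/10000) ≤ Real.log 12 := by linarith
  have hh : Real.log 12 ≤ (248491/100000) := by linarith
  refine ⟨⟨hl, hh⟩, ?_, ?_⟩
  · exact ex_log_lo (x := (42609/100000)) (by norm_num) (by norm_num) (le_trans (by norm_num) hl)
      (by norm_num [Finset.sum_range_succ])
  · exact ex_log_hi (x := (4261/10000)) (by norm_num) (by norm_num) (by linarith)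
      (le_trans hh (by norm_num)) (by norm_num [Finset.sum_range_succ])

lemma ex_pt_15 : ((54161/20000) ≤ Real.log 15 ∧ Real.log 15 ≤ (135403/50000)) ∧
    ((49811/50000) ≤ Real.log (Real.log 15) ∧ Real.log (Real.log 15) ≤ (49813/50000)) := by
  have h : Real.log 15 = 0 * Real.log 2 + 1 * Real.log 3 + 1 * Real.log 5 := by
    rw [show (15 : ℝ) = 2 ^ 0 * 3 ^ 1 * 5 ^ 1 by norm_num, Real.log_mul (by norm_num) (by norm_num),
      Real.log_mul (by norm_num) (by norm_num), Real.log_pow, Real.log_pow, Real.log_pow]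
    norm_num
  have := Real.log_two_gt_d9
  have := Real.log_two_lt_d9
  have := Real.log_three_gt_d9
  have := Real.log_three_lt_d9
  have := Real.log_five_gt_d9
  have := Real.log_five_lt_d9
  have hl : (54161/20000) ≤ Real.log 15 := by linarith
  have hh : Real.log 15 ≤ (135403/50000) := by linarith
  refine ⟨⟨hl, hh⟩, ?_, ?_⟩
  · exact ex_log_lo (x := (46063/100000)) (by norm_num) (by norm_num) (le_trans (by norm_num) hl)
      (by norm_num [Finset.sum_range_succ])
  · exact ex_log_hi (x := (2879/6250)) (by norm_num) (by norm_num) (by linarith)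
      (le_trans hh (by norm_num)) (by norm_num [Finset.sum_range_succ])

lemma ex_pt_18 : ((289037/100000) ≤ Real.log 18 ∧ Real.log 18 ≤ (144519/50000)) ∧
    ((53069/50000) ≤ Real.log (Real.log 18) ∧ Real.log (Real.log 18) ≤ (106143/100000)) := by
  have h : Real.log 18 = 1 * Real.log 2 + 2 * Real.log 3 + 0 * Real.log 5 := by
    rw [show (18 : ℝ) = 2 ^ 1 * 3 ^ 2 * 5 ^ 0 by norm_num, Real.log_mul (by norm_num) (by norm_num),
      Real.log_mul (by norm_num) (by norm_num), Real.log_pow, Real.log_pow, Real.log_pow]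
    norm_num
  have := Real.log_two_gt_d9
  have := Real.log_two_lt_d9
  have := Real.log_three_gt_d9
  have := Real.log_three_lt_d9
  have := Real.log_five_gt_d9
  have := Real.log_five_lt_d9
  have hl : (289037/100000) ≤ Real.log 18 := by linarith
  have hh : Real.log 18 ≤ (144519/50000) := by linarith
  refine ⟨⟨hl, hh⟩, ?_, ?_⟩
  · exact ex_log_lo (x := (48591/100000)) (by norm_num) (by norm_num) (le_trans (by norm_num) hl)
      (by norm_num [Finset.sum_range_succ])
  · exact ex_log_hi (x := (3037/6250)) (by norm_num) (by norm_num) (by linarith)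
      (le_trans hh (by norm_num)) (by norm_num [Finset.sum_range_succ])

lemma ex_pt_24 : ((63561/20000) ≤ Real.log 24 ∧ Real.log 24 ≤ (158903/50000)) ∧
    ((14453/12500) ≤ Real.log (Real.log 24) ∧ Real.log (Real.log 24) ≤ (7227/6250)) := by
  have h : Real.log 24 = 3 * Real.log 2 + 1 * Real.log 3 + 0 * Real.log 5 := by
    rw [show (24 : ℝ) = 2 ^ 3 * 3 ^ 1 * 5 ^ 0 by norm_num, Real.log_mul (by norm_num) (by norm_num),
      Real.log_mul (by norm_num) (by norm_num), Real.log_pow, Real.log_pow, Real.log_pow]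
    norm_num
  have := Real.log_two_gt_d9
  have := Real.log_two_lt_d9
  have := Real.log_three_gt_d9
  have := Real.log_three_lt_d9
  have := Real.log_five_gt_d9
  have := Real.log_five_lt_d9
  have hl : (63561/20000) ≤ Real.log 24 := by linarith
  have hh : Real.log 24 ≤ (158903/50000) := by linarith
  refine ⟨⟨hl, hh⟩, ?_, ?_⟩
  · exact ex_log_lo (x := (5213/10000)) (by norm_num) (by norm_num) (le_trans (by norm_num) hl)
      (by norm_num [Finset.sum_range_succ])
  · exact ex_log_hi (x := (52131/100000)) (by norm_num) (by norm_num) (by linarith)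
      (le_trans hh (by norm_num)) (by norm_num [Finset.sum_range_succ])

lemma ex_pt_36 : ((358351/100000) ≤ Real.log 36 ∧ Real.log 36 ≤ (22397/6250)) ∧
    ((7977/6250) ≤ Real.log (Real.log 36) ∧ Real.log (Real.log 36) ≤ (127653/100000)) := by
  have h : Real.log 36 = 2 * Real.log 2 + 2 * Real.log 3 + 0 * Real.log 5 := by
    rw [show (36 : ℝ) = 2 ^ 2 * 3 ^ 2 * 5 ^ 0 by norm_num, Real.log_mul (by norm_num) (by norm_num),
      Real.log_mul (by norm_num) (by norm_num), Real.log_pow, Real.log_pow, Real.log_pow]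
    norm_num
  have := Real.log_two_gt_d9
  have := Real.log_two_lt_d9
  have := Real.log_three_gt_d9
  have := Real.log_three_lt_d9
  have := Real.log_five_gt_d9
  have := Real.log_five_lt_d9
  have hl : (358351/100000) ≤ Real.log 36 := by linarith
  have hh : Real.log 36 ≤ (22397/6250) := by linarith
  refine ⟨⟨hl, hh⟩, ?_, ?_⟩
  · exact ex_log_lo (x := (11273/20000)) (by norm_num) (by norm_num) (le_trans (by norm_num) hl)
      (by norm_num [Finset.sum_range_succ])
  · exact ex_log_hi (x := (28183/50000)) (by norm_num) (by norm_num) (by linarith)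
      (le_trans hh (by norm_num)) (by norm_num [Finset.sum_range_succ])

lemma ex_pt_72 : ((213833/50000) ≤ Real.log 72 ∧ Real.log 72 ≤ (427667/100000)) ∧
    ((14531/10000) ≤ Real.log (Real.log 72) ∧ Real.log (Real.log 72) ≤ (72707/50000)) := by
  have h : Real.log 72 = 3 * Real.log 2 + 2 * Real.log 3 + 0 * Real.log 5 := by
    rw [show (72 : ℝ) = 2 ^ 3 * 3 ^ 2 * 5 ^ 0 by norm_num, Real.log_mul (by norm_num) (by norm_num),
      Real.log_mul (by norm_num) (by norm_num), Real.log_pow, Real.log_pow, Real.log_pow]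
    norm_num
  have := Real.log_two_gt_d9
  have := Real.log_two_lt_d9
  have := Real.log_three_gt_d9
  have := Real.log_three_lt_d9
  have := Real.log_five_gt_d9
  have := Real.log_five_lt_d9
  have hl : (213833/50000) ≤ Real.log 72 := by linarith
  have hh : Real.log 72 ≤ (427667/100000) := by linarith
  refine ⟨⟨hl, hh⟩, ?_, ?_⟩
  · exact ex_log_lo (x := (62097/100000)) (by norm_num) (by norm_num) (le_trans (by norm_num) hl)
      (by norm_num [Finset.sum_range_succ])
  · exact ex_log_hi (x := (31049/50000)) (by norm_num) (by norm_num) (by linarith)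
      (le_trans hh (by norm_num)) (by norm_num [Finset.sum_range_succ])

lemma ex_pt_300 : ((285189/50000) ≤ Real.log 300 ∧ Real.log 300 ≤ (570379/100000)) ∧
    ((174061/100000) ≤ Real.log (Real.log 300) ∧ Real.log (Real.log 300) ≤ (8751/5000)) := by
  have h : Real.log 300 = 2 * Real.log 2 + 1 * Real.log 3 + 2 * Real.log 5 := by
    rw [show (300 : ℝ) = 2 ^ 2 * 3 ^ 1 * 5 ^ 2 by norm_num, Real.log_mul (by norm_num) (by norm_num),
      Real.log_mul (by norm_num) (by norm_num), Real.log_pow, Real.log_pow, Real.log_pow]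
    norm_num
  have := Real.log_two_gt_d9
  have := Real.log_two_lt_d9
  have := Real.log_three_gt_d9
  have := Real.log_three_lt_d9
  have := Real.log_five_gt_d9
  have := Real.log_five_lt_d9
  have hl : (285189/50000) ≤ Real.log 300 := by linarith
  have hh : Real.log 300 ≤ (570379/100000) := by linarith
  refine ⟨⟨hl, hh⟩, ?_, ?_⟩
  · exact ex_log_lo (x := (35083/50000)) (by norm_num) (by norm_num) (le_trans (by norm_num) hl)
      (by norm_num [Finset.sum_range_succ])
  · exact ex_log_hi (x := (70167/100000)) (by norm_num) (by norm_num) (by linarith)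
      (le_trans hh (by norm_num)) (by norm_num [Finset.sum_range_succ])

lemma exK_9_1 {x : ℝ} (h0 : 9 ≤ x) (h1 : x ≤ 10) :
    0 ≤ exK x (Real.log x) (Real.log (Real.log x)) 1 ∧
      0 < x - (Real.log x + 1 * Real.log (Real.log x)) := by
  obtain ⟨⟨p1, p2⟩, p3, p4⟩ := ex_pt_9
  obtain ⟨⟨q1, q2⟩, q3, q4⟩ := ex_pt_10
  exact exK_chunk (Q := (1037/1250)) (U := (5969/2000)) (S := (7647/5000)) (σ := (16623/10000)) (υ := (1819/1250))
    (κ := (9/10)) (T := (527/5000)) (by norm_num) h0 h1 (by norm_num) p1 p2 (by norm_num) q2 p3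
    (by norm_num) (by norm_num) p4 q4 (by norm_num) (by norm_num) (by norm_num) (by norm_num)
    (by norm_num) (by norm_num) (by norm_num) (by norm_num) (by norm_num) (by norm_num)
    (by norm_num) (by norm_num) (by norm_num) (by norm_num) (by norm_num) (by norm_num)
    (by norm_num)

lemma exK_9_5 {x : ℝ} (h0 : 9 ≤ x) (h1 : x ≤ 10) :
    0 ≤ exK x (Real.log x) (Real.log (Real.log x)) 5 ∧
      0 < x - (Real.log x + 5 * Real.log (Real.log x)) := by
  obtain ⟨⟨p1, p2⟩, p3, p4⟩ := ex_pt_9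
  obtain ⟨⟨q1, q2⟩, q3, q4⟩ := ex_pt_10
  exact exK_chunk (Q := (35737/10000)) (U := (61333/10000)) (S := (28577/10000)) (σ := (43113/10000)) (υ := (32757/10000))
    (κ := (9/10)) (T := (527/5000)) (by norm_num) h0 h1 (by norm_num) p1 p2 (by norm_num) q2 p3
    (by norm_num) (by norm_num) p4 q4 (by norm_num) (by norm_num) (by norm_num) (by norm_num)
    (by norm_num) (by norm_num) (by norm_num) (by norm_num) (by norm_num) (by norm_num)
    (by norm_num) (by norm_num) (by norm_num) (by norm_num) (by norm_num) (by norm_num)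
    (by norm_num)

lemma exK_10_1 {x : ℝ} (h0 : 10 ≤ x) (h1 : x ≤ 12) :
    0 ≤ exK x (Real.log x) (Real.log (Real.log x)) 1 ∧
      0 < x - (Real.log x + 1 * Real.log (Real.log x)) := by
  obtain ⟨⟨p1, p2⟩, p3, p4⟩ := ex_pt_10
  obtain ⟨⟨q1, q2⟩, q3, q4⟩ := ex_pt_12
  exact exK_chunk (Q := (8623/10000)) (U := (31367/10000)) (S := (1064/625)) (σ := (1623/1000)) (υ := (14343/10000))
    (κ := (9167/10000)) (T := (114/625)) (by norm_num) h0 h1 (by norm_num) p1 p2 (by norm_num) q2 p3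
    (by norm_num) (by norm_num) p4 q4 (by norm_num) (by norm_num) (by norm_num) (by norm_num)
    (by norm_num) (by norm_num) (by norm_num) (by norm_num) (by norm_num) (by norm_num)
    (by norm_num) (by norm_num) (by norm_num) (by norm_num) (by norm_num) (by norm_num)
    (by norm_num)

lemma exK_10_5 {x : ℝ} (h0 : 10 ≤ x) (h1 : x ≤ 12) :
    0 ≤ exK x (Real.log x) (Real.log (Real.log x)) 5 ∧
      0 < x - (Real.log x + 5 * Real.log (Real.log x)) := by
  obtain ⟨⟨p1, p2⟩, p3, p4⟩ := ex_pt_10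
  obtain ⟨⟨q1, q2⟩, q3, q4⟩ := ex_pt_12
  exact exK_chunk (Q := (16801/5000)) (U := (64729/10000)) (S := (16507/5000)) (σ := (20573/5000)) (υ := (6343/2000))
    (κ := (9167/10000)) (T := (114/625)) (by norm_num) h0 h1 (by norm_num) p1 p2 (by norm_num) q2 p3
    (by norm_num) (by norm_num) p4 q4 (by norm_num) (by norm_num) (by norm_num) (by norm_num)
    (by norm_num) (by norm_num) (by norm_num) (by norm_num) (by norm_num) (by norm_num)
    (by norm_num) (by norm_num) (by norm_num) (by norm_num) (by norm_num) (by norm_num)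
    (by norm_num)

lemma exK_12_1 {x : ℝ} (h0 : 12 ≤ x) (h1 : x ≤ 15) :
    0 ≤ exK x (Real.log x) (Real.log (Real.log x)) 1 ∧
      0 < x - (Real.log x + 1 * Real.log (Real.log x)) := by
  obtain ⟨⟨p1, p2⟩, p3, p4⟩ := ex_pt_12
  obtain ⟨⟨q1, q2⟩, q3, q4⟩ := ex_pt_15
  exact exK_chunk (Q := (9607/10000)) (U := (2122/625)) (S := (2491/1250)) (σ := (3911/2500)) (υ := (561/400))
    (κ := (4667/5000)) (T := (279/1250)) (by norm_num) h0 h1 (by norm_num) p1 p2 (by norm_num) q2 p3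
    (by norm_num) (by norm_num) p4 q4 (by norm_num) (by norm_num) (by norm_num) (by norm_num)
    (by norm_num) (by norm_num) (by norm_num) (by norm_num) (by norm_num) (by norm_num)
    (by norm_num) (by norm_num) (by norm_num) (by norm_num) (by norm_num) (by norm_num)
    (by norm_num)

lemma exK_12_5 {x : ℝ} (h0 : 12 ≤ x) (h1 : x ≤ 15) :
    0 ≤ exK x (Real.log x) (Real.log (Real.log x)) 5 ∧
      0 < x - (Real.log x + 5 * Real.log (Real.log x)) := by
  obtain ⟨⟨p1, p2⟩, p3, p4⟩ := ex_pt_12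
  obtain ⟨⟨q1, q2⟩, q3, q4⟩ := ex_pt_15
  exact exK_chunk (Q := (8073/2500)) (U := (35181/5000)) (S := (40241/10000)) (σ := (1911/500)) (υ := (15061/5000))
    (κ := (4667/5000)) (T := (279/1250)) (by norm_num) h0 h1 (by norm_num) p1 p2 (by norm_num) q2 p3
    (by norm_num) (by norm_num) p4 q4 (by norm_num) (by norm_num) (by norm_num) (by norm_num)
    (by norm_num) (by norm_num) (by norm_num) (by norm_num) (by norm_num) (by norm_num)
    (by norm_num) (by norm_num) (by norm_num) (by norm_num) (by norm_num) (by norm_num)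
    (by norm_num)

lemma exK_15_1 {x : ℝ} (h0 : 15 ≤ x) (h1 : x ≤ 18) :
    0 ≤ exK x (Real.log x) (Real.log (Real.log x)) 1 ∧
      0 < x - (Real.log x + 1 * Real.log (Real.log x)) := by
  obtain ⟨⟨p1, p2⟩, p3, p4⟩ := ex_pt_15
  obtain ⟨⟨q1, q2⟩, q3, q4⟩ := ex_pt_18
  exact exK_chunk (Q := (10807/10000)) (U := (9261/2500)) (S := (23351/10000)) (σ := (15057/10000)) (υ := (13693/10000))
    (κ := (1889/2000)) (T := (114/625)) (by norm_num) h0 h1 (by norm_num) p1 p2 (by norm_num) q2 p3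
    (by norm_num) (by norm_num) p4 q4 (by norm_num) (by norm_num) (by norm_num) (by norm_num)
    (by norm_num) (by norm_num) (by norm_num) (by norm_num) (by norm_num) (by norm_num)
    (by norm_num) (by norm_num) (by norm_num) (by norm_num) (by norm_num) (by norm_num)
    (by norm_num)

lemma exK_15_5 {x : ℝ} (h0 : 15 ≤ x) (h1 : x ≤ 18) :
    0 ≤ exK x (Real.log x) (Real.log (Real.log x)) 5 ∧
      0 < x - (Real.log x + 5 * Real.log (Real.log x)) := by
  obtain ⟨⟨p1, p2⟩, p3, p4⟩ := ex_pt_15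
  obtain ⟨⟨q1, q2⟩, q3, q4⟩ := ex_pt_18
  exact exK_chunk (Q := (6417/2000)) (U := (38447/5000)) (S := (48431/10000)) (σ := (17641/5000)) (υ := (1779/625))
    (κ := (1889/2000)) (T := (114/625)) (by norm_num) h0 h1 (by norm_num) p1 p2 (by norm_num) q2 p3
    (by norm_num) (by norm_num) p4 q4 (by norm_num) (by norm_num) (by norm_num) (by norm_num)
    (by norm_num) (by norm_num) (by norm_num) (by norm_num) (by norm_num) (by norm_num)
    (by norm_num) (by norm_num) (by norm_num) (by norm_num) (by norm_num) (by norm_num)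
    (by norm_num)

lemma exK_18_1 {x : ℝ} (h0 : 18 ≤ x) (h1 : x ≤ 24) :
    0 ≤ exK x (Real.log x) (Real.log (Real.log x)) 1 ∧
      0 < x - (Real.log x + 1 * Real.log (Real.log x)) := by
  obtain ⟨⟨p1, p2⟩, p3, p4⟩ := ex_pt_18
  obtain ⟨⟨q1, q2⟩, q3, q4⟩ := ex_pt_24
  exact exK_chunk (Q := (10727/10000)) (U := (39519/10000)) (S := (26059/10000)) (σ := (14657/10000)) (υ := (673/500))
    (κ := (599/625)) (T := (2877/10000)) (by norm_num) h0 h1 (by norm_num) p1 p2 (by norm_num) q2 p3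
    (by norm_num) (by norm_num) p4 q4 (by norm_num) (by norm_num) (by norm_num) (by norm_num)
    (by norm_num) (by norm_num) (by norm_num) (by norm_num) (by norm_num) (by norm_num)
    (by norm_num) (by norm_num) (by norm_num) (by norm_num) (by norm_num) (by norm_num)
    (by norm_num)

lemma exK_18_5 {x : ℝ} (h0 : 18 ≤ x) (h1 : x ≤ 24) :
    0 ≤ exK x (Real.log x) (Real.log (Real.log x)) 5 ∧
      0 < x - (Real.log x + 5 * Real.log (Real.log x)) := by
  obtain ⟨⟨p1, p2⟩, p3, p4⟩ := ex_pt_18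
  obtain ⟨⟨q1, q2⟩, q3, q4⟩ := ex_pt_24
  exact exK_chunk (Q := (29491/10000)) (U := (10247/1250)) (S := (54677/10000)) (σ := (8321/2500)) (υ := (27299/10000))
    (κ := (599/625)) (T := (2877/10000)) (by norm_num) h0 h1 (by norm_num) p1 p2 (by norm_num) q2 p3
    (by norm_num) (by norm_num) p4 q4 (by norm_num) (by norm_num) (by norm_num) (by norm_num)
    (by norm_num) (by norm_num) (by norm_num) (by norm_num) (by norm_num) (by norm_num)
    (by norm_num) (by norm_num) (by norm_num) (by norm_num) (by norm_num) (by norm_num)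
    (by norm_num)

lemma exK_24_1 {x : ℝ} (h0 : 24 ≤ x) (h1 : x ≤ 36) :
    0 ≤ exK x (Real.log x) (Real.log (Real.log x)) 1 ∧
      0 < x - (Real.log x + 1 * Real.log (Real.log x)) := by
  obtain ⟨⟨p1, p2⟩, p3, p4⟩ := ex_pt_24
  obtain ⟨⟨q1, q2⟩, q3, q4⟩ := ex_pt_36
  exact exK_chunk (Q := (1343/1250)) (U := (2709/625)) (S := (15099/5000)) (σ := (14137/10000)) (υ := (13147/10000))
    (κ := (9723/10000)) (T := (811/2000)) (by norm_num) h0 h1 (by norm_num) p1 p2 (by norm_num) q2 p3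
    (by norm_num) (by norm_num) p4 q4 (by norm_num) (by norm_num) (by norm_num) (by norm_num)
    (by norm_num) (by norm_num) (by norm_num) (by norm_num) (by norm_num) (by norm_num)
    (by norm_num) (by norm_num) (by norm_num) (by norm_num) (by norm_num) (by norm_num)
    (by norm_num)

lemma exK_24_5 {x : ℝ} (h0 : 24 ≤ x) (h1 : x ≤ 36) :
    0 ≤ exK x (Real.log x) (Real.log (Real.log x)) 5 ∧
      0 < x - (Real.log x + 5 * Real.log (Real.log x)) := by
  obtain ⟨⟨p1, p2⟩, p3, p4⟩ := ex_pt_24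
  obtain ⟨⟨q1, q2⟩, q3, q4⟩ := ex_pt_36
  exact exK_chunk (Q := (13371/5000)) (U := (89597/10000)) (S := (7983/1250)) (σ := (7671/2500)) (υ := (25733/10000))
    (κ := (9723/10000)) (T := (811/2000)) (by norm_num) h0 h1 (by norm_num) p1 p2 (by norm_num) q2 p3
    (by norm_num) (by norm_num) p4 q4 (by norm_num) (by norm_num) (by norm_num) (by norm_num)
    (by norm_num) (by norm_num) (by norm_num) (by norm_num) (by norm_num) (by norm_num)
    (by norm_num) (by norm_num) (by norm_num) (by norm_num) (by norm_num) (by norm_num)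
    (by norm_num)

lemma exK_36_1 {x : ℝ} (h0 : 36 ≤ x) (h1 : x ≤ 72) :
    0 ≤ exK x (Real.log x) (Real.log (Real.log x)) 1 ∧
      0 < x - (Real.log x + 1 * Real.log (Real.log x)) := by
  obtain ⟨⟨p1, p2⟩, p3, p4⟩ := ex_pt_36
  obtain ⟨⟨q1, q2⟩, q3, q4⟩ := ex_pt_72
  exact exK_chunk (Q := (2081/2000)) (U := (48601/10000)) (S := (3581/1000)) (σ := (1357/1000)) (υ := (12791/10000))
    (κ := (4931/5000)) (T := (1733/2500)) (by norm_num) h0 h1 (by norm_num) p1 p2 (by norm_num) q2 p3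
    (by norm_num) (by norm_num) p4 q4 (by norm_num) (by norm_num) (by norm_num) (by norm_num)
    (by norm_num) (by norm_num) (by norm_num) (by norm_num) (by norm_num) (by norm_num)
    (by norm_num) (by norm_num) (by norm_num) (by norm_num) (by norm_num) (by norm_num)
    (by norm_num)

lemma exK_36_5 {x : ℝ} (h0 : 36 ≤ x) (h1 : x ≤ 72) :
    0 ≤ exK x (Real.log x) (Real.log (Real.log x)) 5 ∧
      0 < x - (Real.log x + 5 * Real.log (Real.log x)) := by
  obtain ⟨⟨p1, p2⟩, p3, p4⟩ := ex_pt_36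
  obtain ⟨⟨q1, q2⟩, q3, q4⟩ := ex_pt_72
  exact exK_chunk (Q := (22921/10000)) (U := (49831/5000)) (S := (75709/10000)) (σ := (27847/10000)) (υ := (23953/10000))
    (κ := (4931/5000)) (T := (1733/2500)) (by norm_num) h0 h1 (by norm_num) p1 p2 (by norm_num) q2 p3
    (by norm_num) (by norm_num) p4 q4 (by norm_num) (by norm_num) (by norm_num) (by norm_num)
    (by norm_num) (by norm_num) (by norm_num) (by norm_num) (by norm_num) (by norm_num)
    (by norm_num) (by norm_num) (by norm_num) (by norm_num) (by norm_num) (by norm_num)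
    (by norm_num)

lemma exK_72_1 {x : ℝ} (h0 : 72 ≤ x) (h1 : x ≤ 300) :
    0 ≤ exK x (Real.log x) (Real.log (Real.log x)) 1 ∧
      0 < x - (Real.log x + 1 * Real.log (Real.log x)) := by
  obtain ⟨⟨p1, p2⟩, p3, p4⟩ := ex_pt_72
  obtain ⟨⟨q1, q2⟩, q3, q4⟩ := ex_pt_300
  exact exK_chunk (Q := (399/400)) (U := (57309/10000)) (S := (4497/1000)) (σ := (6443/5000)) (υ := (12339/10000))
    (κ := (9967/10000)) (T := (892/625)) (by norm_num) h0 h1 (by norm_num) p1 p2 (by norm_num) q2 p3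
    (by norm_num) (by norm_num) p4 q4 (by norm_num) (by norm_num) (by norm_num) (by norm_num)
    (by norm_num) (by norm_num) (by norm_num) (by norm_num) (by norm_num) (by norm_num)
    (by norm_num) (by norm_num) (by norm_num) (by norm_num) (by norm_num) (by norm_num)
    (by norm_num)

lemma exK_72_5 {x : ℝ} (h0 : 72 ≤ x) (h1 : x ≤ 300) :
    0 ≤ exK x (Real.log x) (Real.log (Real.log x)) 5 ∧
      0 < x - (Real.log x + 5 * Real.log (Real.log x)) := by
  obtain ⟨⟨p1, p2⟩, p3, p4⟩ := ex_pt_72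
  obtain ⟨⟨q1, q2⟩, q3, q4⟩ := ex_pt_300
  exact exK_chunk (Q := (9231/5000)) (U := (57737/5000)) (S := (93783/10000)) (σ := (12213/5000)) (υ := (5423/2500))
    (κ := (9967/10000)) (T := (892/625)) (by norm_num) h0 h1 (by norm_num) p1 p2 (by norm_num) q2 p3
    (by norm_num) (by norm_num) p4 q4 (by norm_num) (by norm_num) (by norm_num) (by norm_num)
    (by norm_num) (by norm_num) (by norm_num) (by norm_num) (by norm_num) (by norm_num)
    (by norm_num) (by norm_num) (by norm_num) (by norm_num) (by norm_num) (by norm_num)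
    (by norm_num)

lemma exK_300_1 {x : ℝ} (h0 : 300 ≤ x) :
    0 ≤ exK x (Real.log x) (Real.log (Real.log x)) 1 ∧
      0 < x - (Real.log x + 1 * Real.log (Real.log x)) := by
  obtain ⟨⟨p1, p2⟩, p3, p4⟩ := ex_pt_300
  exact exK_last (Q := (217/250)) (U := (3727/500)) (S := (62787/10000)) (σ := (12061/10000)) (υ := (5877/5000))
    (by norm_num) h0 (by norm_num) p1 p2 (by norm_num) p3
    (by norm_num) p4 (by norm_num) (by norm_num) (by norm_num) (by norm_num)
    (by norm_num) (by norm_num) (by norm_num) (by norm_num) (by norm_num) (by norm_num)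
    (by norm_num)

lemma exK_300_5 {x : ℝ} (h0 : 300 ≤ x) :
    0 ≤ exK x (Real.log x) (Real.log (Real.log x)) 5 ∧
      0 < x - (Real.log x + 5 * Real.log (Real.log x)) := by
  obtain ⟨⟨p1, p2⟩, p3, p4⟩ := ex_pt_300
  exact exK_last (Q := (217/250)) (U := (36137/2500)) (S := (62891/5000)) (σ := (1269/625)) (υ := (18767/10000))
    (by norm_num) h0 (by norm_num) p1 p2 (by norm_num) p3
    (by norm_num) p4 (by norm_num) (by norm_num) (by norm_num) (by norm_num)
    (by norm_num) (by norm_num) (by norm_num) (by norm_num) (by norm_num) (by norm_num)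
    (by norm_num)

lemma exK_all_1 {x : ℝ} (h0 : 9 ≤ x) :
    0 ≤ exK x (Real.log x) (Real.log (Real.log x)) 1 ∧
      0 < x - (Real.log x + 1 * Real.log (Real.log x)) := by
  rcases le_total x 10 with h | h0
  · exact exK_9_1 h0 h
  rcases le_total x 12 with h | h0
  · exact exK_10_1 h0 h
  rcases le_total x 15 with h | h0
  · exact exK_12_1 h0 h
  rcases le_total x 18 with h | h0
  · exact exK_15_1 h0 h
  rcases le_total x 24 with h | h0
  · exact exK_18_1 h0 h
  rcases le_total x 36 with h | h0
  · exact exK_24_1 h0 h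
  rcases le_total x 72 with h | h0
  · exact exK_36_1 h0 h
  rcases le_total x 300 with h | h0
  · exact exK_72_1 h0 h
  exact exK_300_1 h0

lemma exK_all_5 {x : ℝ} (h0 : 9 ≤ x) :
    0 ≤ exK x (Real.log x) (Real.log (Real.log x)) 5 ∧
      0 < x - (Real.log x + 5 * Real.log (Real.log x)) := by
  rcases le_total x 10 with h | h0
  · exact exK_9_5 h0 h
  rcases le_total x 12 with h | h0
  · exact exK_10_5 h0 h
  rcases le_total x 15 with h | h0
  · exact exK_12_5 h0 h
  rcases le_total x 18 with h | h0
  · exact exK_15_5 h0 h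
  rcases le_total x 24 with h | h0
  · exact exK_18_5 h0 h
  rcases le_total x 36 with h | h0
  · exact exK_24_5 h0 h
  rcases le_total x 72 with h | h0
  · exact exK_36_5 h0 h
  rcases le_total x 300 with h | h0
  · exact exK_72_5 h0 h
  exact exK_300_5 h0

lemma ex_log_nine {x : ℝ} (h0 : 9 ≤ x) : 2.19 ≤ Real.log x ∧ 0.78 ≤ Real.log (Real.log x) := by
  obtain ⟨⟨p1, p2⟩, p3, p4⟩ := ex_pt_9
  have h1 : Real.log 9 ≤ Real.log x := Real.log_le_log (by norm_num) h0
  have h2 : Real.log (Real.log 9) ≤ Real.log (Real.log x) :=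
    Real.log_le_log (by linarith) h1
  constructor
  · exact le_trans (by norm_num) (p1.trans h1)
  · exact le_trans (by norm_num) (p3.trans h2)

lemma exK_nonneg {x a : ℝ} (hx : 9 ≤ x) (h1 : 1 ≤ a) (h5 : a ≤ 5) :
    0 ≤ exK x (Real.log x) (Real.log (Real.log x)) a ∧
      0 < x - (Real.log x + a * Real.log (Real.log x)) := by
  obtain ⟨p1, p2⟩ := ex_log_nine hx
  obtain ⟨k1, _⟩ := exK_all_1 hx
  obtain ⟨k5, d5⟩ := exK_all_5 hx
  refine ⟨exK_of_ends hx (by linarith) p2 h1 h5 k1 k5, ?_⟩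
  have := mul_le_mul_of_nonneg_right h5 (by linarith : 0 ≤ Real.log (Real.log x))
  linarith


lemma ex_curvC {x C C1 C2 : ℝ} (hx : 9 ≤ x) (hCl : 0 < C) (hC : 1 - 1 / x ^ 2 ≤ C) (hC1 : 0 ≤ C1)
    (hC1' : C1 ≤ 2 / x ^ 3) (hC2 : -(6 / x ^ 4) ≤ C2) :
    -(7 / x ^ 4) ≤ (C2 * C - C1 ^ 2) / C ^ 2 := by
    have hxx : 0 < x := by linarith
    have hC9 : 80 / 81 ≤ C := by
      have : 1 / x ^ 2 ≤ 1 / 9 ^ 2 := by gcongr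
      linarith
    have h1 : C1 ^ 2 ≤ (2 / x ^ 3) ^ 2 := by gcongr
    have h2 : (2 / x ^ 3) ^ 2 = 4 * (1 / x ^ 4) * (1 / x ^ 2) := by field_simp; ring
    have h3 : 1 / x ^ 2 ≤ 1 / 9 ^ 2 := by gcongr
    have hp : 0 < 1 / x ^ 4 := by positivity
    have h4 : 4 * (1 / x ^ 4) * (1 / x ^ 2) ≤ 4 * (1 / x ^ 4) * (1 / 9 ^ 2) := by gcongr
    have h5 : -(6 / x ^ 4) * C ≤ C2 * C := mul_le_mul_of_nonneg_right hC2 hCl.le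
    rw [le_div_iff₀ (by positivity)]
    have e6 : -(6 / x ^ 4) * C = -(6 * (1 / x ^ 4) * C) := by ring
    have e7 : -(7 / x ^ 4) * C ^ 2 = -(7 * (1 / x ^ 4) * C ^ 2) := by ring
    rw [e6] at h5; rw [e7]
    have h8 : 0 ≤ (1 / x ^ 4) * (7 * C ^ 2 - 6 * C - 4 / 81) := by
      apply mul_nonneg hp.le
      nlinarith [mul_nonneg (sub_nonneg.2 hC9) hCl.le]
    have e9 : (1 / x ^ 4) * (7 * C ^ 2 - 6 * C - 4 / 81) =
      7 * (1 / x ^ 4) * C ^ 2 - 6 * (1 / x ^ 4) * C - 4 / 81 * (1 / x ^ 4) := by ring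
    linarith

set_option maxHeartbeats 2000000 in
/-- The algebraic core: the second logarithmic derivative is nonnegative. -/
lemma ex_phi2_alg {x L l C C1 C2 a u u1 u2 w w1 w2 : ℝ} (hx : 9 ≤ x) (hL : 2.19 ≤ L)
    (hl : 0.78 ≤ l) (ha : 0 ≤ a) (hC : 1 - 1 / x ^ 2 ≤ C) (hC' : C ≤ 1) (hC1 : 0 ≤ C1)
    (hC1' : C1 ≤ 2 / x ^ 3) (hC2 : -(6 / x ^ 4) ≤ C2) (hC2' : C2 ≤ 0)
    (hD : 0 < x - (L + a * l)) (hK : 0 ≤ exK x L l a)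
    (hu : u = L + a * (C * l)) (hu1 : u1 = 1 / x + a * (C1 * l + C / (x * L)))
    (hu2 : u2 = -(1 / x ^ 2) + a * (C2 * l + 2 * C1 / (x * L) -
      C * (1 / (x ^ 2 * L) + 1 / (x ^ 2 * L ^ 2))))
    (hw : w = 1 - u / x) (hw1 : w1 = (u - x * u1) / x ^ 2)
    (hw2 : w2 = -(u2 / x) - 2 * (u - x * u1) / x ^ 3) :
    0 ≤ -((L * l + l + 1) / (x * L * l) ^ 2) + (C2 * C - C1 ^ 2) / C ^ 2 + 2 * w1 / w +
      (x - 1) * (w2 * w - w1 ^ 2) / w ^ 2 := by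
  have hxx : 0 < x := by linarith
  have hLp : 0 < L := by linarith
  have hlp : 0 < l := by linarith
  have hCl : 0 < C := by
    have : 1 / x ^ 2 ≤ 1 / 9 ^ 2 := by gcongr
    linarith
  have iL : 1 / L ≤ 1 / 2 := by gcongr; linarith
  have iL' : 0 < 1 / L := by positivity
  have hlL : 0 ≤ l - 1 / L := by norm_num at *; linarith
  set y := 1 / x with hy
  have hyp : 0 < y := by positivity
  have hy9 : y ≤ 1 / 9 := by rw [hy]; gcongr
  -- s
  obtain ⟨s, hs⟩ : ∃ s, s = u - x * u1 := ⟨_, rfl⟩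
  obtain ⟨U2, hU2⟩ : ∃ U2, U2 = -(x ^ 2 * u2) := ⟨_, rfl⟩
  have es : s = L - 1 + a * (C * (l - 1 / L) - x * C1 * l) := by
    rw [hs, hu, hu1]; rw [hy]; field_simp; ring
  have eU : U2 = 1 + a * (-(x ^ 2 * C2 * l) - 2 * (x * C1) / L + C * (1 / L + 1 / L ^ 2)) := by
    rw [hU2, hu2]; field_simp; ring
  have hxC : x * C1 ≤ 2 / x ^ 2 := by
    have := mul_le_mul_of_nonneg_left hC1' hxx.le
    have e : x * (2 / x ^ 3) = 2 / x ^ 2 := by field_simp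
    linarith
  have hxC0 : 0 ≤ x * C1 := by positivity
  have s_hi : s ≤ L - 1 + a * (l - 1 / L) := by
    rw [es]
    have h1 : C * (l - 1 / L) ≤ 1 * (l - 1 / L) := mul_le_mul_of_nonneg_right hC' hlL
    have h2 : 0 ≤ x * C1 * l := by positivity
    have := mul_le_mul_of_nonneg_left (by linarith : C * (l - 1 / L) - x * C1 * l ≤ l - 1 / L) ha
    linarith
  have s_lo : L - 1 + a * ((1 - 1 / x ^ 2) * (l - 1 / L) - 2 * l / x ^ 2) ≤ s := by
    rw [es]
    have h1 := mul_le_mul_of_nonneg_right hC hlL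
    have h2 := mul_le_mul_of_nonneg_right hxC hlp.le
    have e : 2 / x ^ 2 * l = 2 * l / x ^ 2 := by ring
    have := mul_le_mul_of_nonneg_left (by linarith :
      (1 - 1 / x ^ 2) * (l - 1 / L) - 2 * l / x ^ 2 ≤ C * (l - 1 / L) - x * C1 * l) ha
    linarith
  have U2_lo : 1 + a * (1 / L + 1 / L ^ 2 - (5 + 1 / L) / (x ^ 2 * L)) ≤ U2 := by
    rw [eU]
    have h1 : 0 ≤ -(x ^ 2 * C2 * l) := by
      have : 0 ≤ x ^ 2 * (-C2) * l := mul_nonneg (mul_nonneg (by positivity) (by linarith)) hlp.le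
      linarith
    have h2 : 2 * (x * C1) / L ≤ 2 * (2 / x ^ 2) / L := by gcongr
    have h3 : (1 - 1 / x ^ 2) * (1 / L + 1 / L ^ 2) ≤ C * (1 / L + 1 / L ^ 2) := by gcongr
    have e : (1 - 1 / x ^ 2) * (1 / L + 1 / L ^ 2) - 2 * (2 / x ^ 2) / L =
      1 / L + 1 / L ^ 2 - (5 + 1 / L) / (x ^ 2 * L) := by field_simp; ring
    have := mul_le_mul_of_nonneg_left (by linarith :
      1 / L + 1 / L ^ 2 - (5 + 1 / L) / (x ^ 2 * L) ≤
      -(x ^ 2 * C2 * l) - 2 * (x * C1) / L + C * (1 / L + 1 / L ^ 2)) ha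
    linarith
  have u_hi : u ≤ L + a * l := by
    have := mul_le_mul_of_nonneg_left (mul_le_mul_of_nonneg_right hC' hlp.le) ha
    rw [hu]; linarith
  have u_lo : L + a * ((1 - 1 / x ^ 2) * l) ≤ u := by
    have := mul_le_mul_of_nonneg_left (mul_le_mul_of_nonneg_right hC hlp.le) ha
    rw [hu]; linarith
  have hxu : 0 < x - u := by linarith
  have hwx : w = (x - u) / x := by rw [hw]; field_simp
  have hwp : 0 < w := by rw [hwx]; positivity
  -- s ≥ 0
  have hs0 : 0 ≤ s := by
    refine le_trans ?_ s_lo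
    have i4 : 1 / x ^ 2 ≤ 1 / 9 ^ 2 := by gcongr
    have f3 : 0 ≤ (1 - 1 / x ^ 2) * (l - 1 / L) - 2 * l / x ^ 2 := by
      have e : (1 - 1 / x ^ 2) * (l - 1 / L) - 2 * l / x ^ 2 =
        l - 1 / L - (3 * l - 1 / L) * (1 / x ^ 2) := by ring
      rw [e]
      have : (3 * l - 1 / L) * (1 / x ^ 2) ≤ (3 * l - 1 / L) * (1 / 9 ^ 2) := by
        apply mul_le_mul_of_nonneg_left i4; linarith
      linarith
    exact add_nonneg (by linarith) (mul_nonneg ha f3)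
  -- curvature of C
  have hCC : -(7 / x ^ 4) ≤ (C2 * C - C1 ^ 2) / C ^ 2 := ex_curvC hx hCl hC hC1 hC1' hC2
  have key : x ^ 2 * w * (-((L * l + l + 1) / (x * L * l) ^ 2) + (C2 * C - C1 ^ 2) / C ^ 2 +
      2 * w1 / w + (x - 1) * (w2 * w - w1 ^ 2) / w ^ 2) =
      w * (-((1 + 1 / L + 1 / (l * L)) / (l * L)) + x ^ 2 * ((C2 * C - C1 ^ 2) / C ^ 2)) +
      ((1 - y) * U2 + 2 * s / x - (1 - y) * s ^ 2 / (x - u)) := by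
    have ew2 : w2 = U2 / x ^ 3 - 2 * s / x ^ 3 := by
      rw [hw2, hU2, hs]; field_simp
    have exu : x - u = x * w := by rw [hwx]; field_simp
    rw [hw1, ew2, ← hs, exu, hy]
    generalize (C2 * C - C1 ^ 2) / C ^ 2 = Z
    clear_value y
    clear * - hxx hLp hlp hwp
    field_simp
    ring
  have hpos : 0 < x ^ 2 * w := by positivity
  refine nonneg_of_mul_nonneg_right ?_ hpos
  rw [key]
  have g1 : -(7 / x ^ 2) ≤ x ^ 2 * ((C2 * C - C1 ^ 2) / C ^ 2) := by
    have := mul_le_mul_of_nonneg_left hCC (by positivity : 0 ≤ x ^ 2)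
    have e : x ^ 2 * -(7 / x ^ 4) = -(7 / x ^ 2) := by field_simp
    linarith
  have hR : 0 ≤ (1 + 1 / L + 1 / (l * L)) / (l * L) + 7 / x ^ 2 := by positivity
  have w_hi : w ≤ 1 - (L + a * ((1 - 1 / x ^ 2) * l)) / x := by
    rw [hw]
    have : (L + a * ((1 - 1 / x ^ 2) * l)) / x ≤ u / x := by gcongr
    linarith
  have g2 := mul_le_mul_of_nonneg_right w_hi hR
  have g3 : w * -((1 + 1 / L + 1 / (l * L)) / (l * L) + 7 / x ^ 2) ≤
      w * (-((1 + 1 / L + 1 / (l * L)) / (l * L)) + x ^ 2 * ((C2 * C - C1 ^ 2) / C ^ 2)) :=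
    mul_le_mul_of_nonneg_left (by linarith) hwp.le
  have g4 : (1 - y) * (1 + a * (1 / L + 1 / L ^ 2 - (5 + 1 / L) / (x ^ 2 * L))) ≤ (1 - y) * U2 :=
    mul_le_mul_of_nonneg_left U2_lo (by linarith)
  have g5 : 2 * (L - 1 + a * ((1 - 1 / x ^ 2) * (l - 1 / L) - 2 * l / x ^ 2)) / x ≤ 2 * s / x := by
    apply div_le_div_of_nonneg_right _ hxx.le; linarith
  have g6 : (1 - y) * s ^ 2 / (x - u) ≤
      (1 - y) * (L - 1 + a * (l - 1 / L)) ^ 2 / (x - (L + a * l)) := by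
    have h1 : s ^ 2 ≤ (L - 1 + a * (l - 1 / L)) ^ 2 := by gcongr
    have h2 := mul_le_mul_of_nonneg_left h1 (by linarith : 0 ≤ 1 - y)
    exact div_le_div₀ (mul_nonneg (by linarith) (sq_nonneg _)) h2 hD (by linarith)
  have g7 : (1 - y) * (L - 1 + a * (l - 1 / L)) ^ 2 / (x - (L + a * l)) ≤ exB x L l a := by
    rw [div_le_iff₀ hD]
    unfold exK at hK
    rw [← hy] at hK
    linarith
  unfold exB at g7
  rw [← hy] at g7
  linarith


noncomputable def exC (x : ℝ) : ℝ := Real.cos (1 / x) ^ 2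
noncomputable def exC1 (x : ℝ) : ℝ := Real.sin (2 / x) / x ^ 2
noncomputable def exC2 (x : ℝ) : ℝ := -(2 * Real.cos (2 / x) / x ^ 4) - 2 * Real.sin (2 / x) / x ^ 3

lemma ex_inv_deriv (c : ℝ) {x : ℝ} (hx : x ≠ 0) : HasDerivAt (fun x : ℝ => c / x) (-(c / x ^ 2)) x := by
  have := (hasDerivAt_inv hx).const_mul c
  refine (this.congr_deriv ?_).congr_of_eventuallyEq ?_
  · field_simp
  · exact Eventually.of_forall fun y => by simp [div_eq_mul_inv]

lemma exC_deriv {x : ℝ} (hx : x ≠ 0) : HasDerivAt exC (exC1 x) x := by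
  have h := ((ex_inv_deriv 1 hx).cos).pow 2
  refine (h.congr_deriv ?_)
  unfold exC1
  rw [show (2 : ℝ) / x = 2 * (1 / x) by ring, Real.sin_two_mul]
  simp; field_simp

lemma exC1_deriv {x : ℝ} (hx : x ≠ 0) : HasDerivAt exC1 (exC2 x) x := by
  have h := ((ex_inv_deriv 2 hx).sin).div ((hasDerivAt_id x).pow 2) (by simpa using hx)
  refine (h.congr_deriv ?_)
  unfold exC2
  simp; field_simp

lemma exC_bounds {x : ℝ} (hx : 9 ≤ x) : 1 - 1 / x ^ 2 ≤ exC x ∧ exC x ≤ 1 ∧ 0 ≤ exC1 x ∧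
    exC1 x ≤ 2 / x ^ 3 ∧ -(6 / x ^ 4) ≤ exC2 x ∧ exC2 x ≤ 0 := by
  have hxx : 0 < x := by linarith
  have h2 : 0 < 2 / x := by positivity
  have h2' : 2 / x ≤ 2 / 9 := by gcongr
  have s0 : 0 ≤ Real.sin (2 / x) :=
    Real.sin_nonneg_of_nonneg_of_le_pi h2.le (by linarith [Real.pi_gt_three])
  have s1 : Real.sin (2 / x) ≤ 2 / x := Real.sin_le h2.le
  have c0 : 0 ≤ Real.cos (2 / x) :=
    Real.cos_nonneg_of_neg_pi_div_two_le_of_le (by linarith [Real.pi_gt_three])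
      (by linarith [Real.pi_gt_three])
  have c1 := Real.cos_le_one (2 / x)
  refine ⟨?_, ?_, ?_, ?_, ?_, ?_⟩
  · have h3 : Real.sin (1 / x) ^ 2 ≤ (1 / x) ^ 2 := by
      rw [sq_le_sq]; exact Real.abs_sin_le_abs
    have := Real.sin_sq_add_cos_sq (1 / x)
    unfold exC
    rw [one_div_pow] at h3
    linarith
  · exact Real.cos_sq_le_one _
  · unfold exC1; positivity
  · unfold exC1
    have : Real.sin (2 / x) / x ^ 2 ≤ (2 / x) / x ^ 2 := by gcongr
    refine this.trans_eq ?_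
    field_simp
  · unfold exC2
    have e1 : 2 * Real.sin (2 / x) / x ^ 3 ≤ 2 * (2 / x) / x ^ 3 := by gcongr
    have e2 : 2 * Real.cos (2 / x) / x ^ 4 ≤ 2 * 1 / x ^ 4 := by gcongr
    have e3 : 2 * (2 / x) / x ^ 3 = 4 * (1 / x ^ 4) := by field_simp; norm_num
    have e4 : 2 * 1 / x ^ 4 = 2 * (1 / x ^ 4) := by ring
    have e5 : 6 / x ^ 4 = 6 * (1 / x ^ 4) := by ring
    linarith
  · unfold exC2
    have : 0 ≤ 2 * Real.cos (2 / x) / x ^ 4 := by positivity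
    have : 0 ≤ 2 * Real.sin (2 / x) / x ^ 3 := by positivity
    linarith

noncomputable def exU (a x : ℝ) : ℝ := Real.log x + a * (exC x * Real.log (Real.log x))
noncomputable def exU1 (a x : ℝ) : ℝ :=
  1 / x + a * (exC1 x * Real.log (Real.log x) + exC x / (x * Real.log x))
noncomputable def exU2 (a x : ℝ) : ℝ :=
  -(1 / x ^ 2) + a * (exC2 x * Real.log (Real.log x) + 2 * exC1 x / (x * Real.log x) -
      exC x * (1 / (x ^ 2 * Real.log x) + 1 / (x ^ 2 * Real.log x ^ 2)))
noncomputable def exW (a x : ℝ) : ℝ := 1 - exU a x / x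
noncomputable def exW1 (a x : ℝ) : ℝ := (exU a x - x * exU1 a x) / x ^ 2
noncomputable def exW2 (a x : ℝ) : ℝ := -(exU2 a x / x) - 2 * (exU a x - x * exU1 a x) / x ^ 3

lemma ex_loglog_deriv {x : ℝ} (hx : x ≠ 0) (hL : Real.log x ≠ 0) :
    HasDerivAt (fun x : ℝ => Real.log (Real.log x)) (1 / (x * Real.log x)) x := by
  refine ((Real.hasDerivAt_log hx).log hL).congr_deriv ?_
  field_simp

lemma exU_deriv (a : ℝ) {x : ℝ} (hx : x ≠ 0) (hL : Real.log x ≠ 0) :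
    HasDerivAt (exU a) (exU1 a x) x := by
  have h := (Real.hasDerivAt_log hx).add
    (((exC_deriv hx).mul (ex_loglog_deriv hx hL)).const_mul a)
  refine (h.congr_deriv ?_)
  unfold exU1
  ring

lemma exU1_deriv (a : ℝ) {x : ℝ} (hx : x ≠ 0) (hL : Real.log x ≠ 0) :
    HasDerivAt (exU1 a) (exU2 a x) x := by
  have h := (ex_inv_deriv 1 hx).add
    ((((exC1_deriv hx).mul (ex_loglog_deriv hx hL)).add
      ((exC_deriv hx).div ((hasDerivAt_id x).mul (Real.hasDerivAt_log hx))
        (mul_ne_zero hx hL))).const_mul a)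
  refine (h.congr_deriv ?_)
  unfold exU2
  simp only [id, one_mul, Pi.mul_apply]
  field_simp
  ring

lemma exW_deriv (a : ℝ) {x : ℝ} (hx : x ≠ 0) (hL : Real.log x ≠ 0) :
    HasDerivAt (exW a) (exW1 a x) x := by
  have h := ((exU_deriv a hx hL).div (hasDerivAt_id x) hx).const_sub 1
  refine (h.congr_deriv ?_)
  unfold exW1
  simp only [id]
  field_simp
  ring

lemma exW1_deriv (a : ℝ) {x : ℝ} (hx : x ≠ 0) (hL : Real.log x ≠ 0) :
    HasDerivAt (exW1 a) (exW2 a x) x := by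
  have h := ((exU_deriv a hx hL).sub ((hasDerivAt_id x).mul (exU1_deriv a hx hL))).div
    ((hasDerivAt_id x).pow 2) (by simpa using hx)
  refine (h.congr_deriv ?_)
  unfold exW2
  simp only [id, Pi.sub_apply, Pi.mul_apply, Pi.pow_apply]
  field_simp
  ring

noncomputable def exPhi (a x : ℝ) : ℝ :=
  Real.log (Real.log (Real.log x)) + Real.log (exC x) + (x - 1) * Real.log (exW a x)
noncomputable def exPhi1 (a x : ℝ) : ℝ :=
  1 / (x * Real.log x * Real.log (Real.log x)) + exC1 x / exC x +
    (Real.log (exW a x) + (x - 1) * (exW1 a x / exW a x))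
noncomputable def exPhi2 (a x : ℝ) : ℝ :=
  -((Real.log x * Real.log (Real.log x) + Real.log (Real.log x) + 1) /
      (x * Real.log x * Real.log (Real.log x)) ^ 2) +
    (exC2 x * exC x - exC1 x ^ 2) / exC x ^ 2 + 2 * exW1 a x / exW a x +
      (x - 1) * (exW2 a x * exW a x - exW1 a x ^ 2) / exW a x ^ 2

lemma exPhi_deriv (a : ℝ) {x : ℝ} (hx : x ≠ 0) (hL : Real.log x ≠ 0)
    (hl : Real.log (Real.log x) ≠ 0) (hC : exC x ≠ 0) (hW : exW a x ≠ 0) :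
    HasDerivAt (exPhi a) (exPhi1 a x) x := by
  have h := (((ex_loglog_deriv hx hL).log hl).add ((exC_deriv hx).log hC)).add
    (((hasDerivAt_id x).sub_const 1).mul ((exW_deriv a hx hL).log hW))
  refine (h.congr_deriv ?_)
  unfold exPhi1
  simp only [id]
  field_simp

lemma exPhi1_deriv (a : ℝ) {x : ℝ} (hx : x ≠ 0) (hL : Real.log x ≠ 0)
    (hl : Real.log (Real.log x) ≠ 0) (hC : exC x ≠ 0) (hW : exW a x ≠ 0) :
    HasDerivAt (exPhi1 a) (exPhi2 a x) x := by
  have h0 := ((((hasDerivAt_id x).mul (Real.hasDerivAt_log hx)).mul (ex_loglog_deriv hx hL)).inv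
    (by simp [hx, hL, hl])).const_mul 1
  have h := (h0.add ((exC1_deriv hx).div (exC_deriv hx) hC)).add
    (((exW_deriv a hx hL).log hW).add (((hasDerivAt_id x).sub_const 1).mul
      ((exW1_deriv a hx hL).div (exW_deriv a hx hL) hW)))
  have hf : exPhi1 a = (fun x => 1 * ((id x * Real.log x) * Real.log (Real.log x))⁻¹ + exC1 x / exC x +
    (Real.log (exW a x) + (id x - 1) * (exW1 a x / exW a x))) := by
    funext y; unfold exPhi1; simp
  rw [hf]
  refine (h.congr_deriv ?_)
  unfold exPhi2
  simp only [id, Pi.mul_apply, Pi.div_apply]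
  field_simp
  ring

lemma exW_pos {a x : ℝ} (hx : 9 ≤ x) (h1 : 1 ≤ a) (h5 : a ≤ 5) : 0 < exW a x := by
  obtain ⟨_, hD⟩ := exK_nonneg hx h1 h5
  obtain ⟨p1, p2⟩ := ex_log_nine hx
  obtain ⟨_, c2, _⟩ := exC_bounds hx
  unfold exW exU
  rw [sub_pos, div_lt_one (by linarith)]
  have := mul_le_mul_of_nonneg_left (mul_le_mul_of_nonneg_right c2
    (by linarith : 0 ≤ Real.log (Real.log x))) (by linarith : 0 ≤ a)
  linarith

lemma exC_pos {x : ℝ} (hx : 9 ≤ x) : 0 < exC x := by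
  obtain ⟨c1, _⟩ := exC_bounds hx
  have : 1 / x ^ 2 ≤ 1 / 9 ^ 2 := by gcongr
  linarith

lemma exPhi2_nonneg {a x : ℝ} (hx : 9 ≤ x) (h1 : 1 ≤ a) (h5 : a ≤ 5) : 0 ≤ exPhi2 a x := by
  obtain ⟨hK, hD⟩ := exK_nonneg hx h1 h5
  obtain ⟨p1, p2⟩ := ex_log_nine hx
  obtain ⟨c1, c2, c3, c4, c5, c6⟩ := exC_bounds hx
  exact ex_phi2_alg hx p1 p2 (by linarith) c1 c2 c3 c4 c5 c6 hD hK rfl rfl rfl rfl rfl rfl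

lemma exPhi_convex {a : ℝ} (h1 : 1 ≤ a) (h5 : a ≤ 5) : ConvexOn ℝ (Set.Ici 9) (exPhi a) := by
  have H : ∀ x : ℝ, 9 ≤ x → x ≠ 0 ∧ Real.log x ≠ 0 ∧ Real.log (Real.log x) ≠ 0 ∧ exC x ≠ 0 ∧
      exW a x ≠ 0 := by
    intro x hx
    obtain ⟨p1, p2⟩ := ex_log_nine hx
    exact ⟨by linarith, by linarith, by linarith, (exC_pos hx).ne', (exW_pos hx h1 h5).ne'⟩
  refine convexOn_of_hasDerivWithinAt2_nonneg (f' := exPhi1 a) (f'' := exPhi2 a) (convex_Ici 9) ?_ ?_ ?_ ?_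
  · intro x hx
    obtain ⟨q1, q2, q3, q4, q5⟩ := H x hx
    exact (exPhi_deriv a q1 q2 q3 q4 q5).continuousAt.continuousWithinAt
  · intro x hx
    rw [interior_Ici] at hx
    obtain ⟨q1, q2, q3, q4, q5⟩ := H x (le_of_lt hx)
    exact (exPhi_deriv a q1 q2 q3 q4 q5).hasDerivWithinAt
  · intro x hx
    rw [interior_Ici] at hx
    obtain ⟨q1, q2, q3, q4, q5⟩ := H x (le_of_lt hx)
    exact (exPhi1_deriv a q1 q2 q3 q4 q5).hasDerivWithinAt
  · intro x hx
    rw [interior_Ici] at hx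
    exact exPhi2_nonneg (le_of_lt hx) h1 h5

lemma exG_eq_exp {a : ℝ} (h1 : 1 ≤ a) (h5 : a ≤ 5) {i : ℕ} (hi : 9 ≤ i) :
    exG a i = Real.exp (exPhi a i) := by
  have hx : (9 : ℝ) ≤ i := by exact_mod_cast hi
  obtain ⟨p1, p2⟩ := ex_log_nine hx
  have hw := exW_pos hx h1 h5
  have hc := exC_pos hx
  unfold exPhi
  rw [Real.exp_add, Real.exp_add, Real.exp_log (by linarith), Real.exp_log hc]
  have e : ((i : ℝ) - 1) * Real.log (exW a i) = ((i - 1 : ℕ) : ℝ) * Real.log (exW a i) := by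
    rw [Nat.cast_sub (by omega)]; simp
  rw [e, ← Real.log_pow, Real.exp_log (pow_pos hw _)]
  unfold exG exC exW exU exC
  congr 2
  ring

lemma exG_mid {a : ℝ} (h1 : 1 ≤ a) (h5 : a ≤ 5) {i : ℕ} (hi : 9 ≤ i) :
    exG a (i + 1) ≤ (exG a i + exG a (i + 2)) / 2 := by
  have hx : (9 : ℝ) ≤ i := by exact_mod_cast hi
  have hy : ((i + 2 : ℕ) : ℝ) ∈ Set.Ici (9 : ℝ) := by
    simp only [Set.mem_Ici]; push_cast; linarith
  have hx' : (i : ℝ) ∈ Set.Ici (9 : ℝ) := hx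
  have hh : (0 : ℝ) ≤ 1 / 2 := by norm_num
  have hc := (exPhi_convex h1 h5).2 hx' hy hh hh (by norm_num)
  have e : (1 / 2 : ℝ) • (i : ℝ) + (1 / 2 : ℝ) • ((i + 2 : ℕ) : ℝ) = ((i + 1 : ℕ) : ℝ) := by
    push_cast; simp only [smul_eq_mul]; ring
  rw [e] at hc
  rw [exG_eq_exp h1 h5 hi, exG_eq_exp h1 h5 (by omega : 9 ≤ i + 1),
    exG_eq_exp h1 h5 (by omega : 9 ≤ i + 2)]
  refine (Real.exp_le_exp.2 hc).trans ?_
  have := convexOn_exp.2 (Set.mem_univ (exPhi a i)) (Set.mem_univ (exPhi a ((i + 2 : ℕ) : ℝ)))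
    hh hh (by norm_num)
  simp only [smul_eq_mul] at this ⊢
  linarith


noncomputable def exBase (c : ℝ) (i : ℕ) : ℝ :=
  1 - Real.log i / i - Real.log (Real.log i) / i * Real.cos (1 / i) ^ 2 * c

lemma exTerm_eq (a b : ℝ) (i : ℕ) : exTerm a b i = exBase (a + (-1 : ℝ) ^ i * b) i ^ i := rfl

lemma exG_eq (a : ℝ) (i : ℕ) : exG a i =
    Real.log (Real.log i) * Real.cos (1 / i) ^ 2 * exBase a i ^ (i - 1) := rfl

lemma ex_log_ge_one {i : ℕ} (hi : 3 ≤ i) : 1 ≤ Real.log i := by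
  have h3 : (3 : ℝ) ≤ i := by exact_mod_cast hi
  have := Real.log_le_log (by norm_num) h3
  have := ex_num_3.1.1
  norm_num at this
  linarith

lemma ex_ll_nonneg {i : ℕ} (hi : 3 ≤ i) : 0 ≤ Real.log (Real.log i) :=
  Real.log_nonneg (ex_log_ge_one hi)

lemma exBase_anti {i : ℕ} (hi : 3 ≤ i) {c d : ℝ} (h : c ≤ d) : exBase d i ≤ exBase c i := by
  have := ex_ll_nonneg hi
  unfold exBase
  gcongr

lemma exG_anti {i : ℕ} (hi : 3 ≤ i) {c d : ℝ} (h : c ≤ d) (hd : 0 ≤ exBase d i) :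
    exG d i ≤ exG c i := by
  have := ex_ll_nonneg hi
  have := exBase_anti hi h
  rw [exG_eq, exG_eq]
  gcongr

lemma exG_nonneg {i : ℕ} (hi : 3 ≤ i) {c : ℝ} (hd : 0 ≤ exBase c i) : 0 ≤ exG c i := by
  have := ex_ll_nonneg hi
  rw [exG_eq]
  positivity

lemma ex_bern {x y : ℝ} (hx : 0 ≤ x) (hy : 0 ≤ y) (n : ℕ) :
    y ^ (n + 1) + (n + 1) * y ^ n * (x - y) ≤ x ^ (n + 1) := by
  induction n with
  | zero => simp
  | succ n ih =>
    have h1 := mul_le_mul_of_nonneg_left ih hx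
    have h2 : 0 ≤ (n + 1) * y ^ n * (x - y) ^ 2 := by positivity
    push_cast
    have e : y ^ (n + 1 + 1) + ((n : ℝ) + 1 + 1) * y ^ (n + 1) * (x - y) =
      x * (y ^ (n + 1) + (n + 1) * y ^ n * (x - y)) - (n + 1) * y ^ n * (x - y) ^ 2 := by ring
    have e2 : x ^ (n + 1 + 1) = x * x ^ (n + 1) := by ring
    rw [e, e2]; linarith

/-- Tangent line bound in the parameter. -/
lemma ex_tangent {i : ℕ} (hi : 3 ≤ i) {c d : ℝ} (hc : 0 ≤ exBase c i) (hd : 0 ≤ exBase d i) :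
    (c - d) * exG c i ≤ exBase d i ^ i - exBase c i ^ i := by
  obtain ⟨n, rfl⟩ : ∃ n, i = n + 1 := ⟨i - 1, by omega⟩
  have h := ex_bern hd hc n
  have hn : ((n + 1 : ℕ) : ℝ) ≠ 0 := by positivity
  have e : (c - d) * exG c (n + 1) =
      (n + 1) * exBase c (n + 1) ^ n * (exBase d (n + 1) - exBase c (n + 1)) := by
    have e2 : exBase d (n + 1) - exBase c (n + 1) =
      Real.log (Real.log (n + 1 : ℕ)) / ((n + 1 : ℕ) : ℝ) * Real.cos (1 / (n + 1 : ℕ)) ^ 2 * (c - d) := by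
      unfold exBase; ring
    rw [exG_eq, e2, Nat.add_sub_cancel]
    have e3 : (n : ℝ) + 1 = ((n + 1 : ℕ) : ℝ) := by push_cast; ring
    rw [e3]
    field_simp
  rw [e]; linarith

/-- Odd terms. -/
lemma ex_odd_diff {i : ℕ} (hi : 3 ≤ i) (ho : Odd i) {a b₁ b₂ c : ℝ} (hb₁ : 0 ≤ b₁) (hb : b₁ ≤ b₂)
    (hac : a ≤ c) (hc : 0 ≤ exBase c i) : (b₂ - b₁) * exG c i ≤ exTerm a b₂ i - exTerm a b₁ i := by
  rw [exTerm_eq, exTerm_eq, ho.neg_one_pow]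
  have h1 : 0 ≤ exBase (a + -1 * b₁) i := hc.trans (exBase_anti hi (by linarith))
  have h2 : 0 ≤ exBase (a + -1 * b₂) i := hc.trans (exBase_anti hi (by linarith))
  have h3 := ex_tangent hi h1 h2
  have h4 := exG_anti hi (by linarith : a + -1 * b₁ ≤ c) hc
  have h5 := mul_le_mul_of_nonneg_left h4 (sub_nonneg.2 hb)
  have e : a + -1 * b₁ - (a + -1 * b₂) = b₂ - b₁ := by ring
  rw [e] at h3
  linarith

lemma ex_odd_diff_nonneg {i : ℕ} (hi : 3 ≤ i) (ho : Odd i) {a b₁ b₂ : ℝ} (hb : b₁ ≤ b₂)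
    (hc : 0 ≤ exBase (a + (-1 : ℝ) ^ i * b₁) i) : 0 ≤ exTerm a b₂ i - exTerm a b₁ i := by
  rw [exTerm_eq, exTerm_eq, sub_nonneg]
  refine pow_le_pow_left₀ hc (exBase_anti hi ?_) _
  rw [ho.neg_one_pow]; linarith

/-- Even terms. -/
lemma ex_even_diff {i : ℕ} (hi : 3 ≤ i) (he : Even i) {a b₁ b₂ c : ℝ} (hb₁ : 0 ≤ b₁) (hb : b₁ ≤ b₂)
    (hca : c ≤ a) (h1 : 0 ≤ exBase (a + (-1 : ℝ) ^ i * b₁) i)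
    (h2 : 0 ≤ exBase (a + (-1 : ℝ) ^ i * b₂) i) :
    -((b₂ - b₁) * exG c i) ≤ exTerm a b₂ i - exTerm a b₁ i := by
  rw [exTerm_eq, exTerm_eq]
  rw [he.neg_one_pow] at *
  have h3 := ex_tangent hi h1 h2
  have h4 := exG_anti hi (by linarith : c ≤ a + 1 * b₁) h1
  have h5 := mul_le_mul_of_nonneg_left h4 (sub_nonneg.2 hb)
  have e : a + 1 * b₁ - (a + 1 * b₂) = -(b₂ - b₁) := by ring
  rw [e] at h3
  linarith

lemma exBase_eq_exW {i : ℕ} (a : ℝ) : exBase a i = exW a i := by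
  unfold exBase exW exU exC; ring

lemma ex_base_num {i : ℕ} {c Lh lh : ℝ} (hi : 0 < i) (hL : Real.log i ≤ Lh)
    (h0 : 0 ≤ Real.log (Real.log i)) (hl : Real.log (Real.log i) ≤ lh) (hc : 0 ≤ c)
    (h : Lh + lh * c ≤ i) : 0 ≤ exBase c i := by
  have hx : (0 : ℝ) < i := by exact_mod_cast hi
  have h1 : Real.log (Real.log i) * Real.cos (1 / i) ^ 2 ≤ lh * 1 :=
    mul_le_mul hl (Real.cos_sq_le_one _) (sq_nonneg _) (h0.trans hl)
  have h2 := mul_le_mul_of_nonneg_right h1 hc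
  have e : exBase c i =
      (i - Real.log i - Real.log (Real.log i) * Real.cos (1 / i) ^ 2 * c) / i := by
    unfold exBase; field_simp
  rw [e]
  apply div_nonneg _ hx.le
  linarith

lemma exBase_nonneg {i : ℕ} (hi : 3 ≤ i) (ho : Odd i) {a : ℝ} (h1 : 1 ≤ a) (h5 : a ≤ 5) :
    0 ≤ exBase a i := by
  rcases le_or_gt 9 i with h | h
  · rw [exBase_eq_exW]
    exact (exW_pos (by exact_mod_cast h) h1 h5).le
  · have hb := exBase_anti hi h5
    refine le_trans ?_ hb
    have : i = 3 ∨ i = 5 ∨ i = 7 := by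
      obtain ⟨k, hk⟩ := ho; omega
    rcases this with rfl | rfl | rfl
    · obtain ⟨⟨p1, p2⟩, ⟨p3, p4⟩, p5, p6⟩ := ex_num_3
      exact ex_base_num (by norm_num) p2 (le_trans (by norm_num) p3) p4 (by norm_num) (by norm_num)
    · obtain ⟨⟨p1, p2⟩, ⟨p3, p4⟩, p5, p6⟩ := ex_num_5
      exact ex_base_num (by norm_num) p2 (le_trans (by norm_num) p3) p4 (by norm_num) (by norm_num)
    · obtain ⟨⟨p1, p2⟩, ⟨p3, p4⟩, p5, p6⟩ := ex_num_7
      exact ex_base_num (by norm_num) p2 (le_trans (by norm_num) p3) p4 (by norm_num) (by norm_num)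

lemma ex_sum_step (f : ℕ → ℝ) (k : ℕ) : ∑ i ∈ Finset.Icc 3 (2 * (k + 1) + 9), f i =
    ∑ i ∈ Finset.Icc 3 (2 * k + 9), f i + f (2 * k + 10) + f (2 * k + 11) := by
  rw [show 2 * (k + 1) + 9 = 2 * k + 10 + 1 by ring, Finset.sum_Icc_succ_top (by omega),
    show 2 * k + 10 = 2 * k + 9 + 1 by ring, Finset.sum_Icc_succ_top (by omega)]

lemma ex_sum_zero (f : ℕ → ℝ) : ∑ i ∈ Finset.Icc 3 (2 * 0 + 9), f i =
    f 3 + f 4 + f 5 + f 6 + f 7 + f 8 + f 9 := by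
  simp [Finset.sum_Icc_succ_top]

/-- The alternating sum is nonnegative for `1 ≤ a ≤ 5`. -/
lemma ex_alt_sum {a : ℝ} (h1 : 1 ≤ a) (h5 : a ≤ 5) (k : ℕ) :
    exG a (2 * k + 9) / 2 ≤ ∑ i ∈ Finset.Icc 3 (2 * k + 9), (-1 : ℝ) ^ (i + 1) * exG a i := by
  induction k with
  | zero =>
    rw [ex_sum_zero]
    have := exT_nonneg h1 h5
    norm_num
    linarith
  | succ k ih =>
    rw [ex_sum_step]
    have hm := exG_mid h1 h5 (by omega : 9 ≤ 2 * k + 9)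
    have e1 : (-1 : ℝ) ^ (2 * k + 10 + 1) = -1 := Odd.neg_one_pow ⟨k + 5, by ring⟩
    have e2 : (-1 : ℝ) ^ (2 * k + 11 + 1) = 1 := Even.neg_one_pow ⟨k + 6, by ring⟩
    rw [e1, e2]
    have e3 : 2 * (k + 1) + 9 = 2 * k + 11 := by ring
    rw [e3]
    have e4 : 2 * k + 9 + 1 = 2 * k + 10 := by ring
    have e5 : 2 * k + 9 + 2 = 2 * k + 11 := by ring
    rw [e4, e5] at hm
    linarith


/-- Tail bound for the even terms when the parameter is `5`. -/
lemma exG_five_le {i : ℕ} (hi : 9 ≤ i) :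
    exG 5 i ≤ 0.41 / (i * Real.log i ^ 4) := by
  have hx : (9 : ℝ) ≤ i := by exact_mod_cast hi
  have hxx : (0 : ℝ) < i := by linarith
  obtain ⟨p1, p2⟩ := ex_log_nine hx
  have hw := exW_pos hx (by norm_num : (1 : ℝ) ≤ 5) le_rfl
  obtain ⟨c1, c2, _⟩ := exC_bounds hx
  have hC : 0.98 ≤ exC i := by
    have : 1 / (i : ℝ) ^ 2 ≤ 1 / 9 ^ 2 := by gcongr
    norm_num at *
    linarith
  rw [exG_eq, exBase_eq_exW]
  change Real.log (Real.log i) * exC i * exW 5 i ^ (i - 1) ≤ _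
  set L := Real.log i with hL
  set l := Real.log L with hl
  set C := exC i
  set w := exW 5 i with hwd
  set u := exU 5 i with hu
  have hwu : w = 1 - u / i := rfl
  have hu' : u = L + 5 * (C * l) := rfl
  have hlp : 0 < l := by linarith
  have hLp : 0 < L := by linarith
  have hCl : 0.98 * l ≤ C * l := by gcongr
  have hu2 : 2 ≤ u := by linarith
  have hui : u < i := by
    have : 0 < 1 - u / i := by rw [← hwu]; exact hw
    rwa [sub_pos, div_lt_one hxx] at this
  have hlogw : (i - 1 : ℝ) * Real.log w ≤ -u := by
    have h1 : 0 ≤ (1 - w) / w := by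
      apply div_nonneg _ hw.le
      rw [hwu]; have : 0 ≤ u / i := by positivity
      linarith
    have h2 := Real.le_log_one_add_of_nonneg h1
    have e1 : 1 + (1 - w) / w = w⁻¹ := by field_simp; ring
    rw [e1, Real.log_inv] at h2
    have e2 : 2 * ((1 - w) / w) / ((1 - w) / w + 2) = 2 * u / (2 * i - u) := by
      have hd : 2 * (i : ℝ) - u ≠ 0 := by linarith
      have e3 : (1 - w) / w = u / (i - u) := by
        rw [hwu]
        have : (i : ℝ) - u ≠ 0 := by linarith
        field_simp
        ring
      have e4 : (i : ℝ) - u ≠ 0 := by linarith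
      have e5 : u / (i - u) + 2 = (2 * i - u) / (i - u) := by field_simp; ring
      rw [e3, e5]
      field_simp
    rw [e2] at h2
    have h3 : u ≤ (i - 1 : ℝ) * (2 * u / (2 * i - u)) := by
      rw [← mul_div_assoc, le_div_iff₀ (by linarith)]
      nlinarith
    have h4 := mul_le_mul_of_nonneg_left h2 (by linarith : (0 : ℝ) ≤ i - 1)
    linarith
  have hpow : w ^ (i - 1) ≤ Real.exp (-u) := by
    rw [← Real.exp_log (pow_pos hw (i - 1)), Real.log_pow, Nat.cast_sub (by omega)]
    apply Real.exp_le_exp.2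
    simpa using hlogw
  have hexp : Real.exp (-u) ≤ 1 / (i * L ^ 4) * Real.exp (-(0.9 * l)) := by
    have h1 : -u ≤ -L + (-(4 * l) + -(0.9 * l)) := by rw [hu']; norm_num at *; linarith
    have h2 := Real.exp_le_exp.2 h1
    rw [Real.exp_add, Real.exp_add] at h2
    have e1 : Real.exp (-L) = 1 / i := by rw [Real.exp_neg, hL, Real.exp_log hxx, one_div]
    have e2 : Real.exp (-(4 * l)) = 1 / L ^ 4 := by
      rw [Real.exp_neg, show 4 * l = ((4 : ℕ) : ℝ) * l by norm_num, Real.exp_nat_mul, hl,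
        Real.exp_log hLp, one_div]
    rw [e1, e2] at h2
    refine h2.trans_eq ?_
    field_simp
  have hle : l * Real.exp (-(0.9 * l)) ≤ 0.41 := by
    have h1 := Real.add_one_le_exp (0.9 * l - 1)
    have h2 : l ≤ Real.exp (0.9 * l - 1) / 0.9 := by
      rw [le_div_iff₀ (by norm_num)]; linarith
    have h3 := mul_le_mul_of_nonneg_right h2 (Real.exp_pos (-(0.9 * l))).le
    refine h3.trans ?_
    rw [div_mul_eq_mul_div, ← Real.exp_add]
    have := Real.exp_neg_one_lt_d9
    rw [show 0.9 * l - 1 + -(0.9 * l) = -1 by ring]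
    rw [div_le_iff₀ (by norm_num)]
    norm_num at *
    linarith
  calc l * C * w ^ (i - 1) ≤ l * 1 * (1 / (i * L ^ 4) * Real.exp (-(0.9 * l))) := by
        have := hpow.trans hexp
        gcongr
    _ = (l * Real.exp (-(0.9 * l))) * (1 / (i * L ^ 4)) := by ring
    _ ≤ 0.41 * (1 / (i * L ^ 4)) := by gcongr
    _ = 0.41 / (i * L ^ 4) := by ring

lemma ex_cube_tel {s t : ℝ} (hs : 0 < s) (hst : s ≤ t) :
    3 * (t - s) / t ^ 4 ≤ 1 / s ^ 3 - 1 / t ^ 3 := by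
  have ht : 0 < t := by linarith
  rw [div_sub_div _ _ (by positivity) (by positivity), div_le_div_iff₀ (by positivity) (by positivity)]
  have e : (1 * t ^ 3 - s ^ 3 * 1) * t ^ 4 - 3 * (t - s) * (s ^ 3 * t ^ 3) =
    t ^ 3 * (t - s) ^ 2 * (t ^ 2 + 2 * s * t + 3 * s ^ 2) := by ring
  have : 0 ≤ t ^ 3 * (t - s) ^ 2 * (t ^ 2 + 2 * s * t + 3 * s ^ 2) := by positivity
  linarith

lemma ex_log_step {x : ℝ} (hx : 0 < x) : 2 / (x + 2) ≤ Real.log (x + 2) - Real.log x ∧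
    Real.log (x + 2) - Real.log x ≤ 2 / x := by
  have h : Real.log ((x + 2) / x) = Real.log (x + 2) - Real.log x :=
    Real.log_div (by linarith) hx.ne'
  have h1 := Real.log_le_sub_one_of_pos (by positivity : 0 < (x + 2) / x)
  have h2 := Real.one_sub_inv_le_log_of_pos (by positivity : 0 < (x + 2) / x)
  rw [h] at h1 h2
  constructor
  · refine le_trans (le_of_eq ?_) h2
    have : x + 2 ≠ 0 := by linarith
    field_simp; ring
  · refine h1.trans (le_of_eq ?_)
    field_simp; ring

lemma ex_tail_step {i : ℕ} (hi : 8 ≤ i) : exG 5 (i + 2) ≤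
    0.41 / 6 * (1 / Real.log i ^ 3 - 1 / Real.log (i + 2 : ℕ) ^ 3) := by
  have h1 := exG_five_le (by omega : 9 ≤ i + 2)
  have hx : (8 : ℝ) ≤ i := by exact_mod_cast hi
  have hl : 1 ≤ Real.log i := ex_log_ge_one (by omega)
  obtain ⟨h2, _⟩ := ex_log_step (by linarith : (0 : ℝ) < i)
  have e : ((i + 2 : ℕ) : ℝ) = i + 2 := by push_cast; ring
  rw [e] at h1 ⊢
  have h0 : 0 < 2 / ((i : ℝ) + 2) := by positivity
  have h3 := ex_cube_tel (by linarith : 0 < Real.log i) (by linarith : Real.log i ≤ Real.log (i + 2))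
  have hp : 0 < Real.log ((i : ℝ) + 2) := by linarith
  have h4 : 3 * (2 / ((i : ℝ) + 2)) / Real.log (i + 2) ^ 4 ≤
      3 * (Real.log (i + 2) - Real.log i) / Real.log (i + 2) ^ 4 := by gcongr
  refine h1.trans ?_
  have e2 : 0.41 / (((i : ℝ) + 2) * Real.log (i + 2) ^ 4) =
      0.41 / 6 * (3 * (2 / ((i : ℝ) + 2)) / Real.log (i + 2) ^ 4) := by
    field_simp; norm_num
  rw [e2]
  have := h4.trans h3
  gcongr

noncomputable def exH (i : ℕ) : ℝ :=
  if i = 3 then exG 7.43 3 else if Even i then -exG 5 i else 0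

lemma exH_sum (k : ℕ) : exG 7.43 3 - exG 5 4 - exG 5 6 - exG 5 8 -
    0.41 / 6 * (1 / Real.log (8 : ℕ) ^ 3 - 1 / Real.log (2 * k + 8 : ℕ) ^ 3) ≤
    ∑ i ∈ Finset.Icc 3 (2 * k + 9), exH i := by
  induction k with
  | zero =>
    rw [ex_sum_zero]
    have e4 : Even 4 := by decide
    have e5 : ¬ Even 5 := by decide
    have e6 : Even 6 := by decide
    have e7 : ¬ Even 7 := by decide
    have e8 : Even 8 := by decide
    have e9 : ¬ Even 9 := by decide
    simp only [exH, e4, e5, e6, e7, e8, e9]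
    norm_num
  | succ k ih =>
    rw [ex_sum_step]
    have h := ex_tail_step (by omega : 8 ≤ 2 * k + 8)
    have e1 : exH (2 * k + 10) = -exG 5 (2 * k + 10) := by
      unfold exH
      rw [if_neg (by omega), if_pos ⟨k + 5, by ring⟩]
    have e2 : exH (2 * k + 11) = 0 := by
      unfold exH
      rw [if_neg (by omega), if_neg]
      rw [Nat.not_even_iff_odd]; exact ⟨k + 5, by ring⟩
    rw [e1, e2]
    rw [show 2 * k + 8 + 2 = 2 * k + 10 by ring] at h
    rw [show 2 * (k + 1) + 8 = 2 * k + 10 by ring]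
    linarith

lemma exH_sum_nonneg (k : ℕ) : 0 ≤ ∑ i ∈ Finset.Icc 3 (2 * k + 9), exH i := by
  refine le_trans ?_ (exH_sum k)
  have h3 := (exG_3 (a := 7.43) (by norm_num) (by norm_num)).1
  have h4 := (exG_4 (a := 5) (by norm_num) (by norm_num)).2
  have h6 := (exG_6 (a := 5) (by norm_num) (by norm_num)).2
  have h8 := (exG_8 (a := 5) (by norm_num) (by norm_num)).2
  have hl : 2 ≤ Real.log (2 * k + 8 : ℕ) := by
    have h1 : ((8 : ℕ) : ℝ) ≤ (2 * k + 8 : ℕ) := by exact_mod_cast (by omega)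
    have h2 := Real.log_le_log (by norm_num) h1
    have h3 := ex_num_8.1.1
    norm_num at *
    linarith
  have hp : 0 < 1 / Real.log (2 * k + 8 : ℕ) ^ 3 := by positivity
  have h9 : 1 / Real.log (8 : ℕ) ^ 3 ≤ 0.1113 := by
    have h3 : 2.0794 ≤ Real.log (8 : ℕ) := le_trans (by norm_num) ex_num_8.1.1
    calc 1 / Real.log (8 : ℕ) ^ 3 ≤ 1 / 2.0794 ^ 3 := by gcongr
      _ ≤ _ := by norm_num
  generalize 1 / Real.log (2 * k + 8 : ℕ) ^ 3 = z at hp ⊢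
  generalize 1 / Real.log (8 : ℕ) ^ 3 = y at h9 ⊢
  norm_num at h3 h4 h6 h8 h9 ⊢
  linarith

/-- Upper bound on `a` from the base at `i = 6`. -/
lemma ex_a_le {c : ℝ} (h : 0 ≤ exBase c 6) : c ≤ 7.43 := by
  by_contra hc
  push Not at hc
  have h2 := h.trans (exBase_anti (by norm_num) hc.le)
  unfold exBase at h2
  obtain ⟨⟨p1, p2⟩, ⟨p3, p4⟩, p5, p6⟩ := ex_num_6
  push_cast at h2
  have : 0.5671 ≤ Real.log (Real.log 6) * Real.cos (1 / 6) ^ 2 := by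
    refine le_trans ?_ (mul_le_mul p3 p5 (by norm_num) (le_trans (by norm_num) p3))
    norm_num
  have e : Real.log (Real.log 6) / 6 * Real.cos (1 / 6) ^ 2 * 7.43 =
    7.43 / 6 * (Real.log (Real.log 6) * Real.cos (1 / 6) ^ 2) := by ring
  rw [e] at h2
  generalize Real.log (Real.log 6) * Real.cos (1 / 6) ^ 2 = z at *
  norm_num at *
  linarith


/-- Lower bound for an odd term when the parameter is at most `1`. -/
lemma ex_odd_lower {i : ℕ} (hi : 3 ≤ i) (h6 : 6 * Real.log i ^ 2 ≤ i) {c : ℝ} (hc : c ≤ 1) :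
    Real.exp (-1) / 2 * (Real.log (Real.log (i + 2 : ℕ)) - Real.log (Real.log i)) ≤
      exBase c i ^ i := by
  have hx : (3 : ℝ) ≤ i := by exact_mod_cast hi
  have hxx : (0 : ℝ) < i := by linarith
  have hL1 := ex_log_ge_one hi
  have hl0 := ex_ll_nonneg hi
  have hst := ex_log_step hxx
  have e : ((i + 2 : ℕ) : ℝ) = i + 2 := by push_cast; ring
  rw [e]
  have hanti := exBase_anti hi hc
  have hb1 : 1 - (Real.log i + Real.log (Real.log i)) / i ≤ exBase 1 i := by
    unfold exBase
    have h1 : Real.log (Real.log i) / i * Real.cos (1 / i) ^ 2 * 1 ≤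
        Real.log (Real.log i) / i * 1 * 1 := by
      have := Real.cos_sq_le_one (1 / (i : ℝ))
      gcongr
    rw [add_div]
    linarith
  set L := Real.log i with hL
  set l := Real.log L with hl
  have hLp : 0 < L := by linarith
  have hlL : l ≤ L := by
    have := Real.log_le_sub_one_of_pos hLp
    linarith
  set u := L + l with hu
  have hu1 : 1 ≤ u := by linarith
  have hu2 : u ≤ 2 * L := by linarith
  have husq : u ^ 2 ≤ i - u := by nlinarith
  have hui : u < i := by nlinarith
  set w := 1 - u / i with hw
  have hwp : 0 < w := by rw [hw, sub_pos, div_lt_one hxx]; exact hui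
  have hlog := Real.one_sub_inv_le_log_of_pos hwp
  have ew : 1 - w⁻¹ = -(u / (i - u)) := by
    have h1 : (i : ℝ) - u ≠ 0 := by linarith
    have h2 : w = (i - u) / i := by rw [hw]; field_simp
    rw [h2, inv_div]
    field_simp
    ring
  rw [ew] at hlog
  have h3 : -u - 1 ≤ i * Real.log w := by
    have h4 := mul_le_mul_of_nonneg_left hlog hxx.le
    have h5 : i * (u / (i - u)) ≤ u + 1 := by
      rw [← mul_div_assoc, div_le_iff₀ (by linarith)]
      nlinarith
    linarith
  have hpow : Real.exp (-u - 1) ≤ w ^ i := by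
    rw [← Real.exp_log (pow_pos hwp i), Real.log_pow]
    exact Real.exp_le_exp.2 h3
  have hexp : Real.exp (-u - 1) = Real.exp (-1) * (1 / (i * L)) := by
    rw [show -u - 1 = -1 + -(L + l) by rw [hu]; ring, Real.exp_add, Real.exp_neg (L + l),
      Real.exp_add, hl, Real.exp_log hLp, hL, Real.exp_log hxx, one_div]
  have hlast : Real.log (Real.log (i + 2)) - l ≤ 2 * (1 / (i * L)) := by
    have h0 : 0 < 2 / ((i : ℝ) + 2) := by positivity
    have hp : 0 < Real.log ((i : ℝ) + 2) := by linarith [hst.1]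
    have h1 := Real.log_le_sub_one_of_pos (div_pos hp hLp)
    rw [Real.log_div hp.ne' hLp.ne'] at h1
    refine h1.trans ?_
    have h2 := div_le_div_of_nonneg_right hst.2 hLp.le
    calc Real.log ((i : ℝ) + 2) / L - 1 = (Real.log ((i : ℝ) + 2) - L) / L := by field_simp
      _ ≤ 2 / i / L := h2
      _ = _ := by field_simp
  calc Real.exp (-1) / 2 * (Real.log (Real.log (i + 2)) - l)
      ≤ Real.exp (-1) / 2 * (2 * (1 / (i * L))) := by gcongr
    _ = Real.exp (-u - 1) := by rw [hexp]; ring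
    _ ≤ w ^ i := hpow
    _ ≤ exBase c i ^ i := pow_le_pow_left₀ hwp.le (hb1.trans hanti) _

/-- The series diverges for `a < 1`. -/
lemma ex_one_le {a b₁ M : ℝ} (hb₁ : 0 ≤ b₁)
    (hbase : ∀ i : ℕ, 3 ≤ i → 0 ≤ exBase (a + (-1 : ℝ) ^ i * b₁) i)
    (hM : Tendsto (fun N : ℕ => ∑ i ∈ Finset.Icc 3 N, exTerm a b₁ i) atTop (nhds M)) :
    1 ≤ a := by
  by_contra ha
  push Not at ha
  have hev : ∀ᶠ x : ℝ in atTop, 6 * Real.log x ^ 2 ≤ x := by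
    have h := (Real.isLittleO_pow_log_id_atTop (n := 2)).def (by norm_num : (0 : ℝ) < 1 / 6)
    filter_upwards [h, eventually_ge_atTop 0] with x hx h0
    simp only [id, Real.norm_eq_abs, abs_of_nonneg h0, abs_of_nonneg (sq_nonneg (Real.log x))] at hx
    linarith
  obtain ⟨K, hK⟩ := eventually_atTop.1 (tendsto_natCast_atTop_atTop.eventually hev)
  set s : ℕ → ℝ := fun N => ∑ i ∈ Finset.Icc 3 N, exTerm a b₁ i with hs
  set c := Real.exp (-1) / 2 with hc
  have hcp : 0 < c := by positivity
  set g : ℕ → ℝ := fun k => Real.log (Real.log ((2 * (K + k) + 5 : ℕ) : ℝ)) with hg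
  have hstep : ∀ k : ℕ, s (2 * K + 3) + c * (g k - g 0) ≤ s (2 * (K + k) + 3) := by
    intro k
    induction k with
    | zero => simp
    | succ k ih =>
      have e1 : s (2 * (K + (k + 1)) + 3) = s (2 * (K + k) + 3) + exTerm a b₁ (2 * (K + k) + 4) +
          exTerm a b₁ (2 * (K + k) + 5) := by
        simp only [hs]
        rw [show 2 * (K + (k + 1)) + 3 = 2 * (K + k) + 4 + 1 by ring,
          Finset.sum_Icc_succ_top (by omega), show 2 * (K + k) + 4 = 2 * (K + k) + 3 + 1 by ring,
          Finset.sum_Icc_succ_top (by omega)]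
      have h1 : 0 ≤ exTerm a b₁ (2 * (K + k) + 4) := by
        rw [exTerm_eq]
        exact pow_nonneg (hbase _ (by omega)) _
      have ho : Odd (2 * (K + k) + 5) := ⟨K + k + 2, by ring⟩
      have h2 := ex_odd_lower (i := 2 * (K + k) + 5) (by omega) (hK _ (by omega))
        (c := a + (-1 : ℝ) ^ (2 * (K + k) + 5) * b₁) (by rw [ho.neg_one_pow]; linarith)
      rw [← exTerm_eq] at h2
      have e2 : g (k + 1) = Real.log (Real.log ((2 * (K + k) + 5 + 2 : ℕ) : ℝ)) := by
        simp only [hg]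
        rw [show 2 * (K + (k + 1)) + 5 = 2 * (K + k) + 5 + 2 by ring]
      rw [← e2] at h2
      change c * (g (k + 1) - g k) ≤ _ at h2
      rw [e1]
      linarith
  have hsub : Tendsto (fun k : ℕ => 2 * (K + k) + 3) atTop atTop :=
    tendsto_atTop_mono (fun k => by simp only [id]; omega) tendsto_id
  have hsub' : Tendsto (fun k : ℕ => 2 * (K + k) + 5) atTop atTop :=
    tendsto_atTop_mono (fun k => by simp only [id]; omega) tendsto_id
  have hgt : Tendsto g atTop atTop :=
    Real.tendsto_log_atTop.comp (Real.tendsto_log_atTop.comp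
      (tendsto_natCast_atTop_atTop.comp hsub'))
  have hlow : Tendsto (fun k => s (2 * K + 3) + c * (g k - g 0)) atTop atTop :=
    tendsto_atTop_add_const_left _ _
      ((tendsto_atTop_add_const_right _ (-g 0) hgt).const_mul_atTop hcp)
  exact not_tendsto_nhds_of_tendsto_atTop (tendsto_atTop_mono hstep hlow) M (hM.comp hsub)

/-- Partial sums up to an odd index are nondecreasing in `b`. -/
lemma ex_partial {a b₁ b₂ : ℝ} (h1a : 1 ≤ a) (hb₁ : 0 ≤ b₁) (hb : b₁ ≤ b₂)
    (h1 : ∀ i : ℕ, 3 ≤ i → 0 ≤ exBase (a + (-1 : ℝ) ^ i * b₁) i)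
    (h2 : ∀ i : ℕ, 3 ≤ i → 0 ≤ exBase (a + (-1 : ℝ) ^ i * b₂) i) (k : ℕ) :
    ∑ i ∈ Finset.Icc 3 (2 * k + 9), exTerm a b₁ i ≤
      ∑ i ∈ Finset.Icc 3 (2 * k + 9), exTerm a b₂ i := by
  rw [← sub_nonneg, ← Finset.sum_sub_distrib]
  have hd : 0 ≤ b₂ - b₁ := sub_nonneg.2 hb
  by_cases h5 : a ≤ 5
  · have hs : 0 ≤ ∑ i ∈ Finset.Icc 3 (2 * k + 9), (-1 : ℝ) ^ (i + 1) * exG a i := by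
      refine le_trans ?_ (ex_alt_sum h1a h5 k)
      have := exG_nonneg (by omega : 3 ≤ 2 * k + 9)
        (exBase_nonneg (by omega) ⟨k + 4, by ring⟩ h1a h5)
      linarith
    refine (mul_nonneg hd hs).trans ?_
    rw [Finset.mul_sum]
    refine Finset.sum_le_sum fun i hi => ?_
    have hi3 := (Finset.mem_Icc.1 hi).1
    rcases Nat.even_or_odd i with he | ho
    · have := ex_even_diff hi3 he hb₁ hb le_rfl (h1 i hi3) (h2 i hi3)
      rw [pow_succ, he.neg_one_pow]
      linarith
    · have := ex_odd_diff hi3 ho hb₁ hb le_rfl (exBase_nonneg hi3 ho h1a h5)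
      rw [pow_succ, ho.neg_one_pow]
      linarith
  · push Not at h5
    have ha7 : a ≤ 7.43 := by
      have h := h1 6 (by norm_num)
      rw [Even.neg_one_pow (by decide)] at h
      have := ex_a_le h
      linarith
    refine (mul_nonneg hd (exH_sum_nonneg k)).trans ?_
    rw [Finset.mul_sum]
    refine Finset.sum_le_sum fun i hi => ?_
    have hi3 := (Finset.mem_Icc.1 hi).1
    unfold exH
    split_ifs with q1 q2
    · subst q1
      refine ex_odd_diff hi3 (by decide) hb₁ hb ha7 ?_
      obtain ⟨⟨p1, p2⟩, ⟨p3, p4⟩, p5, p6⟩ := ex_num_3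
      exact ex_base_num (by norm_num) p2 (le_trans (by norm_num) p3) p4 (by norm_num) (by norm_num)
    · have := ex_even_diff hi3 q2 hb₁ hb h5.le (h1 i hi3) (h2 i hi3)
      linarith
    · rw [mul_zero]
      exact ex_odd_diff_nonneg hi3 (Nat.not_even_iff_odd.1 q2) hb (h1 i hi3)


/-- if the bases are nonnegative and the series `S^{a,b}`
converges (to the indicated limits of partial sums) for each pair considered,
then `S^{a,b}` is nonincreasing in `a` and nondecreasing in `b`. -/
theorem exSeries_anti_a_mono_b
    (a b a₁ a₂ b₁ b₂ : ℝ)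
    (ha : 0 ≤ a) (hb : 0 ≤ b)
    (ha₁ : 0 ≤ a₁) (ha₂ : 0 ≤ a₂) (hb₁ : 0 ≤ b₁) (hb₂ : 0 ≤ b₂)
    (hbase₁ : ∀ i : ℕ, 3 ≤ i →
      0 ≤ 1 - Real.log i / i -
        (Real.log (Real.log i) / i) * (Real.cos (1 / i)) ^ 2 * (a₁ + (-1 : ℝ) ^ i * b))
    (hbase₂ : ∀ i : ℕ, 3 ≤ i →
      0 ≤ 1 - Real.log i / i -
        (Real.log (Real.log i) / i) * (Real.cos (1 / i)) ^ 2 * (a₂ + (-1 : ℝ) ^ i * b))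
    (hbase₃ : ∀ i : ℕ, 3 ≤ i →
      0 ≤ 1 - Real.log i / i -
        (Real.log (Real.log i) / i) * (Real.cos (1 / i)) ^ 2 * (a + (-1 : ℝ) ^ i * b₁))
    (hbase₄ : ∀ i : ℕ, 3 ≤ i →
      0 ≤ 1 - Real.log i / i -
        (Real.log (Real.log i) / i) * (Real.cos (1 / i)) ^ 2 * (a + (-1 : ℝ) ^ i * b₂))
    (L₁ L₂ M₁ M₂ : ℝ)
    (hL₁ : Tendsto (fun N : ℕ => ∑ i ∈ Finset.Icc 3 N, exTerm a₁ b i) atTop (nhds L₁))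
    (hL₂ : Tendsto (fun N : ℕ => ∑ i ∈ Finset.Icc 3 N, exTerm a₂ b i) atTop (nhds L₂))
    (hM₁ : Tendsto (fun N : ℕ => ∑ i ∈ Finset.Icc 3 N, exTerm a b₁ i) atTop (nhds M₁))
    (hM₂ : Tendsto (fun N : ℕ => ∑ i ∈ Finset.Icc 3 N, exTerm a b₂ i) atTop (nhds M₂)) :
    (a₁ ≤ a₂ → L₂ ≤ L₁) ∧ (b₁ ≤ b₂ → M₁ ≤ M₂) := by
  refine ⟨fun h => ?_, fun h => ?_⟩
  · refine le_of_tendsto_of_tendsto' hL₂ hL₁ fun N => ?_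
    refine Finset.sum_le_sum fun i hi => ?_
    have hi3 := (Finset.mem_Icc.1 hi).1
    rw [exTerm_eq, exTerm_eq]
    exact pow_le_pow_left₀ (hbase₂ i hi3) (exBase_anti hi3 (by linarith)) _
  · have h1a := ex_one_le hb₁ hbase₃ hM₁
    have hsub : Tendsto (fun k : ℕ => 2 * k + 9) atTop atTop :=
      tendsto_atTop_mono (fun k => by simp only [id]; omega) tendsto_id
    exact le_of_tendsto_of_tendsto' (hM₁.comp hsub) (hM₂.comp hsub)
      fun k => ex_partial h1a hb₁ h hbase₃ hbase₄ k
end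

section
/- For a real parameter a, consider the series S^a = ∑_{i=2}^∞ (1 − log i/i − a·(log log i)/i)^i. Then S^a converges if a > 1 and diverges if a ≤ 1. -/
open Filter

/-- Bertrand series. -/
lemma bertrand_summable_iff (a : ℝ) (ha : 0 < a) :
    Summable (fun n : ℕ => ((n : ℝ) * Real.log n ^ a)⁻¹) ↔ 1 < a := by
  rw [← summable_condensed_iff_of_eventually_nonneg]
  · have h2 : 0 < Real.log 2 := Real.log_pos (by norm_num)
    have : (fun k : ℕ => (2 : ℝ) ^ k *
        (((2 ^ k : ℕ) : ℝ) * Real.log ((2 ^ k : ℕ) : ℝ) ^ a)⁻¹)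
        = fun k : ℕ => (Real.log 2 ^ a)⁻¹ * ((k : ℝ) ^ a)⁻¹ := by
      funext k
      have h3 : (0 : ℝ) < 2 ^ k := by positivity
      push_cast
      rw [Real.log_pow, Real.mul_rpow (by positivity) h2.le, mul_inv, mul_inv,
        mul_inv_cancel_left₀ h3.ne', mul_comm]
    rw [this, summable_mul_left_iff (by positivity), Real.summable_nat_rpow_inv]
  · filter_upwards [eventually_ge_atTop 2] with n hn
    have h1 : 0 ≤ Real.log n := Real.log_natCast_nonneg n
    simp only [Pi.zero_apply]
    positivity
  · filter_upwards [eventually_ge_atTop 2] with n hn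
    have hn' : (2 : ℝ) ≤ n := by exact_mod_cast hn
    have h1 : 0 < Real.log n := Real.log_pos (by linarith)
    have h0 : (0 : ℝ) < n := by linarith
    push_cast
    have h2 : Real.log n ≤ Real.log (n + 1) := Real.log_le_log h0 (by linarith)
    have h3 : Real.log n ^ a ≤ Real.log (n + 1) ^ a := Real.rpow_le_rpow h1.le h2 ha.le
    apply inv_anti₀ (by positivity)
    apply mul_le_mul (by linarith) h3 (by positivity) (by positivity)

lemma sum_Icc_eq (f : ℕ → ℝ) (N : ℕ) :
    ∑ i ∈ Finset.Icc 2 N, f i = ∑ i ∈ Finset.range (N + 1), if 2 ≤ i then f i else 0 := by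
  rw [← Finset.sum_filter]
  congr 1
  ext i
  simp
  omega

lemma tendsto_of_summable (f : ℕ → ℝ) (hf : Summable f) :
    ∃ l : ℝ, Tendsto (fun N : ℕ => ∑ i ∈ Finset.Icc 2 N, f i) atTop (nhds l) := by
  have h : Summable (fun i => if 2 ≤ i then f i else 0) := by
    refine (summable_congr_atTop ?_).1 hf
    filter_upwards [eventually_ge_atTop 2] with n hn
    simp [hn]
  refine ⟨∑' i, if 2 ≤ i then f i else 0, ?_⟩
  · simp_rw [sum_Icc_eq]
    exact (tendsto_add_atTop_iff_nat 1).2 h.hasSum.tendsto_sum_nat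

lemma summable_of_tendsto (f : ℕ → ℝ) (h0 : ∀ᶠ i in atTop, 0 ≤ f i) (l : ℝ)
    (hl : Tendsto (fun N : ℕ => ∑ i ∈ Finset.Icc 2 N, f i) atTop (nhds l)) : Summable f := by
  obtain ⟨K, hK⟩ := eventually_atTop.1 h0
  simp_rw [sum_Icc_eq] at hl
  set h : ℕ → ℝ := fun i => if 2 ≤ i then f i else 0 with hh
  have hl' := (tendsto_add_atTop_iff_nat (f := fun n => ∑ i ∈ Finset.range n, h i) 1).1 hl
  have hs : Summable h := by
    rw [← summable_nat_add_iff K]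
    have hn : ∀ n, 0 ≤ h (n + K) := by
      intro n
      have := hK (n + K) (by omega)
      simp only [hh]
      split_ifs <;> simp_all
    by_contra hc
    rw [not_summable_iff_tendsto_nat_atTop_of_nonneg hn] at hc
    have h1 := ((tendsto_add_atTop_iff_nat K).2 hl').sub_const (∑ i ∈ Finset.range K, h i)
    refine not_tendsto_nhds_of_tendsto_atTop hc _ (h1.congr ?_)
    intro n
    rw [add_comm n K, Finset.sum_range_add]
    simp [add_comm]
  refine (summable_congr_atTop ?_).1 hs
  filter_upwards [eventually_ge_atTop 2] with n hn
  simp [hh, hn]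

lemma aux_ev (c : ℝ) (hc : 0 < c) : ∀ᶠ i : ℕ in atTop,
    1 ≤ Real.log i ∧ c * Real.log i ^ 2 ≤ i := by
  have h1 : ∀ᶠ x : ℝ in atTop, 1 ≤ Real.log x := Real.tendsto_log_atTop.eventually_ge_atTop 1
  have h2 := (Real.isLittleO_pow_log_id_atTop (n := 2)).bound (inv_pos.2 hc)
  have h3 : ∀ᶠ x : ℝ in atTop, 1 ≤ Real.log x ∧ c * Real.log x ^ 2 ≤ x := by
    filter_upwards [h1, h2, eventually_ge_atTop 0] with x h1 h2 h3
    refine ⟨h1, ?_⟩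
    simp only [id, Real.norm_eq_abs, abs_of_nonneg h3, abs_pow, sq_abs] at h2
    rwa [inv_mul_eq_div, le_div_iff₀ hc, mul_comm] at h2
  exact tendsto_natCast_atTop_atTop.eventually h3

lemma exp_eq (a : ℝ) (i : ℕ) (hi : 1 ≤ Real.log i) :
    Real.exp (-(Real.log i + a * Real.log (Real.log i))) = ((i : ℝ) * Real.log i ^ a)⁻¹ := by
  have h0 : (0 : ℝ) < i := by
    rcases Nat.eq_zero_or_pos i with h | h
    · subst h; norm_num at hi
    · exact_mod_cast h
  rw [Real.exp_neg, Real.exp_add, Real.exp_log h0, Real.rpow_def_of_pos (by linarith), mul_comm a]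

lemma term_le (a : ℝ) (ha : 1 < a) : ∀ᶠ i : ℕ in atTop,
    ‖(1 - Real.log i / i - a * Real.log (Real.log i) / i) ^ i‖ ≤
      ((i : ℝ) * Real.log i ^ a)⁻¹ := by
  filter_upwards [aux_ev (1 + a) (by linarith)] with i ⟨h1, h2⟩
  have hi : (0 : ℝ) < i := by nlinarith
  have hM : Real.log (Real.log i) ≤ Real.log i := (Real.log_le_sub_one_of_pos (by linarith)).trans (by linarith)
  have hx : 0 ≤ 1 - Real.log i / i - a * Real.log (Real.log i) / i := by
    have : 1 - Real.log i / i - a * Real.log (Real.log i) / i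
      = (i - Real.log i - a * Real.log (Real.log i)) / i := by field_simp
    rw [this]
    apply div_nonneg _ hi.le
    have k1 : a * Real.log (Real.log i) ≤ a * Real.log i :=
      mul_le_mul_of_nonneg_left hM (by linarith)
    have k2 : (1 + a) * Real.log i ≤ (1 + a) * Real.log i ^ 2 :=
      mul_le_mul_of_nonneg_left (by nlinarith) (by linarith)
    linarith
  rw [Real.norm_of_nonneg (pow_nonneg hx _), ← exp_eq a i h1]
  have he : 1 - Real.log i / i - a * Real.log (Real.log i) / i
      ≤ Real.exp (-(Real.log i / i + a * Real.log (Real.log i) / i)) := by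
    have := Real.add_one_le_exp (-(Real.log i / i + a * Real.log (Real.log i) / i))
    linarith
  refine (pow_le_pow_left₀ hx he i).trans_eq ?_
  rw [← Real.exp_nat_mul]
  congr 1
  field_simp

lemma exp_le_one_sub (x : ℝ) (h0 : 0 ≤ x) (h1 : x ≤ 1 / 2) :
    Real.exp (-(x + 2 * x ^ 2)) ≤ 1 - x := by
  have h2 : 0 < 1 - x := by linarith
  rw [Real.exp_neg]
  apply inv_le_of_inv_le₀ h2
  refine le_trans ?_ (Real.add_one_le_exp _)
  rw [inv_le_iff_one_le_mul₀ h2]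
  nlinarith [mul_nonneg (sq_nonneg x) (by linarith : 0 ≤ 1 - 2 * x)]

lemma le_term (a : ℝ) (ha : a ≤ 1) : ∀ᶠ i : ℕ in atTop,
    Real.exp (-1) * ((i : ℝ) * Real.log i ^ (1 : ℝ))⁻¹ ≤
    (1 - Real.log i / i - a * Real.log (Real.log i) / i) ^ i := by
  filter_upwards [aux_ev 8 (by norm_num)] with i ⟨h1, h2⟩
  have hi : (0 : ℝ) < i := by nlinarith
  have hM : Real.log (Real.log i) ≤ Real.log i := (Real.log_le_sub_one_of_pos (by linarith)).trans (by linarith)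
  have hM0 : 0 ≤ Real.log (Real.log i) := Real.log_nonneg h1
  rw [← exp_eq 1 i h1, ← Real.exp_add, one_mul]
  set L := Real.log i
  set M := Real.log L
  have hx0 : 0 ≤ (L + M) / i := by positivity
  have hx1 : (L + M) / i ≤ 1 / 2 := by
    rw [div_le_iff₀ hi]; nlinarith
  have h3 := exp_le_one_sub _ hx0 hx1
  have h4 : 1 - (L + M) / i ≤ 1 - L / i - a * M / i := by
    have : a * M / i ≤ M / i := by gcongr; nlinarith
    rw [add_div]; linarith
  refine le_trans ?_ (pow_le_pow_left₀ (Real.exp_pos _).le (h3.trans h4) i)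
  rw [← Real.exp_nat_mul, Real.exp_le_exp]
  have h5 : (i : ℝ) * -((L + M) / i + 2 * ((L + M) / i) ^ 2) =
    -(L + M) - 2 * (L + M) ^ 2 / i := by field_simp; ring
  have h6 : 2 * (L + M) ^ 2 / i ≤ 1 := by
    rw [div_le_iff₀ hi]; nlinarith
  rw [h5]; linarith

/-- the series `S^a = ∑_{i=2}^∞ (1 - log i / i - a log log i / i)^i`
converges if `a > 1` and diverges if `a ≤ 1`. -/
theorem example2_series_convergence (a : ℝ) :
    (1 < a → ∃ l : ℝ,
      Tendsto (fun N : ℕ => ∑ i ∈ Finset.Icc 2 N,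
        (1 - Real.log i / i - a * Real.log (Real.log i) / i) ^ i) atTop (nhds l)) ∧
    (a ≤ 1 → ¬ ∃ l : ℝ,
      Tendsto (fun N : ℕ => ∑ i ∈ Finset.Icc 2 N,
        (1 - Real.log i / i - a * Real.log (Real.log i) / i) ^ i) atTop (nhds l)) := by
  constructor
  · intro ha
    apply tendsto_of_summable
    exact Summable.of_norm_bounded_eventually_nat
      ((bertrand_summable_iff a (by linarith)).2 ha) (term_le a ha)
  · rintro ha ⟨l, hl⟩
    have hnn : ∀ i : ℕ, 0 ≤ Real.exp (-1) * ((i : ℝ) * Real.log i ^ (1 : ℝ))⁻¹ := by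
      intro i
      have h1 : 0 ≤ Real.log i := Real.log_natCast_nonneg i
      positivity
    have hs := summable_of_tendsto _ ((le_term a ha).mono fun i h => (hnn i).trans h) l hl
    have h2 : Summable (fun i : ℕ => Real.exp (-1) * ((i : ℝ) * Real.log i ^ (1 : ℝ))⁻¹) := by
      refine Summable.of_norm_bounded_eventually_nat hs ?_
      filter_upwards [le_term a ha] with i h
      rwa [Real.norm_of_nonneg (hnn i)]
    rw [summable_mul_left_iff (Real.exp_pos _).ne', bertrand_summable_iff 1 one_pos] at h2
    exact lt_irrefl _ h2
end

section
/- For real parameters a ≥ 0 and b ≥ 0, consider the series S^{a,b} = ∑_{i=3}^∞ (1 − log i/i − (log log i/i)·cos²(1/i)·(a + (−1)^i b))^i. Then S^{a,b} converges if a − b > 1 and diverges if a + b < 1. -/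
open Filter

theorem aux_summable (p : ℝ) (hp : 0 < p) :
    Summable (fun n : ℕ => ((n : ℝ) * (Real.log n) ^ p)⁻¹) ↔ 1 < p := by
  have hev : ∀ᶠ n : ℕ in atTop, 2 ≤ n := eventually_ge_atTop 2
  rw [← summable_condensed_iff_of_eventually_nonneg]
  · have : (fun k : ℕ => (2 : ℝ) ^ k * (((2 ^ k : ℕ) : ℝ) * (Real.log ((2 ^ k : ℕ) : ℝ)) ^ p)⁻¹)
        = fun k : ℕ => ((Real.log 2) ^ p)⁻¹ * ((k : ℝ) ^ p)⁻¹ := by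
      funext k
      push_cast
      rw [Real.log_pow, Real.mul_rpow (by positivity) (Real.log_nonneg (by norm_num)),
        mul_inv, mul_inv, ← mul_assoc, mul_inv_cancel₀ (by positivity)]
      ring
    rw [this, summable_mul_left_iff, Real.summable_nat_rpow_inv]
    have := Real.log_pos (show (1 : ℝ) < 2 by norm_num)
    positivity
  · filter_upwards [hev] with n hn
    have h1 : (2 : ℝ) ≤ n := by exact_mod_cast hn
    have := Real.log_pos (show (1 : ℝ) < n by linarith)
    simp only [Pi.zero_apply]
    positivity
  · filter_upwards [hev] with n hn
    have h1 : (2 : ℝ) ≤ n := by exact_mod_cast hn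
    have h2 := Real.log_pos (show (1 : ℝ) < n by linarith)
    have h3 : Real.log n ≤ Real.log ((n + 1 : ℕ) : ℝ) :=
      Real.log_le_log (by linarith) (by push_cast; linarith)
    have h4 : (n : ℝ) ≤ ((n + 1 : ℕ) : ℝ) := by push_cast; linarith
    apply inv_anti₀ (by positivity)
    gcongr

theorem aux_sum (f : ℕ → ℝ) (N : ℕ) : ∑ i ∈ Finset.Icc 3 N, f i =
    ∑ i ∈ Finset.range (N + 1), (if 3 ≤ i then f i else 0) := by
  rw [← Finset.sum_filter]
  congr 1
  ext i
  simp only [Finset.mem_Icc, Finset.mem_filter, Finset.mem_range]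
  omega

theorem aux_iff (f : ℕ → ℝ) (hf : ∀ᶠ n in atTop, 0 ≤ f n) :
    (∃ l : ℝ, Tendsto (fun N : ℕ => ∑ i ∈ Finset.Icc 3 N, f i) atTop (nhds l)) ↔ Summable f := by
  set g : ℕ → ℝ := fun i => if 3 ≤ i then f i else 0 with hg
  have hfg : Summable f ↔ Summable g := by
    apply summable_congr_atTop
    filter_upwards [eventually_ge_atTop 3] with n hn
    simp [hg, hn]
  have hS : (fun N : ℕ => ∑ i ∈ Finset.Icc 3 N, f i)
      = fun N => ∑ i ∈ Finset.range (N + 1), g i := by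
    funext N; exact aux_sum f N
  rw [hfg, hS]
  constructor
  · rintro ⟨l, hl⟩
    rw [tendsto_add_atTop_iff_nat (f := fun N => ∑ i ∈ Finset.range N, g i) 1] at hl
    obtain ⟨M, hM⟩ := eventually_atTop.1 hf
    have hgM : ∀ i, 0 ≤ g (i + M) := by
      intro i
      simp only [hg]
      split_ifs
      · exact hM _ (by omega)
      · exact le_rfl
    rw [← summable_nat_add_iff M]
    refine ⟨l - ∑ i ∈ Finset.range M, g i, (hasSum_iff_tendsto_nat_of_nonneg hgM _).2 ?_⟩
    have h2 := ((tendsto_add_atTop_iff_nat M).2 hl).sub_const (∑ i ∈ Finset.range M, g i)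
    refine h2.congr fun n => ?_
    rw [add_comm n M, Finset.sum_range_add]
    simp [add_comm]
  · intro h
    exact ⟨_, (tendsto_add_atTop_iff_nat 1).2 h.hasSum.tendsto_sum_nat⟩

theorem aux_exp (x : ℝ) (h0 : 0 ≤ x) (h1 : x ≤ 1 / 2) : Real.exp (-x - 2 * x ^ 2) ≤ 1 - x := by
  rw [← Real.le_log_iff_exp_le (by linarith)]
  refine le_trans ?_ (Real.one_sub_inv_le_log_of_pos (by linarith))
  have : (1 - x)⁻¹ ≤ 1 + x + 2 * x ^ 2 := by
    rw [inv_le_iff_one_le_mul₀ (by linarith)]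
    nlinarith [mul_nonneg (sq_nonneg x) (show 0 ≤ 1 - 2 * x by linarith)]
  linarith

theorem aux_rpow (n p : ℝ) (hn : 1 < n) :
    Real.exp (-Real.log n - Real.log (Real.log n) * p) = (n * (Real.log n) ^ p)⁻¹ := by
  have := Real.log_pos hn
  rw [Real.rpow_def_of_pos this, sub_eq_add_neg, Real.exp_add, Real.exp_neg,
    Real.exp_neg, Real.exp_log (by linarith), mul_inv]

theorem aux_bounds (a b : ℝ) (hb : 0 ≤ b) (i : ℕ) :
    a - b ≤ a + (-1 : ℝ) ^ i * b ∧ a + (-1 : ℝ) ^ i * b ≤ a + b := by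
  rcases neg_one_pow_eq_or ℝ i with h | h <;> rw [h] <;> constructor <;> linarith

/-- for `a ≥ 0`, `b ≥ 0`, the series
`S^{a,b} = ∑_{i=3}^∞ (1 - log i / i - (log log i / i) cos²(1/i) (a + (-1)^i b))^i`
converges if `a - b > 1` and diverges if `a + b < 1`. -/
theorem example4_series_convergence (a b : ℝ) (ha : 0 ≤ a) (hb : 0 ≤ b) :
    (1 < a - b → ∃ l : ℝ,
      Tendsto (fun N : ℕ => ∑ i ∈ Finset.Icc 3 N,
        (1 - Real.log i / i -
          (Real.log (Real.log i) / i) * (Real.cos (1 / i)) ^ 2 *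
            (a + (-1 : ℝ) ^ i * b)) ^ i) atTop (nhds l)) ∧
    (a + b < 1 → ¬ ∃ l : ℝ,
      Tendsto (fun N : ℕ => ∑ i ∈ Finset.Icc 3 N,
        (1 - Real.log i / i -
          (Real.log (Real.log i) / i) * (Real.cos (1 / i)) ^ 2 *
            (a + (-1 : ℝ) ^ i * b)) ^ i) atTop (nhds l)) := by
  have hlog : ∀ᶠ n : ℕ in atTop, 1 ≤ Real.log n :=
    (Real.tendsto_log_atTop.comp tendsto_natCast_atTop_atTop).eventually_ge_atTop 1
  have hsm : ∀ (k : ℕ) (c : ℝ), 0 < c → ∀ᶠ n : ℕ in atTop, Real.log n ^ k ≤ c * n := by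
    intro k c hc
    have := tendsto_natCast_atTop_atTop (R := ℝ) |>.eventually
      ((Real.isLittleO_pow_log_id_atTop (n := k)).def hc)
    filter_upwards [this] with n hn
    simp only [id, Real.norm_eq_abs] at hn
    rw [abs_of_nonneg (Nat.cast_nonneg (α := ℝ) n)] at hn
    exact (le_abs_self _).trans hn
  have hcos : Tendsto (fun n : ℕ => Real.cos (1 / (n : ℝ)) ^ 2) atTop (nhds 1) := by
    have h := ((Real.continuous_cos.tendsto 0).comp
      (tendsto_one_div_atTop_nhds_zero_nat (𝕜 := ℝ))).pow 2
    simpa using h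
  constructor
  · intro h
    obtain ⟨p, hp1, hp2⟩ := exists_between h
    have hev : ∀ᶠ i : ℕ in atTop, 0 ≤ (1 - Real.log i / i -
          (Real.log (Real.log i) / i) * (Real.cos (1 / i)) ^ 2 *
            (a + (-1 : ℝ) ^ i * b)) ^ i ∧ (1 - Real.log i / i -
          (Real.log (Real.log i) / i) * (Real.cos (1 / i)) ^ 2 *
            (a + (-1 : ℝ) ^ i * b)) ^ i ≤ ((i : ℝ) * (Real.log i) ^ p)⁻¹ := by
      have hc2 : ∀ᶠ n : ℕ in atTop, p / (a - b) < Real.cos (1 / (n : ℝ)) ^ 2 :=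
        hcos.eventually_const_lt ((div_lt_one (by linarith)).2 hp2)
      filter_upwards [hlog, hsm 1 (1 / (1 + a + b)) (by positivity), hc2,
        eventually_ge_atTop 3] with i hL hs hc hi3
      obtain ⟨hl, hu⟩ := aux_bounds a b hb i
      have hi : (3 : ℝ) ≤ i := by exact_mod_cast hi3
      rw [div_lt_iff₀ (by linarith)] at hc
      have hc1 : Real.cos (1 / (i : ℝ)) ^ 2 ≤ 1 := Real.cos_sq_le_one _
      have hc0 : 0 ≤ Real.cos (1 / (i : ℝ)) ^ 2 := sq_nonneg _
      have hLL0 : 0 ≤ Real.log (Real.log i) := Real.log_nonneg hL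
      have hLL1 : Real.log (Real.log i) ≤ Real.log i := Real.log_le_self (by linarith)
      generalize Real.cos (1 / (i : ℝ)) ^ 2 = c at *
      generalize a + (-1 : ℝ) ^ i * b = s at *
      rw [← aux_rpow _ _ (by linarith)]
      generalize Real.log (Real.log i) = M at *
      generalize Real.log i = L at *
      have e : 1 - L / i - M / i * c * s = 1 - (L + M * (c * s)) / i := by ring
      rw [e]
      have hcs1 : c * s ≤ a + b := by nlinarith
      have hcs2 : p ≤ c * s := by nlinarith
      have hx : (L + M * (c * s)) / i ≤ 1 := by
        rw [div_le_one (by linarith)]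
        have : L * (1 + a + b) ≤ i := by
          rw [pow_one, one_div, inv_mul_eq_div, le_div_iff₀ (by positivity)] at hs
          exact hs
        have : M * (c * s) ≤ L * (a + b) := by
          apply mul_le_mul hLL1 hcs1 <;> linarith
        linarith
      refine ⟨pow_nonneg (by linarith) _, ?_⟩
      calc _ ≤ (Real.exp (-((L + M * (c * s)) / i))) ^ i :=
            pow_le_pow_left₀ (by linarith) (Real.one_sub_le_exp_neg _) _
        _ = Real.exp (-L - M * (c * s)) := by
            rw [← Real.exp_nat_mul]
            congr 1
            field_simp
            ring
        _ ≤ _ := by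
            apply Real.exp_le_exp.2
            nlinarith
    rw [aux_iff _ (hev.mono fun _ h => h.1)]
    refine Summable.of_norm_bounded_eventually_nat ((aux_summable p (by linarith)).2 hp1) ?_
    filter_upwards [hev] with i hi
    rw [Real.norm_eq_abs, abs_of_nonneg hi.1]
    exact hi.2
  · intro h
    have hev : ∀ᶠ i : ℕ in atTop, Real.exp (-1) * ((i : ℝ) * (Real.log i) ^ (1 : ℝ))⁻¹ ≤
          (1 - Real.log i / i -
          (Real.log (Real.log i) / i) * (Real.cos (1 / i)) ^ 2 *
            (a + (-1 : ℝ) ^ i * b)) ^ i := by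
      filter_upwards [hlog, hsm 1 (1 / 4) (by positivity), hsm 2 (1 / 8) (by positivity),
        eventually_ge_atTop 3] with i hL hs hs2 hi3
      obtain ⟨-, hu⟩ := aux_bounds a b hb i
      have hi : (3 : ℝ) ≤ i := by exact_mod_cast hi3
      have hc1 : Real.cos (1 / (i : ℝ)) ^ 2 ≤ 1 := Real.cos_sq_le_one _
      have hc0 : 0 ≤ Real.cos (1 / (i : ℝ)) ^ 2 := sq_nonneg _
      have hLL0 : 0 ≤ Real.log (Real.log i) := Real.log_nonneg hL
      have hLL1 : Real.log (Real.log i) ≤ Real.log i := Real.log_le_self (by linarith)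
      generalize Real.cos (1 / (i : ℝ)) ^ 2 = c at *
      generalize a + (-1 : ℝ) ^ i * b = s at *
      rw [← aux_rpow _ _ (by linarith)]
      generalize Real.log (Real.log i) = M at *
      generalize Real.log i = L at *
      have e : 1 - L / i - M / i * c * s = 1 - (L + M * (c * s)) / i := by ring
      rw [e]
      have hcs1 : c * s ≤ 1 := by nlinarith
      have hx : (L + M * (c * s)) / i ≤ (L + M) / i := by
        gcongr
        nlinarith
      set y := (L + M) / i with hy
      have hy0 : 0 ≤ y := by positivity
      have hy2 : y ≤ 2 * L / i := by rw [hy]; gcongr; linarith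
      have hy1 : y ≤ 1 / 2 := by
        refine hy2.trans ?_
        rw [div_le_iff₀ (by linarith)]
        linarith
      have hyy : i * (2 * y ^ 2) ≤ 1 := by
        have : y ^ 2 ≤ (2 * L / i) ^ 2 := by gcongr
        calc i * (2 * y ^ 2) ≤ i * (2 * (2 * L / i) ^ 2) := by gcongr
          _ = 8 * L ^ 2 / i := by field_simp; ring
          _ ≤ 1 := by rw [div_le_one (by linarith)]; linarith
      have hiy : i * y = L + M := by rw [hy]; field_simp
      calc _ = Real.exp (-1 + (-L - M * 1)) := by rw [Real.exp_add]
        _ ≤ Real.exp (i * (-y - 2 * y ^ 2)) := by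
            apply Real.exp_le_exp.2
            linarith
        _ = (Real.exp (-y - 2 * y ^ 2)) ^ i := Real.exp_nat_mul _ _
        _ ≤ (1 - y) ^ i := pow_le_pow_left₀ (Real.exp_pos _).le (aux_exp y hy0 hy1) _
        _ ≤ _ := pow_le_pow_left₀ (by linarith) (by linarith) _
    have hpos : ∀ᶠ i : ℕ in atTop, 0 ≤ Real.exp (-1) * ((i : ℝ) * (Real.log i) ^ (1 : ℝ))⁻¹ := by
      filter_upwards [hlog] with i hL
      have : 0 ≤ Real.log i := by linarith
      positivity
    rw [aux_iff _ (by filter_upwards [hev, hpos] with i h1 h2 using h2.trans h1)]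
    intro hsum
    have h1 : Summable fun i : ℕ => Real.exp (-1) * ((i : ℝ) * (Real.log i) ^ (1 : ℝ))⁻¹ := by
      refine Summable.of_norm_bounded_eventually_nat hsum ?_
      filter_upwards [hev, hpos] with i h1 h2
      rw [Real.norm_eq_abs, abs_of_nonneg h2]
      exact h1
    rw [summable_mul_left_iff (Real.exp_pos _).ne', aux_summable 1 one_pos] at h1
    exact lt_irrefl _ h1
end

section
/- For real parameters a > 0 and b > 0, consider the series S^{a,b} = ∑_{i=3}^∞ (1 − (log i/i)·(a(1 + sin²(√(log log i/log i))) + b·sin(iπ/4)))^i. Then S^{a,b} converges if a − b > 1 and diverges if a + b < 1. -/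
open Filter

lemma icc_tendsto_iff (f : ℕ → ℝ) :
    (∃ l : ℝ, Tendsto (fun N : ℕ => ∑ i ∈ Finset.Icc 3 N, f i) atTop (nhds l)) ↔
    (∃ l : ℝ, Tendsto (fun N : ℕ => ∑ i ∈ Finset.range N, f i) atTop (nhds l)) := by
  have key : ∀ N : ℕ, 3 ≤ N → ∑ i ∈ Finset.Icc 3 N, f i =
      ∑ i ∈ Finset.range (N + 1), f i - ∑ i ∈ Finset.range 3, f i := by
    intro N hN
    rw [← Finset.sum_Ico_eq_sub f (by omega : 3 ≤ N + 1)]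
    rfl
  constructor
  · rintro ⟨l, hl⟩
    refine ⟨l + ∑ i ∈ Finset.range 3, f i, ?_⟩
    rw [← tendsto_add_atTop_iff_nat 1]
    refine (hl.add_const _).congr' ?_
    filter_upwards [eventually_ge_atTop 3] with N hN
    rw [key N hN]; ring
  · rintro ⟨l, hl⟩
    refine ⟨l - ∑ i ∈ Finset.range 3, f i, ?_⟩
    rw [← tendsto_add_atTop_iff_nat 1] at hl
    refine (hl.sub_const _).congr' ?_
    filter_upwards [eventually_ge_atTop 3] with N hN
    rw [key N hN]

lemma summable_of_ev_nonneg (f : ℕ → ℝ) (hf : ∀ᶠ i in atTop, 0 ≤ f i)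
    (h : ∃ l : ℝ, Tendsto (fun N : ℕ => ∑ i ∈ Finset.range N, f i) atTop (nhds l)) :
    Summable f := by
  obtain ⟨l, hl⟩ := h
  obtain ⟨M, hM⟩ := eventually_atTop.1 hf
  rw [← summable_nat_add_iff M]
  refine ⟨l - ∑ i ∈ Finset.range M, f i, ?_⟩
  rw [hasSum_iff_tendsto_nat_of_nonneg (fun i => hM _ (by omega))]
  rw [← tendsto_add_atTop_iff_nat M] at hl
  refine (hl.sub_const _).congr ?_
  intro N
  rw [add_comm N M, Finset.sum_range_add]
  simp [add_comm]

lemma log_div_tendsto : Tendsto (fun x : ℝ => Real.log x / x) atTop (nhds 0) :=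
  Real.isLittleO_log_id_atTop.tendsto_div_nhds_zero

lemma conv_aux (c : ℕ → ℝ) (p C : ℝ) (hp : 1 < p) (h1 : ∀ i, p ≤ c i) (h2 : ∀ i, c i ≤ C) :
    Summable (fun i : ℕ => (1 - (Real.log i / i) * c i) ^ i) := by
  have hx : Tendsto (fun i : ℕ => Real.log i / i * C) atTop (nhds 0) := by
    simpa using (log_div_tendsto.comp tendsto_natCast_atTop_atTop).mul_const C
  refine Summable.of_norm_bounded_eventually_nat (Real.summable_nat_rpow_inv.2 hp) ?_
  filter_upwards [hx.eventually (gt_mem_nhds one_pos), eventually_ge_atTop 1] with i hi h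
  have hipos : (0:ℝ) < i := by exact_mod_cast h
  have hl : 0 ≤ Real.log i := Real.log_natCast_nonneg i
  have hx0 : 0 ≤ Real.log i / i := by positivity
  have hA := mul_le_mul_of_nonneg_left (h1 i) hx0
  have hB := mul_le_mul_of_nonneg_left (h2 i) hx0
  have h0 : 0 ≤ 1 - (Real.log i / i) * c i := by linarith
  rw [Real.norm_of_nonneg (pow_nonneg h0 _)]
  have h3 : 1 - (Real.log i / i) * c i ≤ Real.exp (-(Real.log i / i * p)) := by
    have := Real.add_one_le_exp (-(Real.log i / i * p))
    linarith
  calc _ ≤ (Real.exp (-(Real.log i / i * p))) ^ i := pow_le_pow_left₀ h0 h3 _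
    _ = _ := by
      rw [← Real.exp_nat_mul, Real.rpow_def_of_pos hipos, ← Real.exp_neg]
      congr 1
      field_simp

lemma div_aux (c : ℕ → ℝ) (q : ℝ) (hq : q < 1) (h1 : ∀ᶠ i in atTop, c i ≤ q) :
    ∀ᶠ i : ℕ in atTop, 1 / (i : ℝ) ≤ (1 - (Real.log i / i) * c i) ^ i := by
  have hx : Tendsto (fun i : ℕ => q * (Real.log i / i)) atTop (nhds 0) := by
    simpa using (log_div_tendsto.comp tendsto_natCast_atTop_atTop).const_mul q
  filter_upwards [hx.eventually (gt_mem_nhds (sub_pos.2 hq)), eventually_ge_atTop 1, h1]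
    with i hi h hc
  have hipos : (0:ℝ) < i := by exact_mod_cast h
  have hl : 0 ≤ Real.log i := Real.log_natCast_nonneg i
  have hx0 : 0 ≤ Real.log i / i := by positivity
  have hB := mul_le_mul_of_nonneg_left hc hx0
  have h3 : Real.exp (-(Real.log i / i)) ≤ 1 - (Real.log i / i) * c i := by
    refine le_trans ?_ (sub_le_sub_left hB 1)
    rw [Real.exp_neg]
    have := Real.add_one_le_exp (Real.log i / i)
    refine (inv_anti₀ (by linarith) this).trans ?_
    rw [inv_le_iff_one_le_mul₀ (by linarith)]
    nlinarith
  calc 1 / (i : ℝ) = (Real.exp (-(Real.log i / i))) ^ i := by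
        rw [← Real.exp_nat_mul, mul_neg, mul_div_cancel₀ _ hipos.ne', Real.exp_neg,
          Real.exp_log hipos, one_div]
    _ ≤ _ := pow_le_pow_left₀ (Real.exp_pos _).le h3 _

/-- for `a > 0`, `b > 0`, the series
`S^{a,b} = ∑_{i=3}^∞ (1 - (log i / i)(a(1 + sin²(√(log log i / log i))) + b sin(iπ/4)))^i`
converges if `a - b > 1` and diverges if `a + b < 1`. -/
theorem example5_series_convergence (a b : ℝ) (ha : 0 < a) (hb : 0 < b) :
    (1 < a - b → ∃ l : ℝ,
      Tendsto (fun N : ℕ => ∑ i ∈ Finset.Icc 3 N,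
        (1 - (Real.log i / i) *
          (a * (1 + (Real.sin (Real.sqrt (Real.log (Real.log i) / Real.log i))) ^ 2) +
            b * Real.sin (i * Real.pi / 4))) ^ i) atTop (nhds l)) ∧
    (a + b < 1 → ¬ ∃ l : ℝ,
      Tendsto (fun N : ℕ => ∑ i ∈ Finset.Icc 3 N,
        (1 - (Real.log i / i) *
          (a * (1 + (Real.sin (Real.sqrt (Real.log (Real.log i) / Real.log i))) ^ 2) +
            b * Real.sin (i * Real.pi / 4))) ^ i) atTop (nhds l)) := by
  constructor
  · intro h
    rw [icc_tendsto_iff]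
    refine ⟨_, (conv_aux _ (a - b) (2 * a + b) h ?_ ?_).hasSum.tendsto_sum_nat⟩
    · intro i
      have := Real.neg_one_le_sin (i * Real.pi / 4)
      have := sq_nonneg (Real.sin (Real.sqrt (Real.log (Real.log i) / Real.log i)))
      nlinarith
    · intro i
      have := Real.sin_le_one (i * Real.pi / 4)
      have := Real.sin_sq_le_one (Real.sqrt (Real.log (Real.log i) / Real.log i))
      nlinarith
  · intro h hl
    rw [icc_tendsto_iff] at hl
    have ht : Tendsto (fun i : ℕ => a * (1 + (Real.sin (Real.sqrt
        (Real.log (Real.log i) / Real.log i))) ^ 2) + b) atTop (nhds (a + b)) := by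
      have h1 : Tendsto (fun i : ℕ => Real.log (Real.log i) / Real.log i) atTop (nhds 0) :=
        log_div_tendsto.comp (Real.tendsto_log_atTop.comp tendsto_natCast_atTop_atTop)
      have h2 : Continuous (fun t : ℝ => a * (1 + (Real.sin (Real.sqrt t)) ^ 2) + b) := by
        fun_prop
      simpa [Function.comp_def] using (h2.tendsto 0).comp h1
    obtain ⟨q, hq1, hq2⟩ := exists_between h
    have hev := div_aux (fun i : ℕ => a * (1 + (Real.sin (Real.sqrt
        (Real.log (Real.log i) / Real.log i))) ^ 2) + b * Real.sin (i * Real.pi / 4)) q hq2 (by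
      filter_upwards [ht.eventually (gt_mem_nhds hq1)] with i hi
      have := Real.sin_le_one (i * Real.pi / 4)
      nlinarith)
    have hs := summable_of_ev_nonneg _ (hev.mono fun i hi => le_trans (by positivity) hi) hl
    refine Real.not_summable_one_div_natCast
      (Summable.of_norm_bounded_eventually_nat hs ?_)
    filter_upwards [hev] with i hi
    rw [Real.norm_of_nonneg (by positivity)]
    exact hi
end
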